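/- Every inner Eulerian grapht (of arbitrary cardinality) that satisfies the linkability condition admits a perfect linkage. -/

import Mathlib

/-! Common definitions: graphts (multigraphs with terminals), walks, paths, cycles,
edge cuts, inner Eulerian graphts, path systems, linkages, Erdős–Menger cuts,
restriction (edge deletion) and contraction. -/

universe u v

/-- A *grapht*: a multigraph (no loops, parallel edges allowed) given by an incidence
function `I : E → Sym2 V`, together with a set `T` of at least two terminal vertices. -/
structure Grapht (V : Type u) (E : Type v) where
  I : E → Sym2 V
  loopless : ∀ e : E, ¬ (I e).IsDiag
  T : Set V
  T_nontrivial : T.Nontrivial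

namespace Grapht

variable {V : Type u} {E : Type v}

/-- `G.IsWalk vs es` holds when `vs` is the vertex sequence and `es` the edge sequence
of a walk in `G`. -/
inductive IsWalk (G : Grapht V E) : List V → List E → Prop
  | nil (v : V) : IsWalk G [v] []
  | cons {u w : V} {vs : List V} {e : E} {es : List E} :
      G.I e = s(u, w) → IsWalk G (w :: vs) es → IsWalk G (u :: w :: vs) (e :: es)

/-- A finite path in the grapht `G` (no repeated vertices), with endpoints `first`, `last`. -/
structure Path (G : Grapht V E) where
  first : V
  last : V
  verts : List V
  edges : List E
  isWalk : G.IsWalk verts edges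
  nodup : verts.Nodup
  head_eq : verts.head? = some first
  getLast_eq : verts.getLast? = some last

/-- A finite cycle in the grapht `G`. -/
structure Cycle (G : Grapht V E) where
  verts : List V
  edges : List E
  isWalk : G.IsWalk verts edges
  closed : verts.head? = verts.getLast?
  nontrivial : edges ≠ []
  edges_nodup : edges.Nodup
  tail_nodup : verts.tail.Nodup

variable {G : Grapht V E}

/-- The internal (inner) vertices of a path. -/
def Path.inner (P : G.Path) : List V := (P.verts.drop 1).dropLast

/-- The edge set of a path. -/
def Path.edgeSet (P : G.Path) : Set E := {e | e ∈ P.edges}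

/-- The edge set of a cycle. -/
def Cycle.edgeSet (C : G.Cycle) : Set E := {e | e ∈ C.edges}

variable (G)

/-- `δ_G(X)`: the set of edges with exactly one endpoint in `X`. -/
def edgeCut (X : Set V) : Set E :=
  {e | ∃ u w, G.I e = s(u, w) ∧ u ∈ X ∧ w ∉ X}

/-- A grapht is *inner Eulerian* if there is no `X ⊆ V ∖ T` whose cut `δ(X)` is a
finite set of odd size. -/
def InnerEulerian : Prop :=
  ∀ X : Set V, Disjoint X G.T → ¬ ((G.edgeCut X).Finite ∧ Odd (G.edgeCut X).ncard)

/-- An `AB`-path: a path with first vertex in `A`, last vertex in `B` and no internal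
vertex in `A ∪ B`. -/
def IsABPath (A B : Set V) (P : G.Path) : Prop :=
  P.first ∈ A ∧ P.last ∈ B ∧ ∀ v ∈ P.inner, v ∉ A ∪ B

/-- A `T`-path: a path between two distinct terminal vertices without internal
terminal vertices. -/
def IsTPath (P : G.Path) : Prop :=
  P.first ∈ G.T ∧ P.last ∈ G.T ∧ P.first ≠ P.last ∧ ∀ v ∈ P.inner, v ∉ G.T

/-- A system of pairwise edge-disjoint paths. -/
def EdgeDisjoint (Ps : Set G.Path) : Prop :=
  Ps.Pairwise fun P Q => ∀ e, e ∈ P.edges → e ∉ Q.edges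

/-- A system of pairwise edge-disjoint `T`-paths. -/
def IsTPathSystem (Ps : Set G.Path) : Prop :=
  G.EdgeDisjoint Ps ∧ ∀ P ∈ Ps, G.IsTPath P

/-- The set of edges used by a path system. -/
def sysEdges (Ps : Set G.Path) : Set E := ⋃ P ∈ Ps, P.edgeSet

/-- `C` is *orthogonal* to the path system `Ps`: `C` consists of exactly one edge from
each path of `Ps`. -/
def Orthogonal (C : Set E) (Ps : Set G.Path) : Prop :=
  (∀ P ∈ Ps, ∃! e, e ∈ C ∧ e ∈ P.edges) ∧ ∀ e ∈ C, ∃ P ∈ Ps, e ∈ P.edges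

/-- `C` separates `A` and `B`: every `AB`-path meets `C` (i.e. `G − C` has no `AB`-path). -/
def Separates (C : Set E) (A B : Set V) : Prop :=
  ∀ P : G.Path, G.IsABPath A B P → ∃ e ∈ C, e ∈ P.edges

/-- An `AB`-cut. -/
def IsABCut (A B : Set V) (C : Set E) : Prop :=
  ∀ P : G.Path, G.IsABPath A B P → ∃ e ∈ C, e ∈ P.edges

/-- An Erdős–Menger `AB`-cut: an `AB`-cut orthogonal to some system of pairwise
edge-disjoint `AB`-paths. -/
def IsEMABCut (A B : Set V) (C : Set E) : Prop :=
  G.IsABCut A B C ∧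
    ∃ Ps : Set G.Path, G.EdgeDisjoint Ps ∧ (∀ P ∈ Ps, G.IsABPath A B P) ∧ G.Orthogonal C Ps

/-- The order `⊴` on (Erdős–Menger) `AB`-cuts: on every `AB`-path the first edge of `C`
comes no later than the first edge of `C'`. -/
def ABCutLE (A B : Set V) (C C' : Set E) : Prop :=
  ∀ P : G.Path, G.IsABPath A B P →
    ∀ i : Fin P.edges.length, P.edges.get i ∈ C' →
      ∃ j : Fin P.edges.length, (j : ℕ) ≤ (i : ℕ) ∧ P.edges.get j ∈ C

/-- `C` is the `⊴`-largest Erdős–Menger `AB`-cut. -/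
def IsLargestEMABCut (A B : Set V) (C : Set E) : Prop :=
  G.IsEMABCut A B C ∧ ∀ C', G.IsEMABCut A B C' → G.ABCutLE A B C' C

/-- A system `Ps` of pairwise edge-disjoint `T`-paths *links* the terminal `t`:
it covers `δ(t)`. -/
def Links (Ps : Set G.Path) (t : V) : Prop :=
  G.IsTPathSystem Ps ∧ ∀ e ∈ G.edgeCut {t}, ∃ P ∈ Ps, e ∈ P.edges

/-- The terminal `t` is linked. -/
def Linked (t : V) : Prop := ∃ Ps : Set G.Path, G.Links Ps t

/-- The linkability condition: every terminal is linked. -/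
def LinkabilityCondition : Prop := ∀ t ∈ G.T, G.Linked t

/-- A perfect linkage: a system of pairwise edge-disjoint `T`-paths linking every
terminal. -/
def IsPerfectLinkage (Ps : Set G.Path) : Prop :=
  G.IsTPathSystem Ps ∧ ∀ t ∈ G.T, ∀ e ∈ G.edgeCut {t}, ∃ P ∈ Ps, e ∈ P.edges

/-- In the two-terminal setting: a system of pairwise edge-disjoint `st`-paths
covering `δ(s)` (a linkage of `s`). -/
def IsStLinkage (s t : V) (Ps : Set G.Path) : Prop :=
  G.EdgeDisjoint Ps ∧ (∀ P ∈ Ps, G.IsABPath {s} {t} P) ∧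
    ∀ e ∈ G.edgeCut {s}, ∃ P ∈ Ps, e ∈ P.edges

/-- `s` is linked (two-terminal setting). -/
def StLinked (s t : V) : Prop := ∃ Ps : Set G.Path, G.IsStLinkage s t Ps

/-- `λ_G(A,B)`: the maximal number of pairwise edge-disjoint `AB`-paths. -/
noncomputable def lambda (A B : Set V) : ℕ :=
  sSup {n : ℕ | ∃ Ps : Set G.Path, G.EdgeDisjoint Ps ∧ (∀ P ∈ Ps, G.IsABPath A B P) ∧
    Ps.Finite ∧ Ps.ncard = n}

/-- The grapht obtained by deleting all edges outside `F`. -/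
def restrict (F : Set E) : Grapht V F where
  I e := G.I e.1
  loopless e := G.loopless e.1
  T := G.T
  T_nontrivial := G.T_nontrivial

/-- The map sending every vertex of a contracted set `X t` (`t ∈ T`) to `t`. -/
noncomputable def contractMap (X : V → Set V) : V → V := fun v =>
  letI := Classical.dec (∃ u ∈ G.T, v ∈ X u)
  if h : ∃ u ∈ G.T, v ∈ X u then h.choose else v

/-- The contraction `G/ℱ` of the family `ℱ = {X t : t ∈ T}`: each `X t` is contracted
to `t` and the arising loops are deleted. -/
noncomputable def contract (X : V → Set V) :
    Grapht V {e : E // ¬ ((G.I e).map (G.contractMap X)).IsDiag} where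
  I e := (G.I e.1).map (G.contractMap X)
  loopless e := e.2
  T := G.T
  T_nontrivial := G.T_nontrivial

end Grapht

/-! Let `H` be the edge set, and link by edge-disjoint trails; loops are erased only at the end.

If `H` is countable, a perfect linkage is built by enumerating the edges at terminals, once every
edge `e` at a terminal `t` is known to start a trail to another terminal whose deletion keeps all
terminals linked. To find that trail, split off the first two edges of a trail of a linkage of `t`,
which shortens it, and induct. If the splitting destroys the linkability of another terminal, then a
failed search for augmenting trails provides a tight set around that terminal. The initial segments
of the linkage trails in that set, reversed, form a shelter, which lets all other terminals bypass a
trail that runs through the set up to its last edge `e`, so that it can be deleted. Parity enters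
because a family of trails that misses the terminals with a single trail can be completed in an
inner Eulerian graph.

If `H` is uncountable, exhaust it by a well-ordered increasing family of sets `C b` of smaller
cardinality, closed under operations with countable values. Closed sets may be deleted: trails that
are hit are rerouted to terminals one after the other, and where this gets stuck there is a shelter
avoiding few edges, for which closedness substitutes a shelter that survives the deletion. Hence the
pieces `(H \ ⋃ a < b, C a) ∩ C b` satisfy the hypotheses again, and the perfect linkages they have
by induction on the cardinality unite to one of `H`. -/

namespace Linkage

section Walks

variable {V : Type u} {E : Type v} {I : E → Sym2 V}

/-- `EdgeWalk I a l b`: the edge list `l` is traversed by a walk from `a` to `b`. The incidence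
function stays a variable because splitting off changes it. -/
inductive EdgeWalk (I : E → Sym2 V) : V → List E → V → Prop
  | nil (a : V) : EdgeWalk I a [] a
  | cons {a b c : V} {e : E} {l : List E} :
      I e = s(a, b) → EdgeWalk I b l c → EdgeWalk I a (e :: l) c

/-- The edge cut of a vertex set. -/
def cut (I : E → Sym2 V) (X : Set V) : Set E :=
  {e | ∃ u w, I e = s(u, w) ∧ u ∈ X ∧ w ∉ X}

/-- The edges with both ends in a vertex set. -/
def inside (I : E → Sym2 V) (X : Set V) : Set E := {e | ∀ x ∈ I e, x ∈ X}

/-- Every vertex strictly before the end of the walk `l` from `a` lies outside `B`. -/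
def AvoidsBeforeEnd (I : E → Sym2 V) (B : Set V) (a : V) (l : List E) : Prop :=
  ∀ ⦃m e m' d⦄, l = m ++ e :: m' → EdgeWalk I a m d → d ∉ B

/-- The edge set `H` is inner Eulerian: it meets no cut avoiding `T` in an odd finite number
of edges. -/
def InnerEulerianOn (I : E → Sym2 V) (T : Set V) (H : Set E) : Prop :=
  ∀ X : Set V, Disjoint X T → ¬ ((cut I X ∩ H).Finite ∧ Odd (cut I X ∩ H).ncard)

@[simp]
theorem edgeWalk_nil {a b : V} : EdgeWalk I a [] b ↔ a = b :=
  ⟨fun h ↦ by cases h; rfl, by rintro rfl; exact .nil _⟩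

theorem edgeWalk_cons {a c : V} {e : E} {l : List E} :
    EdgeWalk I a (e :: l) c ↔ ∃ b, I e = s(a, b) ∧ EdgeWalk I b l c :=
  ⟨fun h ↦ by cases h with | cons he hl => exact ⟨_, he, hl⟩, fun ⟨_, he, hl⟩ ↦ .cons he hl⟩

theorem edgeWalk_append {a c : V} {l m : List E} :
    EdgeWalk I a (l ++ m) c ↔ ∃ b, EdgeWalk I a l b ∧ EdgeWalk I b m c := by
  induction l generalizing a with
  | nil => simp
  | cons e l ih =>
    simp only [List.cons_append, edgeWalk_cons, ih]
    tauto

namespace EdgeWalk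

theorem append {a b c : V} {l m : List E} (hl : EdgeWalk I a l b) (hm : EdgeWalk I b m c) :
    EdgeWalk I a (l ++ m) c :=
  edgeWalk_append.2 ⟨b, hl, hm⟩

theorem single {a b : V} {e : E} (h : I e = s(a, b)) : EdgeWalk I a [e] b :=
  .cons h (.nil _)

theorem of_cons {a b c : V} {e : E} {l : List E} (h : EdgeWalk I a (e :: l) c)
    (he : I e = s(a, b)) : EdgeWalk I b l c := by
  obtain ⟨d, hd, hl⟩ := edgeWalk_cons.1 h
  rwa [Sym2.congr_right.1 (he.symm.trans hd)]

theorem of_append {a b c : V} {l m : List E} (h : EdgeWalk I a (l ++ m) c)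
    (hl : EdgeWalk I a l b) : EdgeWalk I b m c := by
  induction hl with
  | nil a => exact h
  | cons he _ ih => exact ih (h.of_cons he)

theorem unique {a b c : V} {l : List E} (hb : EdgeWalk I a l b) (hc : EdgeWalk I a l c) :
    b = c :=
  edgeWalk_nil.1 (of_append (by rwa [List.append_nil]) hb)

theorem reverse {a b : V} {l : List E} (h : EdgeWalk I a l b) : EdgeWalk I b l.reverse a := by
  induction h with
  | nil a => exact .nil _
  | cons he _ ih =>
    rw [List.reverse_cons]
    exact ih.append (single (by rw [he, Sym2.eq_swap]))

theorem congr {J : E → Sym2 V} {a b : V} {l : List E} (h : EdgeWalk I a l b)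
    (hIJ : ∀ e ∈ l, I e = J e) : EdgeWalk J a l b := by
  induction h with
  | nil a => exact .nil _
  | cons he _ ih =>
    exact .cons ((hIJ _ List.mem_cons_self).symm.trans he)
      (ih fun e hel ↦ hIJ e (List.mem_cons_of_mem _ hel))

end EdgeWalk

theorem avoidsBeforeEnd_nil {B : Set V} {a : V} : AvoidsBeforeEnd I B a [] := by
  intro m e m' d h
  simp at h

theorem avoidsBeforeEnd_cons {B : Set V} {a b : V} {e : E} {l : List E} (he : I e = s(a, b)) :
    AvoidsBeforeEnd I B a (e :: l) ↔ a ∉ B ∧ AvoidsBeforeEnd I B b l := by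
  refine ⟨fun h ↦ ⟨h (m := []) rfl (.nil a), fun m f m' d hl hm ↦ ?_⟩, ?_⟩
  · exact h (m := e :: m) (by rw [hl]; rfl) (.cons he hm)
  · rintro ⟨ha, h⟩ m f m' d hl hm
    cases m with
    | nil => rwa [← edgeWalk_nil.1 hm]
    | cons g m =>
      obtain ⟨rfl, hl'⟩ := List.cons.inj hl
      exact h hl' (hm.of_cons he)

theorem EdgeWalk.exists_first_hit {B : Set V} {a b : V} {l : List E} (h : EdgeWalk I a l b)
    (hb : b ∈ B) : ∃ l₁ l₂ c, l = l₁ ++ l₂ ∧ EdgeWalk I a l₁ c ∧ EdgeWalk I c l₂ b ∧ c ∈ B ∧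
      AvoidsBeforeEnd I B a l₁ := by
  induction h with
  | nil a => exact ⟨[], [], a, rfl, .nil _, .nil _, hb, avoidsBeforeEnd_nil⟩
  | @cons a b c e l he hl ih =>
    by_cases ha : a ∈ B
    · exact ⟨[], e :: l, a, rfl, .nil _, .cons he hl, ha, avoidsBeforeEnd_nil⟩
    · obtain ⟨l₁, l₂, d, rfl, hl₁, hl₂, hd, hclean⟩ := ih hb
      exact ⟨e :: l₁, l₂, d, rfl, .cons he hl₁, hl₂, hd, (avoidsBeforeEnd_cons he).2 ⟨ha, hclean⟩⟩

theorem EdgeWalk.exists_crossing {X : Set V} {a b : V} {l : List E} (h : EdgeWalk I a l b)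
    (ha : a ∈ X) (hb : b ∉ X) : ∃ l₁ e l₂ u w, l = l₁ ++ e :: l₂ ∧ EdgeWalk I a l₁ u ∧
      I e = s(u, w) ∧ EdgeWalk I w l₂ b ∧ u ∈ X ∧ w ∉ X := by
  induction h with
  | nil a => exact absurd ha hb
  | @cons a b c e l he hl ih =>
    by_cases hbX : b ∈ X
    · obtain ⟨l₁, f, l₂, u, w, rfl, hl₁, hf, hl₂, hu, hw⟩ := ih hbX hb
      exact ⟨e :: l₁, f, l₂, u, w, rfl, .cons he hl₁, hf, hl₂, hu, hw⟩
    · exact ⟨[], e, l, a, b, rfl, .nil _, he, hl, ha, hbX⟩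

theorem EdgeWalk.exists_nodup {a b : V} {l : List E} (h : EdgeWalk I a l b) :
    ∃ l', l'.Nodup ∧ l' ⊆ l ∧ EdgeWalk I a l' b := by
  induction h with
  | nil a => exact ⟨[], List.nodup_nil, List.Subset.refl _, .nil _⟩
  | @cons a b c e l he _ ih =>
    obtain ⟨l', hnd, hsub, hl'⟩ := ih
    by_cases hel : e ∈ l'
    · obtain ⟨m₁, m₂, rfl⟩ := List.append_of_mem hel
      have hsub₂ : e :: m₂ ⊆ e :: l := fun f hf ↦
        List.mem_cons_of_mem _ (hsub (List.mem_append_right _ hf))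
      have hnd₂ : (e :: m₂).Nodup := hnd.of_append_right
      obtain ⟨x, -, hx⟩ := edgeWalk_append.1 hl'
      obtain ⟨y, hy, hm₂⟩ := edgeWalk_cons.1 hx
      rcases Sym2.eq_iff.1 (he.symm.trans hy) with ⟨rfl, rfl⟩ | ⟨rfl, rfl⟩
      · exact ⟨e :: m₂, hnd₂, hsub₂, hx⟩
      · exact ⟨m₂, hnd₂.of_cons, fun f hf ↦ hsub₂ (List.mem_cons_of_mem _ hf), hm₂⟩
    · exact ⟨e :: l', List.nodup_cons.2 ⟨hel, hnd⟩, List.cons_subset_cons _ hsub, .cons he hl'⟩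

theorem mem_cut {X : Set V} {e : E} {a b : V} (h : I e = s(a, b)) :
    e ∈ cut I X ↔ ¬ (a ∈ X ↔ b ∈ X) := by
  constructor
  · rintro ⟨u, w, huw, hu, hw⟩
    rcases Sym2.eq_iff.1 (h.symm.trans huw) with ⟨rfl, rfl⟩ | ⟨rfl, rfl⟩ <;> tauto
  · intro hn
    by_cases ha : a ∈ X
    · exact ⟨a, b, h, ha, by tauto⟩
    · exact ⟨b, a, by rw [h, Sym2.eq_swap], by tauto, ha⟩

theorem mem_inside {X : Set V} {e : E} {a b : V} (h : I e = s(a, b)) :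
    e ∈ inside I X ↔ a ∈ X ∧ b ∈ X := by
  simp [inside, h]

open Classical in
theorem EdgeWalk.even_length_filter_cut {X : Set V} {a b : V} {l : List E}
    (h : EdgeWalk I a l b) : Even (l.filter (· ∈ cut I X)).length ↔ (a ∈ X ↔ b ∈ X) := by
  induction h with
  | nil a => simp
  | @cons a b c e l he _ ih =>
    have hcut := mem_cut (X := X) he
    by_cases heX : e ∈ cut I X
    · rw [List.filter_cons_of_pos (by simpa using heX), List.length_cons, Nat.even_add_one, ih]
      tauto
    · rw [List.filter_cons_of_neg (by simpa using heX), ih]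
      tauto

theorem EdgeWalk.even_ncard_cut {X : Set V} {a b : V} {l : List E} (h : EdgeWalk I a l b)
    (hnd : l.Nodup) : Even (cut I X ∩ {e | e ∈ l}).ncard ↔ (a ∈ X ↔ b ∈ X) := by
  classical
  have hset : cut I X ∩ {e | e ∈ l} = (l.filter (· ∈ cut I X)).toFinset := by
    ext e
    simp [and_comm]
  rw [hset, Set.ncard_coe_finset, List.toFinset_card_of_nodup (hnd.filter _),
    h.even_length_filter_cut]

theorem finite_and_odd_ncard_union {C D : Set E} (hdisj : Disjoint C D) (hD : D.Finite) :
    (C ∪ D).Finite ∧ Odd (C ∪ D).ncard ↔ C.Finite ∧ (Odd C.ncard ↔ Even D.ncard) := by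
  rw [Set.finite_union, and_iff_left hD]
  exact and_congr_right fun hC ↦ by rw [Set.ncard_union_eq hdisj hC hD, Nat.odd_add]

theorem cut_inter_congr {J : E → Sym2 V} {X : Set V} {H : Set E} (h : ∀ e ∈ H, I e = J e) :
    cut I X ∩ H = cut J X ∩ H := by
  ext e
  exact and_congr_left fun he ↦ by simp only [cut, Set.mem_ofPred_eq, h e he]

namespace InnerEulerianOn

variable {T : Set V} {H : Set E}

theorem congr {J : E → Sym2 V} (h : InnerEulerianOn I T H) (hIJ : ∀ e ∈ H, I e = J e) :
    InnerEulerianOn J T H :=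
  fun X hX ↦ cut_inter_congr (X := X) hIJ ▸ h X hX

theorem exchange {H' D D' : Set E} {J : E → Sym2 V} (h : InnerEulerianOn I T H) (hD : D.Finite)
    (hD' : D'.Finite) (hDH : D ⊆ H) (hDH' : D' ⊆ H') (hdiff : H \ D = H' \ D')
    (hIJ : ∀ e ∈ H \ D, I e = J e)
    (heven : ∀ X, Disjoint X T → (Even (cut I X ∩ D).ncard ↔ Even (cut J X ∩ D').ncard)) :
    InnerEulerianOn J T H' := by
  have hsplit (K : E → Sym2 V) (X : Set V) {A B : Set E} (hBA : B ⊆ A) (hB : B.Finite) :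
      (cut K X ∩ A).Finite ∧ Odd (cut K X ∩ A).ncard ↔
        (cut K X ∩ (A \ B)).Finite ∧
          (Odd (cut K X ∩ (A \ B)).ncard ↔ Even (cut K X ∩ B).ncard) := by
    rw [← finite_and_odd_ncard_union (Set.disjoint_sdiff_left.mono Set.inter_subset_right
      Set.inter_subset_right) (hB.inter_of_right _), ← Set.inter_union_distrib_left,
      Set.sdiff_union_of_subset hBA]
  intro X hX
  rw [hsplit J X hDH' hD', ← hdiff, ← cut_inter_congr hIJ, ← heven X hX, ← hsplit I X hDH hD]
  exact h X hX

theorem diff_trail (h : InnerEulerianOn I T H) {a b : V} {l : List E} (hl : EdgeWalk I a l b)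
    (hnd : l.Nodup) (hlH : ∀ e ∈ l, e ∈ H) (ha : a ∈ T) (hb : b ∈ T) :
    InnerEulerianOn I T (H \ {e | e ∈ l}) := by
  refine h.exchange (D' := ∅) l.finite_toSet Set.finite_empty hlH (Set.empty_subset _)
    Set.sdiff_empty.symm (fun _ _ ↦ rfl) fun X hX ↦ ?_
  have haX : a ∉ X := hX.notMem_of_mem_right ha
  have hbX : b ∉ X := hX.notMem_of_mem_right hb
  simp [hl.even_ncard_cut hnd, haX, hbX]

end InnerEulerianOn

end Walks

section AugmentingTrails

variable {V : Type u} {E : Type v} {I : E → Sym2 V} {H : Set E} {t : V} {w w' : E → List E}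
  {en en' : E → V} {B X : Set V}

/-- `UsesDart I a l c f d`: the walk `l` from `a` traverses the edge `f` from `c` to `d`. -/
def UsesDart (I : E → Sym2 V) (a : V) (l : List E) (c : V) (f : E) (d : V) : Prop :=
  ∃ l₁ l₂, l = l₁ ++ f :: l₂ ∧ EdgeWalk I a l₁ c ∧ I f = s(c, d)

theorem not_usesDart_nil {a c d : V} {f : E} : ¬ UsesDart I a [] c f d := by
  rintro ⟨l₁, l₂, h, -⟩
  simp at h

theorem usesDart_cons {a b c d : V} {e f : E} {l : List E} (he : I e = s(a, b)) :
    UsesDart I a (e :: l) c f d ↔ (f = e ∧ c = a ∧ d = b) ∨ UsesDart I b l c f d := by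
  constructor
  · rintro ⟨_ | ⟨g, l₁⟩, l₂, hl, hl₁, hf⟩
    · obtain ⟨rfl, rfl⟩ := List.cons.inj hl
      obtain rfl := edgeWalk_nil.1 hl₁
      exact .inl ⟨rfl, rfl, Sym2.congr_right.1 (hf.symm.trans he)⟩
    · obtain ⟨rfl, hl'⟩ := List.cons.inj hl
      exact .inr ⟨l₁, l₂, hl', hl₁.of_cons he, hf⟩
  · rintro (⟨rfl, rfl, rfl⟩ | ⟨l₁, l₂, rfl, hl₁, hf⟩)
    · exact ⟨[], l, rfl, .nil _, he⟩
    · exact ⟨e :: l₁, l₂, rfl, .cons he hl₁, hf⟩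

theorem usesDart_append {a b c d : V} {f : E} {l m : List E} (hl : EdgeWalk I a l b) :
    UsesDart I a (l ++ m) c f d ↔ UsesDart I a l c f d ∨ UsesDart I b m c f d := by
  induction hl with
  | nil a => simp [not_usesDart_nil]
  | cons he _ ih => rw [List.cons_append, usesDart_cons he, usesDart_cons he, ih, or_assoc]

theorem UsesDart.source_unique {a c c' d d' : V} {f : E} {l : List E} (hnd : l.Nodup)
    (h : UsesDart I a l c f d) (h' : UsesDart I a l c' f d') : c = c' := by
  obtain ⟨l₁, l₂, rfl, hl₁, -⟩ := h
  obtain ⟨m₁, m₂, hm, hm₁, -⟩ := h'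
  have hfl : f ∉ l₁ ∧ f ∉ l₂ := by simpa [not_or] using (List.nodup_middle.1 hnd).notMem
  obtain ⟨rfl, -⟩ := (List.append_cons_inj_of_notMem hfl.1 hfl.2).1 hm
  exact hl₁.unique hm₁

/-- The duplicate-free lists `w s`, for `s ∈ S`, of edges of `H` are pairwise disjoint. -/
structure EdgeDisjointOn (H S : Set E) (w : E → List E) : Prop where
  nodup : ∀ s ∈ S, (w s).Nodup
  subset : ∀ s ∈ S, ∀ e ∈ w s, e ∈ H
  eq_of_mem : ∀ s ∈ S, ∀ s' ∈ S, ∀ e, e ∈ w s → e ∈ w s' → s = s'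

theorem EdgeDisjointOn.of_sublist {S : Set E} (h : EdgeDisjointOn H S w)
    (hw : ∀ s ∈ S, (w' s).Sublist (w s)) : EdgeDisjointOn H S w' where
  nodup s hs := (h.nodup s hs).sublist (hw s hs)
  subset s hs e he := h.subset s hs e ((hw s hs).subset he)
  eq_of_mem s hs s' hs' e he he' :=
    h.eq_of_mem s hs s' hs' e ((hw s hs).subset he) ((hw s' hs').subset he')

theorem EdgeDisjointOn.mono {H' S S' : Set E} (h : EdgeDisjointOn H S w) (hH : H ⊆ H')
    (hS : S' ⊆ S) : EdgeDisjointOn H' S' w where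
  nodup s hs := h.nodup s (hS hs)
  subset s hs e he := hH (h.subset s (hS hs) e he)
  eq_of_mem s hs s' hs' := h.eq_of_mem s (hS hs) s' (hS hs')

open Classical in
theorem EdgeDisjointOn.update {S : Set E} {s : E} (h : EdgeDisjointOn H (S \ {s}) w) {l : List E}
    (hnd : l.Nodup) (hl : ∀ e ∈ l, e ∈ H) (hdisj : ∀ s' ∈ S, s' ≠ s → ∀ e ∈ l, e ∉ w s') :
    EdgeDisjointOn H S (Function.update w s l) where
  nodup r hr := by
    obtain rfl | hrs := eq_or_ne r s
    · rwa [Function.update_self]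
    · rw [Function.update_of_ne hrs]
      exact h.nodup r ⟨hr, hrs⟩
  subset r hr := by
    obtain rfl | hrs := eq_or_ne r s
    · rwa [Function.update_self]
    · rw [Function.update_of_ne hrs]
      exact h.subset r ⟨hr, hrs⟩
  eq_of_mem r hr r' hr' e he he' := by
    by_cases hrs : r = s <;> by_cases hrs' : r' = s
    · rw [hrs, hrs']
    · rw [hrs, Function.update_self] at he
      rw [Function.update_of_ne hrs'] at he'
      exact absurd he' (hdisj r' hr' hrs' e he)
    · rw [hrs', Function.update_self] at he'
      rw [Function.update_of_ne hrs] at he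
      exact absurd he (hdisj r hr hrs e he')
    · rw [Function.update_of_ne hrs] at he
      rw [Function.update_of_ne hrs'] at he'
      exact h.eq_of_mem r ⟨hr, hrs⟩ r' ⟨hr', hrs'⟩ e he he'

/-- The edges of `H` at the vertex `t`. -/
def star (I : E → Sym2 V) (H : Set E) (t : V) : Set E := cut I {t} ∩ H

/-- A family of edge-disjoint trails in `H` starting at `t`, one for each edge `s` at `t`: the
trail `w s` has first edge `s` and last vertex `en s`. Values outside `star I H t` are junk. -/
structure StarTrails (I : E → Sym2 V) (H : Set E) (t : V) (w : E → List E) (en : E → V) : Prop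
    extends EdgeDisjointOn H (star I H t) w where
  walk : ∀ s ∈ star I H t, EdgeWalk I t (w s) (en s)
  head : ∀ s ∈ star I H t, [s] <+: w s

theorem mem_star {s : E} : s ∈ star I H t ↔ s ∈ H ∧ ∃ y, y ≠ t ∧ I s = s(t, y) := by
  constructor
  · rintro ⟨⟨u, y, hs, rfl, hy⟩, hsH⟩
    exact ⟨hsH, y, hy, hs⟩
  · rintro ⟨hsH, y, hy, hs⟩
    exact ⟨⟨t, y, hs, rfl, hy⟩, hsH⟩

/-- Some trail of the family traverses the edge `f` from `c` to `d`. -/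
def Traverses (I : E → Sym2 V) (H : Set E) (t : V) (w : E → List E) (c : V) (f : E) (d : V) :
    Prop :=
  ∃ s ∈ star I H t, UsesDart I t (w s) c f d

/-- A step along an edge of `H` in a direction in which the family does not traverse it. Such
steps never enter `t`, so that the first edges of the trails are not undone. -/
def ResidualStep (I : E → Sym2 V) (H : Set E) (t : V) (w : E → List E) (x y : V) : Prop :=
  ∃ e ∈ H, I e = s(x, y) ∧ y ≠ t ∧ ¬ Traverses I H t w x e y

/-- The family `(w', en')` arises from `(w, en)` by moving the end of the trail `s₀` to `z`, up to
the permutation `π` of the edges at `t` and a change of finitely many trails. -/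
structure IsAugmentation (I : E → Sym2 V) (H : Set E) (t : V) (w : E → List E) (en : E → V)
    (s₀ : E) (z : V) (w' : E → List E) (en' : E → V) (π : Equiv.Perm E) : Prop where
  starTrails : StarTrails I H t w' en'
  apply_mem_star : ∀ s, π s ∈ star I H t ↔ s ∈ star I H t
  end_of_eq : ∀ s ∈ star I H t, π s = s₀ → en' s = z
  end_of_ne : ∀ s ∈ star I H t, π s ≠ s₀ → en' s = en (π s)
  finite_ne : {s | w' s ≠ w s}.Finite

namespace StarTrails

theorem mem_self (F : StarTrails I H t w en) {s : E} (hs : s ∈ star I H t) : s ∈ w s :=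
  (F.head s hs).subset List.mem_cons_self

theorem traverses_star (F : StarTrails I H t w en) {s : E} {y : V} (hs : s ∈ star I H t)
    (hy : I s = s(t, y)) : Traverses I H t w t s y := by
  obtain ⟨l, hl⟩ := F.head s hs
  exact ⟨s, hs, [], l, hl.symm, .nil _, hy⟩

theorem of_prefix (F : StarTrails I H t w en) (hw : ∀ s ∈ star I H t, w' s <+: w s)
    (hne : ∀ s ∈ star I H t, w' s ≠ [])
    (hwalk : ∀ s ∈ star I H t, EdgeWalk I t (w' s) (en' s)) : StarTrails I H t w' en' where
  toEdgeDisjointOn := F.of_sublist fun s hs ↦ (hw s hs).sublist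
  walk := hwalk
  head s hs := List.prefix_of_prefix_length_le (F.head s hs) (hw s hs)
    (List.length_pos_iff.2 (hne s hs))

theorem edgeWalk_suffix (F : StarTrails I H t w en) {s : E} (hs : s ∈ star I H t)
    {l₁ l₂ : List E} {a : V} (hl : w s = l₁ ++ l₂) (hl₁ : EdgeWalk I t l₁ a) :
    EdgeWalk I a l₂ (en s) :=
  .of_append (hl ▸ F.walk s hs) hl₁

open Classical in
theorem update (F : StarTrails I H t w en) {s : E} {l : List E} {b : V}
    (hl : EdgeWalk I t l b) (hhead : [s] <+: l) (hnd : l.Nodup) (hlH : ∀ e ∈ l, e ∈ H)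
    (hdisj : ∀ s' ∈ star I H t, s' ≠ s → ∀ e ∈ l, e ∉ w s') :
    StarTrails I H t (Function.update w s l) (Function.update en s b) where
  toEdgeDisjointOn := (F.toEdgeDisjointOn.mono subset_rfl Set.sdiff_subset).update hnd hlH hdisj
  walk r hr := by
    obtain rfl | hrs := eq_or_ne r s
    · simpa only [Function.update_self] using hl
    · simpa only [Function.update_of_ne hrs] using F.walk r hr
  head r hr := by
    obtain rfl | hrs := eq_or_ne r s
    · simpa only [Function.update_self] using hhead
    · simpa only [Function.update_of_ne hrs] using F.head r hr

theorem eq_of_traverses_swap (F : StarTrails I H t w en) {a b : V} {g : E}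
    (hab : Traverses I H t w a g b) (hba : Traverses I H t w b g a) : a = b := by
  obtain ⟨s, hs, h⟩ := hab
  obtain ⟨s', hs', h'⟩ := hba
  have hmem {s a b} (h : UsesDart I t (w s) a g b) : g ∈ w s := by
    obtain ⟨l₁, l₂, hl, -⟩ := h
    simp [hl]
  obtain rfl := F.eq_of_mem s hs s' hs' g (hmem h) (hmem h')
  exact h.source_unique (F.nodup s hs) h'

open Classical in
theorem append_edge (F : StarTrails I H t w en) {s₀ e : E} {y : V} (hs₀ : s₀ ∈ star I H t)
    (heH : e ∈ H) (he : I e = s(en s₀, y)) (hunused : ∀ s ∈ star I H t, e ∉ w s) :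
    StarTrails I H t (Function.update w s₀ (w s₀ ++ [e])) (Function.update en s₀ y) := by
  refine F.update ((F.walk s₀ hs₀).append (.single he))
    ((F.head s₀ hs₀).trans (List.prefix_append _ _)) ?_ ?_ ?_
  · exact List.nodup_append_comm.1 (List.nodup_cons.2 ⟨hunused s₀ hs₀, F.nodup s₀ hs₀⟩)
  · simpa [or_imp, forall_and, heH] using F.subset s₀ hs₀
  · intro s hs hne f hf hfs
    rcases List.mem_append.1 hf with hf | hf
    · exact hne (F.eq_of_mem s hs s₀ hs₀ f hfs hf)
    · exact hunused s hs (List.mem_singleton.1 hf ▸ hfs)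

open Classical in
theorem truncate (F : StarTrails I H t w en) {s : E} {a : V} {l₁ l₂ : List E}
    (hs : s ∈ star I H t) (hl : w s = l₁ ++ l₂) (hl₁ : EdgeWalk I t l₁ a) (ha : a ≠ t) :
    StarTrails I H t (Function.update w s l₁) (Function.update en s a) := by
  have hpre : l₁ <+: w s := ⟨l₂, hl.symm⟩
  have hne : l₁ ≠ [] := by
    rintro rfl
    exact ha (edgeWalk_nil.1 hl₁).symm
  refine F.of_prefix (fun r _ ↦ ?_) (fun r hr ↦ ?_) (fun r hr ↦ ?_) <;>
    obtain rfl | hrs := eq_or_ne r s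
  · rwa [Function.update_self]
  · rw [Function.update_of_ne hrs]
  · rwa [Function.update_self]
  · rw [Function.update_of_ne hrs]
    exact List.ne_nil_of_mem (F.mem_self hr)
  · rwa [Function.update_self, Function.update_self]
  · rw [Function.update_of_ne hrs, Function.update_of_ne hrs]
    exact F.walk r hr

open Classical in
theorem switch_tail (F : StarTrails I H t w en) {s₀ s e : E} {y : V} {l₁ l₂ : List E}
    (hs₀ : s₀ ∈ star I H t) (hs : s ∈ star I H t) (hne : s ≠ s₀) (hl : w s = l₁ ++ e :: l₂)
    (hl₁ : EdgeWalk I t l₁ y) (he : I e = s(y, en s₀)) (hy : y ≠ t) :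
    StarTrails I H t (Function.update (Function.update w s l₁) s₀ (w s₀ ++ l₂))
      (Function.update (Function.update en s y) s₀ (en s)) := by
  have hl₂ : EdgeWalk I (en s₀) l₂ (en s) := (F.edgeWalk_suffix hs hl hl₁).of_cons he
  have hnd : (l₁ ++ e :: l₂).Nodup := hl ▸ F.nodup s hs
  have hsub₁ : ∀ f ∈ l₁, f ∈ w s := fun f hf ↦ hl ▸ List.mem_append_left _ hf
  have hsub₂ : ∀ f ∈ l₂, f ∈ w s := fun f hf ↦
    hl ▸ List.mem_append_right _ (List.mem_cons_of_mem _ hf)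
  refine (F.truncate hs hl hl₁ hy).update ((F.walk s₀ hs₀).append hl₂)
    ((F.head s₀ hs₀).trans (List.prefix_append _ _)) ?_ ?_ ?_
  · refine (F.nodup s₀ hs₀).append hnd.of_append_right.of_cons fun f hf₀ hf ↦ ?_
    exact hne (F.eq_of_mem s hs s₀ hs₀ f (hsub₂ f hf) hf₀)
  · rintro f hf
    rcases List.mem_append.1 hf with hf | hf
    · exact F.subset s₀ hs₀ f hf
    · exact F.subset s hs f (hsub₂ f hf)
  · intro r hr hr₀ f hf hfr
    obtain rfl | hrs := eq_or_ne r s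
    · rw [Function.update_self] at hfr
      rcases List.mem_append.1 hf with hf | hf
      · exact hne (F.eq_of_mem r hs s₀ hs₀ f (hsub₁ f hfr) hf)
      · exact (List.nodup_append.1 hnd).2.2 f hfr f (List.mem_cons_of_mem _ hf) rfl
    · rw [Function.update_of_ne hrs] at hfr
      rcases List.mem_append.1 hf with hf | hf
      · exact hr₀ (F.eq_of_mem r hr s₀ hs₀ f hfr hf)
      · exact hrs (F.eq_of_mem r hr s hs f hfr (hsub₂ f hf))

end StarTrails

open Classical in
theorem traverses_update_iff {s₀ : E} {l : List E} {c d : V} {f : E} (hs₀ : s₀ ∈ star I H t) :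
    Traverses I H t (Function.update w s₀ l) c f d ↔
      UsesDart I t l c f d ∨ ∃ s ∈ star I H t, s ≠ s₀ ∧ UsesDart I t (w s) c f d := by
  constructor
  · rintro ⟨s, hs, h⟩
    obtain rfl | hne := eq_or_ne s s₀
    · exact .inl (by rwa [Function.update_self] at h)
    · exact .inr ⟨s, hs, hne, by rwa [Function.update_of_ne hne] at h⟩
  · rintro (h | ⟨s, hs, hne, h⟩)
    · exact ⟨s₀, hs₀, by rwa [Function.update_self]⟩
    · exact ⟨s, hs, by rwa [Function.update_of_ne hne]⟩

open Classical in
theorem isAugmentation_update {s₀ : E} {y : V} {l : List E}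
    (F : StarTrails I H t (Function.update w s₀ l) (Function.update en s₀ y)) :
    IsAugmentation I H t w en s₀ y (Function.update w s₀ l) (Function.update en s₀ y) 1 where
  starTrails := F
  apply_mem_star _ := Iff.rfl
  end_of_eq s _ hs := by rw [Equiv.Perm.one_apply] at hs; rw [hs, Function.update_self]
  end_of_ne s _ hs := Function.update_of_ne hs _ _
  finite_ne := (Set.finite_singleton s₀).subset fun s hs ↦ by
    by_contra hne
    exact hs (Function.update_of_ne hne _ _)

open Classical in
theorem isAugmentation_switch {s₀ s : E} {y : V} {l₀ l : List E} (hs₀ : s₀ ∈ star I H t)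
    (hs : s ∈ star I H t) (hne : s ≠ s₀)
    (F : StarTrails I H t (Function.update (Function.update w s l) s₀ l₀)
      (Function.update (Function.update en s y) s₀ (en s))) :
    IsAugmentation I H t w en s₀ y (Function.update (Function.update w s l) s₀ l₀)
      (Function.update (Function.update en s y) s₀ (en s)) (Equiv.swap s₀ s) where
  starTrails := F
  apply_mem_star r := by
    obtain rfl | hr₀ := eq_or_ne r s₀
    · simp [hs, hs₀]
    · obtain rfl | hrs := eq_or_ne r s
      · simp [hs, hs₀]
      · rw [Equiv.swap_apply_of_ne_of_ne hr₀ hrs]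
  end_of_eq r _ hr := by
    obtain rfl : r = s := by rw [Equiv.swap_apply_eq_iff, Equiv.swap_apply_left] at hr; exact hr
    rw [Function.update_of_ne hne, Function.update_self]
  end_of_ne r _ hr := by
    obtain rfl | hr₀ := eq_or_ne r s₀
    · simp
    · have hrs : r ≠ s := by
        rintro rfl
        exact hr (Equiv.swap_apply_right _ _)
      simp [Equiv.swap_apply_of_ne_of_ne hr₀ hrs, hr₀, hrs]
  finite_ne := (Set.toFinite {s, s₀}).subset fun r hr ↦ by
    by_contra hmem
    simp only [Set.mem_insert_iff, Set.mem_singleton_iff, not_or] at hmem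
    exact hr (by rw [Function.update_of_ne hmem.2, Function.update_of_ne hmem.1])

theorem StarTrails.isAugmentation_refl (F : StarTrails I H t w en) (s₀ : E) :
    IsAugmentation I H t w en s₀ (en s₀) w en 1 where
  starTrails := F
  apply_mem_star _ := Iff.rfl
  end_of_eq _ _ hs := congrArg en hs
  end_of_ne _ _ _ := rfl
  finite_ne := by simp

theorem IsAugmentation.trans {w'' : E → List E} {en'' : E → V} {π π' : Equiv.Perm E} {s₀ s₁ : E}
    {y z : V} (h : IsAugmentation I H t w en s₀ y w' en' π)
    (h' : IsAugmentation I H t w' en' s₁ z w'' en'' π') (hs₁ : π s₁ = s₀) :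
    IsAugmentation I H t w en s₀ z w'' en'' (π'.trans π) where
  starTrails := h'.starTrails
  apply_mem_star s := (h.apply_mem_star _).trans (h'.apply_mem_star s)
  end_of_eq s hs hs₀ := h'.end_of_eq s hs (π.injective (hs₀.trans hs₁.symm))
  end_of_ne s hs hs₀ := by
    rw [h'.end_of_ne s hs fun hs' ↦ hs₀ ((congrArg π hs').trans hs₁)]
    exact h.end_of_ne _ ((h'.apply_mem_star s).2 hs) hs₀
  finite_ne := (h'.finite_ne.union h.finite_ne).subset fun s hs ↦ by
    by_contra hne
    simp only [Set.mem_union, Set.mem_ofPred_eq, not_or, not_not] at hne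
    exact hs (hne.1.trans hne.2)

theorem StarTrails.exists_edgeWalk_of_not_traverses (F : StarTrails I H t w en) {s e : E} {x y : V}
    (hs : s ∈ star I H t) (hes : e ∈ w s) (he : I e = s(x, y))
    (hunused : ¬ Traverses I H t w x e y) : ∃ l₁ l₂, w s = l₁ ++ e :: l₂ ∧ EdgeWalk I t l₁ y := by
  obtain ⟨l₁, l₂, hl⟩ := List.append_of_mem hes
  obtain ⟨a, hl₁, hl₂⟩ := edgeWalk_append.1 (hl ▸ F.walk s hs)
  obtain ⟨b, hab, -⟩ := edgeWalk_cons.1 hl₂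
  rcases Sym2.eq_iff.1 (hab.symm.trans he) with ⟨rfl, -⟩ | ⟨rfl, -⟩
  · exact absurd ⟨s, hs, l₁, l₂, hl, hl₁, he⟩ hunused
  · exact ⟨l₁, l₂, hl, hl₁⟩

/-- The unused edge extends the trail `s₀`, whereas a trail `s` using the edge backwards is cut off
there and its tail is handed over to `s₀`. -/
theorem StarTrails.exists_isAugmentation_of_residualStep (F : StarTrails I H t w en) {s₀ : E}
    {y : V} (hs₀ : s₀ ∈ star I H t) (hstep : ResidualStep I H t w (en s₀) y) :
    ∃ w' en' π s₁, IsAugmentation I H t w en s₀ y w' en' π ∧ s₁ ∈ star I H t ∧ π s₁ = s₀ ∧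
      ∀ c f d, c ≠ en s₀ → Traverses I H t w' c f d → Traverses I H t w c f d := by
  classical
  obtain ⟨e, heH, he, hy, hunused⟩ := hstep
  by_cases hused : ∃ s ∈ star I H t, e ∈ w s
  · obtain ⟨s, hs, hes⟩ := hused
    obtain ⟨l₁, l₂, hl, hl₁⟩ := F.exists_edgeWalk_of_not_traverses hs hes he hunused
    have heab : I e = s(y, en s₀) := he.trans Sym2.eq_swap
    have hdart {c f d} : UsesDart I t (w s) c f d ↔ UsesDart I t l₁ c f d ∨
        (f = e ∧ c = y ∧ d = en s₀) ∨ UsesDart I (en s₀) l₂ c f d := by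
      rw [hl, usesDart_append hl₁, usesDart_cons heab]
    obtain rfl | hne := eq_or_ne s s₀
    · refine ⟨_, _, _, s, isAugmentation_update (F.truncate hs hl hl₁ hy), hs, rfl,
        fun c f d _ h ↦ ?_⟩
      rcases (traverses_update_iff hs).1 h with h | ⟨r, hr, -, h⟩
      · exact ⟨s, hs, hdart.2 (.inl h)⟩
      · exact ⟨r, hr, h⟩
    · have F' := F.switch_tail hs₀ hs hne hl hl₁ heab hy
      refine ⟨_, _, _, s, isAugmentation_switch hs₀ hs hne F', hs,
        Equiv.swap_apply_right _ _, fun c f d _ h ↦ ?_⟩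
      rcases (traverses_update_iff hs₀).1 h with h | ⟨r, hr, -, h⟩
      · rcases (usesDart_append (F.walk s₀ hs₀)).1 h with h | h
        · exact ⟨s₀, hs₀, h⟩
        · exact ⟨s, hs, hdart.2 (.inr (.inr h))⟩
      · obtain rfl | hrs := eq_or_ne r s
        · rw [Function.update_self] at h
          exact ⟨r, hr, hdart.2 (.inl h)⟩
        · rw [Function.update_of_ne hrs] at h
          exact ⟨r, hr, h⟩
  · push Not at hused
    refine ⟨_, _, _, s₀, isAugmentation_update (F.append_edge hs₀ heH he hused), hs₀, rfl,
      fun c f d hc h ↦ ?_⟩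
    rcases (traverses_update_iff hs₀).1 h with h | ⟨r, hr, -, h⟩
    · rcases (usesDart_append (F.walk s₀ hs₀)).1 h with h | h
      · exact ⟨s₀, hs₀, h⟩
      · simp [usesDart_cons he, not_usesDart_nil, hc] at h
    · exact ⟨r, hr, h⟩

theorem exists_nodup_isChain_of_reflTransGen {α : Type*} {R : α → α → Prop} {x z : α}
    (h : Relation.ReflTransGen R x z) : ∃ l, (x :: l).IsChain R ∧ (x :: l).Nodup ∧
      (x :: l).getLast (List.cons_ne_nil _ _) = z := by
  induction h using Relation.ReflTransGen.head_induction_on with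
  | refl => exact ⟨[], by simp⟩
  | @head a b hab _ ih =>
    obtain ⟨l, hchain, hnd, hlast⟩ := ih
    by_cases ha : a ∈ b :: l
    · obtain ⟨m₁, m₂, hl⟩ := List.append_of_mem ha
      simp only [hl] at hchain hnd hlast
      exact ⟨m₂, hchain.right_of_append, hnd.of_append_right, by simpa using hlast⟩
    · exact ⟨b :: l, List.isChain_cons_cons.2 ⟨hab, hchain⟩, List.nodup_cons.2 ⟨ha, hnd⟩,
        by simpa using hlast⟩

theorem StarTrails.exists_isAugmentation_of_isChain {l : List V} (F : StarTrails I H t w en)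
    {s₀ : E} (hs₀ : s₀ ∈ star I H t) (hchain : (en s₀ :: l).IsChain (ResidualStep I H t w))
    (hnd : (en s₀ :: l).Nodup) :
    ∃ w' en' π, IsAugmentation I H t w en s₀
      ((en s₀ :: l).getLast (List.cons_ne_nil _ _)) w' en' π := by
  induction l generalizing w en s₀ with
  | nil => exact ⟨w, en, 1, F.isAugmentation_refl s₀⟩
  | cons y l ih =>
    obtain ⟨hstep, hchain⟩ := List.isChain_cons_cons.1 hchain
    obtain ⟨hnotMem, hnd⟩ := List.nodup_cons.1 hnd
    obtain ⟨w₁, en₁, π₁, s₁, haug₁, hs₁, hπ₁, htrav⟩ :=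
      F.exists_isAugmentation_of_residualStep hs₀ hstep
    obtain rfl : en₁ s₁ = y := haug₁.end_of_eq s₁ hs₁ hπ₁
    have hchain₁ : (en₁ s₁ :: l).IsChain (ResidualStep I H t w₁) := by
      refine hchain.imp_of_mem_imp fun c d hc _ ⟨f, hfH, hf, hd, hunused⟩ ↦
        ⟨f, hfH, hf, hd, fun h ↦ hunused (htrav c f d ?_ h)⟩
      rintro rfl
      exact hnotMem hc
    obtain ⟨w₂, en₂, π₂, haug₂⟩ := ih haug₁.starTrails hs₁ hchain₁ hnd
    exact ⟨w₂, en₂, _, haug₁.trans haug₂ hπ₁⟩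

/-- A vertex set containing `t` that no trail of the family ever re-enters and whose boundary
edges are all used by the family. -/
structure IsTight (I : E → Sym2 V) (H : Set E) (t : V) (w : E → List E) (X : Set V) : Prop where
  mem : t ∈ X
  traverses_out : ∀ g ∈ H, ∀ u v, I g = s(u, v) → u ∈ X → v ∉ X → Traverses I H t w u g v
  not_traverses_in : ∀ g u v, u ∈ X → v ∉ X → ¬ Traverses I H t w v g u

theorem StarTrails.isTight_residual_reachable (F : StarTrails I H t w en) (x : V) :
    IsTight I H t w (insert t {z | Relation.ReflTransGen (ResidualStep I H t w) x z}) := by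
  have htrav : ∀ g ∈ H, ∀ u v, I g = s(u, v) →
      u ∈ insert t {z | Relation.ReflTransGen (ResidualStep I H t w) x z} →
      v ∉ insert t {z | Relation.ReflTransGen (ResidualStep I H t w) x z} →
      Traverses I H t w u g v := by
    intro g hg u v huv hu hv
    simp only [Set.mem_insert_iff, Set.mem_ofPred_eq, not_or] at hu hv
    rcases hu with rfl | hu
    · exact F.traverses_star (mem_star.2 ⟨hg, v, hv.1, huv⟩) huv
    · by_contra hunused
      exact hv.2 (hu.tail ⟨g, hg, huv, hv.1, hunused⟩)
  refine ⟨Set.mem_insert _ _, htrav, fun g u v hu hv hin ↦ ?_⟩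
  have hin' := hin
  obtain ⟨s, hs, l₁, l₂, hl, -, hvu⟩ := hin
  have hgH : g ∈ H := F.subset s hs g (by simp [hl])
  have hout := htrav g hgH u v (hvu.trans Sym2.eq_swap) hu hv
  exact hv (F.eq_of_traverses_swap hout hin' ▸ hu)

theorem StarTrails.exists_isAugmentation_or_isTight (F : StarTrails I H t w en) {s₀ : E}
    (hs₀ : s₀ ∈ star I H t) (hB : t ∉ B) :
    (∃ z ∈ B, ∃ w' en' π, IsAugmentation I H t w en s₀ z w' en' π) ∨
      ∃ X, en s₀ ∈ X ∧ Disjoint X B ∧ IsTight I H t w X := by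
  by_cases h : ∃ z ∈ B, Relation.ReflTransGen (ResidualStep I H t w) (en s₀) z
  · obtain ⟨z, hz, hreach⟩ := h
    obtain ⟨l, hchain, hnd, rfl⟩ := exists_nodup_isChain_of_reflTransGen hreach
    exact .inl ⟨_, hz, F.exists_isAugmentation_of_isChain hs₀ hchain hnd⟩
  · push Not at h
    refine .inr ⟨_, .inr .refl, Set.disjoint_left.2 ?_, F.isTight_residual_reachable (en s₀)⟩
    rintro z (rfl | hz) hzB
    exacts [hB hzB, h z hzB hz]

theorem IsTight.mem_inside_of_mem_prefix (hX : IsTight I H t w X) {s : E} (hs : s ∈ star I H t)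
    {l₁ l₂ : List E} {u : V} (hl : w s = l₁ ++ l₂) (hl₁ : EdgeWalk I t l₁ u) (hu : u ∈ X) :
    ∀ e ∈ l₁, e ∈ inside I X := by
  have hmem {k₁ k₂ d} (hk : l₁ = k₁ ++ k₂) (hk₁ : EdgeWalk I t k₁ d) : d ∈ X := by
    by_contra hd
    have hk₂ : EdgeWalk I d k₂ u := .of_append (hk ▸ hl₁) hk₁
    obtain ⟨n₁, f, n₂, p, q, rfl, hn₁, hf, -, hp, hq⟩ :=
      hk₂.exists_crossing (X := Xᶜ) hd (not_not.2 hu)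
    exact hX.not_traverses_in f q p (not_not.1 hq) hp
      ⟨s, hs, k₁ ++ n₁, n₂ ++ l₂, by simp [hl, hk], hk₁.append hn₁, hf⟩
  intro e he
  obtain ⟨m₁, m₂, hm⟩ := List.append_of_mem he
  obtain ⟨a, hm₁, hm₂⟩ := edgeWalk_append.1 (hm ▸ hl₁)
  obtain ⟨b, hab, -⟩ := edgeWalk_cons.1 hm₂
  have hm' : l₁ = (m₁ ++ [e]) ++ m₂ := by simp [hm]
  exact (mem_inside hab).2 ⟨hmem hm hm₁, hmem hm' (hm₁.append (.single hab))⟩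

end AugmentingTrails

section Shelters

variable {V : Type u} {E : Type v} {I : E → Sym2 V} {H : Set E} {t : V} {w : E → List E}
  {en : E → V} {T B X Y : Set V} {q : E → List E}

/-- Some family of edge-disjoint trails links all edges of `H` at `t` to vertices of `B`. -/
def LinkedTo (I : E → Sym2 V) (H : Set E) (t : V) (B : Set V) : Prop :=
  ∃ w en, StarTrails I H t w en ∧ ∀ s ∈ star I H t, en s ∈ B

theorem AvoidsBeforeEnd.mono {a : V} {l : List E} (h : AvoidsBeforeEnd I B a l) (hY : Y ⊆ B) :
    AvoidsBeforeEnd I Y a l :=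
  fun _ _ _ _ hl hwalk hd ↦ h hl hwalk (hY hd)

theorem LinkedTo.exists_avoidsBeforeEnd (hB : t ∉ B) (h : LinkedTo I H t B) :
    ∃ w en, StarTrails I H t w en ∧
      ∀ s ∈ star I H t, en s ∈ B ∧ AvoidsBeforeEnd I B t (w s) := by
  obtain ⟨w, en, F, hen⟩ := h
  have : Nonempty V := ⟨t⟩
  have hfirst : ∀ s ∈ star I H t, ∃ l c, l <+: w s ∧ EdgeWalk I t l c ∧ c ∈ B ∧
      AvoidsBeforeEnd I B t l := fun s hs ↦ by
    obtain ⟨l₁, l₂, c, hl, hl₁, -, hc, havoid⟩ := (F.walk s hs).exists_first_hit (hen s hs)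
    exact ⟨l₁, c, ⟨l₂, hl.symm⟩, hl₁, hc, havoid⟩
  choose! w' en' hpre hwalk hen' havoid using hfirst
  refine ⟨w', en', F.of_prefix hpre (fun s hs hnil ↦ hB ?_) hwalk,
    fun s hs ↦ ⟨hen' s hs, havoid s hs⟩⟩
  have ht : t = en' s := edgeWalk_nil.1 (by simpa only [hnil] using hwalk s hs)
  exact ht ▸ hen' s hs

/-- A shelter on `Y`: edge-disjoint trails `q g` inside `Y`, one for each edge `g` of `H` leaving
`Y`, which lead from the end of `g` in `Y` to `T`. -/
structure Shelter (I : E → Sym2 V) (H : Set E) (T : Set V) (Y : Set V) (q : E → List E) : Prop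
    extends EdgeDisjointOn (H ∩ inside I Y) (cut I Y ∩ H) q where
  walk : ∀ g ∈ H, ∀ u v, I g = s(u, v) → u ∈ Y → v ∉ Y → ∃ b ∈ T ∩ Y, EdgeWalk I u (q g) b

theorem inside_mono (h : Y ⊆ X) : inside I Y ⊆ inside I X := fun _ he x hx ↦ h (he x hx)

theorem cut_union_diff_subset : cut I (Y ∪ X) \ cut I Y ⊆ cut I X := by
  rintro g ⟨⟨u, v, huv, hu, hv⟩, hgY⟩
  refine ⟨u, v, huv, hu.resolve_left fun h ↦ hgY ?_, fun h ↦ hv (.inr h)⟩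
  exact ⟨u, v, huv, h, fun h' ↦ hv (.inl h')⟩

theorem notMem_inside_of_mem_cut {g : E} (h : g ∈ cut I Y) : g ∉ inside I Y := by
  obtain ⟨u, v, hg, -, hv⟩ := h
  exact fun h ↦ hv ((mem_inside hg).1 h).2

theorem eq_of_concat_prefix {α : Type*} {l m k : List α} {g g' : α} (h : l ++ [g] <+: k)
    (h' : m ++ [g'] <+: k) (hg : g ∉ m) (hg' : g' ∉ l) : g = g' := by
  rcases List.prefix_or_prefix_of_prefix h h' with h | h <;>
    rcases List.prefix_concat_iff.1 h with h | h
  · exact (List.append_singleton_inj.1 h).2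
  · exact absurd (h.subset (by simp)) hg
  · exact (List.append_singleton_inj.1 h).2.symm
  · exact absurd (h.subset (by simp)) hg'

theorem StarTrails.exists_shelter_of_isTight (F : StarTrails I H t w en)
    (hX : IsTight I H t w X) (ht : t ∈ T) : ∃ q, Shelter I H T X q := by
  have hused : ∀ g ∈ cut I X ∩ H, ∃ l, (∃ s ∈ star I H t, l ++ [g] <+: w s) ∧
      (∀ e ∈ l, e ∈ inside I X) ∧ ∀ u v, I g = s(u, v) → u ∈ X → v ∉ X → EdgeWalk I t l u := by
    rintro g ⟨⟨u, v, hg, hu, hv⟩, hgH⟩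
    obtain ⟨s, hs, l₁, l₂, hl, hl₁, -⟩ := hX.traverses_out g hgH u v hg hu hv
    refine ⟨l₁, ⟨s, hs, l₂, by simp [hl]⟩, hX.mem_inside_of_mem_prefix hs hl hl₁ hu,
      fun u' v' hg' hu' hv' ↦ ?_⟩
    rcases Sym2.eq_iff.1 (hg.symm.trans hg') with ⟨rfl, -⟩ | ⟨rfl, rfl⟩
    exacts [hl₁, absurd hu hv']
  choose! l hpre hinside hwalk using hused
  have hsub : ∀ g ∈ cut I X ∩ H, ∀ s, l g ++ [g] <+: w s → ∀ e ∈ l g, e ∈ w s :=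
    fun g _ s hs e he ↦ hs.subset (List.mem_append_left _ he)
  refine ⟨fun g ↦ (l g).reverse, ⟨fun g hg ↦ ?_, fun g hg e he ↦ ?_, fun g hg g' hg' e he he' ↦ ?_⟩,
    fun g hg u v hI hu hv ↦ ?_⟩
  · obtain ⟨s, hs, hls⟩ := hpre g hg
    exact List.nodup_reverse.2 (((F.nodup s hs).sublist hls.sublist).of_append_left)
  · obtain ⟨s, hs, hls⟩ := hpre g hg
    rw [List.mem_reverse] at he
    exact ⟨F.subset s hs e (hsub g hg s hls e he), hinside g hg e he⟩
  · obtain ⟨s, hs, hls⟩ := hpre g hg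
    obtain ⟨s', hs', hls'⟩ := hpre g' hg'
    rw [List.mem_reverse] at he he'
    obtain rfl := F.eq_of_mem s hs s' hs' e (hsub g hg s hls e he) (hsub g' hg' s' hls' e he')
    exact eq_of_concat_prefix hls hls' (fun h ↦ notMem_inside_of_mem_cut hg.1 (hinside g' hg' g h))
      (fun h ↦ notMem_inside_of_mem_cut hg'.1 (hinside g hg g' h))
  · exact ⟨t, ⟨ht, hX.mem⟩, (hwalk g ⟨⟨u, v, hI, hu, hv⟩, hg⟩ u v hI hu hv).reverse⟩

theorem AvoidsBeforeEnd.notMem_inside {a b : V} {l : List E} (h : AvoidsBeforeEnd I B a l)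
    (hl : EdgeWalk I a l b) : ∀ e ∈ l, e ∉ inside I B := by
  rintro e he heB
  obtain ⟨m, m', rfl⟩ := List.append_of_mem he
  obtain ⟨d, hm, hm'⟩ := edgeWalk_append.1 hl
  obtain ⟨c, hc, -⟩ := edgeWalk_cons.1 hm'
  exact h rfl hm ((mem_inside hc).1 heB).1

theorem AvoidsBeforeEnd.exists_last_edge {a b : V} {l : List E} (h : AvoidsBeforeEnd I B a l)
    (hl : EdgeWalk I a l b) (ha : a ∉ B) (hb : b ∈ B) :
    ∃ g ∈ l, ∃ u, I g = s(b, u) ∧ u ∉ B := by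
  rcases List.eq_nil_or_concat l with rfl | ⟨m, g, rfl⟩
  · exact absurd (edgeWalk_nil.1 hl ▸ hb) ha
  · rw [List.concat_eq_append] at h hl ⊢
    obtain ⟨d, hm, hg⟩ := edgeWalk_append.1 hl
    obtain ⟨c, hdc, hcb⟩ := edgeWalk_cons.1 hg
    obtain rfl := edgeWalk_nil.1 hcb
    exact ⟨g, by simp, d, hdc.trans Sym2.eq_swap, h rfl hm⟩

theorem EdgeWalk.exists_truncation {a b : V} {l : List E} (h : EdgeWalk I a l b) (B : Set V) :
    ∃ l' c, l' <+: l ∧ EdgeWalk I a l' c ∧ AvoidsBeforeEnd I B a l' ∧ (c ∈ B ∨ c = b) := by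
  obtain ⟨l₁, l₂, c, rfl, hl₁, -, hc, havoid⟩ := h.exists_first_hit (Set.mem_insert b B)
  exact ⟨l₁, c, List.prefix_append _ _, hl₁, havoid.mono (Set.subset_insert _ _), hc.symm⟩

theorem EdgeDisjointOn.append {J : Set E} {p r : E → List E} (hp : EdgeDisjointOn H J p)
    (hr : EdgeDisjointOn H J r) (h : ∀ j ∈ J, ∀ j' ∈ J, ∀ e ∈ p j, e ∉ r j') :
    EdgeDisjointOn H J fun j ↦ p j ++ r j where
  nodup j hj := (hp.nodup j hj).append (hr.nodup j hj) fun e he he' ↦ h j hj j hj e he he'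
  subset j hj e he := (List.mem_append.1 he).elim (hp.subset j hj e) (hr.subset j hj e)
  eq_of_mem j hj j' hj' e he he' := by
    rcases List.mem_append.1 he with he | he <;> rcases List.mem_append.1 he' with he' | he'
    · exact hp.eq_of_mem j hj j' hj' e he he'
    · exact absurd he' (h j hj j' hj' e he)
    · exact absurd he (h j' hj' j hj e he')
    · exact hr.eq_of_mem j hj j' hj' e he he'

open Classical in
theorem EdgeDisjointOn.piecewise {S J : Set E} {p r : E → List E}
    (hp : EdgeDisjointOn H (J ∩ S) p) (hr : EdgeDisjointOn H (J \ S) r)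
    (h : ∀ j ∈ J ∩ S, ∀ j' ∈ J \ S, ∀ e ∈ p j, e ∉ r j') :
    EdgeDisjointOn H J (S.piecewise p r) where
  nodup j hj := by
    by_cases hjS : j ∈ S
    · simpa only [Set.piecewise_eq_of_mem _ _ _ hjS] using hp.nodup j ⟨hj, hjS⟩
    · simpa only [Set.piecewise_eq_of_notMem _ _ _ hjS] using hr.nodup j ⟨hj, hjS⟩
  subset j hj := by
    by_cases hjS : j ∈ S
    · simpa only [Set.piecewise_eq_of_mem _ _ _ hjS] using hp.subset j ⟨hj, hjS⟩
    · simpa only [Set.piecewise_eq_of_notMem _ _ _ hjS] using hr.subset j ⟨hj, hjS⟩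
  eq_of_mem j hj j' hj' e he he' := by
    by_cases hjS : j ∈ S <;> by_cases hjS' : j' ∈ S <;>
      simp only [hjS, hjS', Set.piecewise_eq_of_mem, Set.piecewise_eq_of_notMem,
        not_false_eq_true] at he he'
    · exact hp.eq_of_mem j ⟨hj, hjS⟩ j' ⟨hj', hjS'⟩ e he he'
    · exact absurd he' (h j ⟨hj, hjS⟩ j' ⟨hj', hjS'⟩ e he)
    · exact absurd he (h j' ⟨hj', hjS'⟩ j ⟨hj, hjS⟩ e he')
    · exact hr.eq_of_mem j ⟨hj, hjS⟩ j' ⟨hj', hjS'⟩ e he he'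

/-- `r` continues a trail `p` into the shelter `q` on `Y`: either `p` does not enter `Y`, and `r`
is empty, or `r` is the trail assigned by `q` to an edge through which `p` enters `Y`. -/
def ContinuesInto (I : E → Sym2 V) (H : Set E) (Y : Set V) (q : E → List E) (p r : List E) :
    Prop :=
  r = [] ∨ ∃ g ∈ p, g ∈ cut I Y ∩ H ∧ r = q g

namespace Shelter

theorem exists_continuation (hS : Shelter I H T Y q) {a b : V} {p : List E} (ha : a ∉ Y)
    (hp : EdgeWalk I a p b) (hpH : ∀ e ∈ p, e ∈ H) (havoid : AvoidsBeforeEnd I Y a p) :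
    ∃ r z, EdgeWalk I a (p ++ r) z ∧ ContinuesInto I H Y q p r ∧
      (z ∈ T ∩ Y ∨ z = b ∧ b ∉ Y) := by
  by_cases hb : b ∈ Y
  · obtain ⟨g, hg, u, hbu, hu⟩ := havoid.exists_last_edge hp ha hb
    obtain ⟨z, hz, hwalk⟩ := hS.walk g (hpH g hg) b u hbu hb hu
    exact ⟨q g, z, hp.append hwalk, .inr ⟨g, hg, ⟨⟨b, u, hbu, hb, hu⟩, hpH g hg⟩, rfl⟩, .inl hz⟩
  · exact ⟨[], b, by rwa [List.append_nil], .inl rfl, .inr ⟨rfl, hb⟩⟩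

theorem edgeDisjointOn_continuation (hS : Shelter I H T Y q) {J : Set E} {p r : E → List E}
    (hp : EdgeDisjointOn H J p) (hr : ∀ j ∈ J, ContinuesInto I H Y q (p j) (r j)) :
    EdgeDisjointOn (H ∩ inside I Y) J r where
  nodup j hj := by
    rcases hr j hj with h | ⟨g, -, hg, h⟩ <;> rw [h]
    exacts [List.nodup_nil, hS.nodup g hg]
  subset j hj e he := by
    rcases hr j hj with h | ⟨g, -, hg, h⟩ <;> rw [h] at he
    exacts [absurd he List.not_mem_nil, hS.subset g hg e he]
  eq_of_mem j hj j' hj' e he he' := by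
    rcases hr j hj with h | ⟨g, hgp, hg, h⟩ <;> rw [h] at he
    · exact absurd he List.not_mem_nil
    rcases hr j' hj' with h' | ⟨g', hgp', hg', h'⟩ <;> rw [h'] at he'
    · exact absurd he' List.not_mem_nil
    obtain rfl := hS.eq_of_mem g hg g' hg' e he he'
    exact hp.eq_of_mem j hj j' hj' g hgp hgp'

theorem edgeDisjointOn_append (hS : Shelter I H T Y q) {J : Set E} {p r : E → List E}
    (hp : EdgeDisjointOn H J p) (hpY : ∀ j ∈ J, ∀ e ∈ p j, e ∉ inside I Y)
    (hr : ∀ j ∈ J, ContinuesInto I H Y q (p j) (r j)) :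
    EdgeDisjointOn H J fun j ↦ p j ++ r j := by
  have hrY := hS.edgeDisjointOn_continuation hp hr
  exact hp.append (hrY.mono Set.inter_subset_left subset_rfl)
    fun j hj j' hj' e he he' ↦ hpY j hj e he (hrY.subset j' hj' e he').2

theorem linkedTo (hS : Shelter I H T Y q) (htY : t ∉ Y) (h : LinkedTo I H t ((T \ {t}) ∪ Y)) :
    LinkedTo I H t (T \ {t}) := by
  have : Nonempty V := ⟨t⟩
  obtain ⟨w, en, F, hw⟩ := h.exists_avoidsBeforeEnd (by simp [htY])
  have havoid : ∀ s ∈ star I H t, AvoidsBeforeEnd I Y t (w s) :=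
    fun s hs ↦ (hw s hs).2.mono Set.subset_union_right
  choose! r en' hwalk hr hen' using fun s hs ↦
    hS.exists_continuation htY (F.walk s hs) (F.subset s hs) (havoid s hs)
  refine ⟨fun s ↦ w s ++ r s, en', ⟨hS.edgeDisjointOn_append F.toEdgeDisjointOn
    (fun s hs ↦ (havoid s hs).notMem_inside (F.walk s hs)) hr, hwalk,
    fun s hs ↦ (F.head s hs).trans (List.prefix_append _ _)⟩, fun s hs ↦ ?_⟩
  rcases hen' s hs with h | ⟨h, hY⟩
  · exact ⟨h.1, fun ht ↦ htY (ht ▸ h.2)⟩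
  · exact h ▸ (hw s hs).1.resolve_right hY

theorem exists_continuation_of_notMem_cut {q' : E → List E} (hS : Shelter I H T Y q)
    (hS' : Shelter I H T X q') {g : E} (hg : g ∈ (cut I (Y ∪ X) ∩ H) \ cut I Y) :
    ∃ p r, p <+: q' g ∧ (∀ e ∈ p, e ∉ inside I Y) ∧ ContinuesInto I H Y q p r ∧
      ∀ u v, I g = s(u, v) → u ∈ Y ∪ X → v ∉ Y ∪ X →
        ∃ z ∈ T ∩ (Y ∪ X), EdgeWalk I u (p ++ r) z := by
  obtain ⟨⟨⟨u, v, huv, hu, hv⟩, hgH⟩, hgY⟩ := hg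
  have huY : u ∉ Y := fun h ↦ hgY ⟨u, v, huv, h, fun h' ↦ hv (.inl h')⟩
  have hgX : g ∈ cut I X ∩ H := ⟨cut_union_diff_subset ⟨⟨u, v, huv, hu, hv⟩, hgY⟩, hgH⟩
  obtain ⟨b, hb, hwalk⟩ := hS'.walk g hgH u v huv (hu.resolve_left huY) fun h ↦ hv (.inr h)
  obtain ⟨p, c, hp, hpwalk, havoid, hc⟩ := hwalk.exists_truncation Y
  obtain ⟨r, z, hrwalk, hr, hz⟩ := hS.exists_continuation huY hpwalk
    (fun e he ↦ (hS'.subset g hgX e (hp.subset he)).1) havoid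
  have hzT : z ∈ T ∩ (Y ∪ X) := by
    rcases hz with h | ⟨rfl, h⟩
    · exact ⟨h.1, .inl h.2⟩
    · obtain rfl := hc.resolve_left h
      exact ⟨hb.1, .inr hb.2⟩
  refine ⟨p, r, hp, havoid.notMem_inside hpwalk, hr, fun u' v' huv' hu' hv' ↦ ⟨z, hzT, ?_⟩⟩
  rcases Sym2.eq_iff.1 (huv.symm.trans huv') with ⟨rfl, -⟩ | ⟨rfl, rfl⟩
  exacts [hrwalk, absurd hu hv']

/-- The trails of `q` are kept, and those of `q'` are rerouted into `q` once they meet `Y`. -/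
theorem exists_union {q' : E → List E} (hS : Shelter I H T Y q) (hS' : Shelter I H T X q') :
    ∃ q'', Shelter I H T (Y ∪ X) q'' ∧ Set.EqOn q'' q (cut I Y) := by
  classical
  choose! p r hp hpY hr hwalk using fun g hg ↦ hS.exists_continuation_of_notMem_cut hS' (g := g) hg
  have hXcut : (cut I (Y ∪ X) ∩ H) \ cut I Y ⊆ cut I X ∩ H := fun g hg ↦
    ⟨cut_union_diff_subset ⟨hg.1.1, hg.2⟩, hg.1.2⟩
  have hYcut : cut I (Y ∪ X) ∩ H ∩ cut I Y ⊆ cut I Y ∩ H := fun g hg ↦ ⟨hg.2, hg.1.2⟩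
  have hpX : EdgeDisjointOn (H ∩ inside I X) ((cut I (Y ∪ X) ∩ H) \ cut I Y) p :=
    (hS'.mono subset_rfl hXcut).of_sublist fun g hg ↦ (hp g hg).sublist
  have hpH := hpX.mono Set.inter_subset_left subset_rfl
  have hrY := hS.edgeDisjointOn_continuation hpH hr
  have hYX : H ∩ inside I Y ⊆ H ∩ inside I (Y ∪ X) :=
    Set.inter_subset_inter_right H (inside_mono Set.subset_union_left)
  have hXX : H ∩ inside I X ⊆ H ∩ inside I (Y ∪ X) :=
    Set.inter_subset_inter_right H (inside_mono Set.subset_union_right)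
  have hpr : EdgeDisjointOn (H ∩ inside I (Y ∪ X)) ((cut I (Y ∪ X) ∩ H) \ cut I Y)
      fun g ↦ p g ++ r g :=
    (hpX.mono hXX subset_rfl).append (hrY.mono hYX subset_rfl)
      fun g hg g' hg' e he he' ↦ hpY g hg e he (hrY.subset g' hg' e he').2
  refine ⟨(cut I Y).piecewise q fun g ↦ p g ++ r g,
    ⟨.piecewise (hS.mono hYX hYcut) hpr fun g hg g' hg' e he he' ↦ ?_,
      fun g hgH u v huv hu hv ↦ ?_⟩,
    Set.piecewise_eqOn _ _ _⟩
  · rcases List.mem_append.1 he' with he' | he'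
    · exact hpY g' hg' e he' (hS.subset g (hYcut hg) e he).2
    · rcases hr g' hg' with hnil | ⟨h, hhp, hh, hrq⟩
      · simp [hnil] at he'
      · obtain rfl := hS.eq_of_mem g (hYcut hg) h hh e he (hrq ▸ he')
        exact notMem_inside_of_mem_cut hg.1.1 (hXX (hpX.subset g' hg' g hhp)).2
  · have hgcut : g ∈ cut I (Y ∪ X) := ⟨u, v, huv, hu, hv⟩
    by_cases hgY : g ∈ cut I Y
    · rw [Set.piecewise_eq_of_mem _ _ _ hgY]
      have huY : u ∈ Y := by
        by_contra huY
        exact (mem_cut huv).1 hgY (iff_of_false huY fun h ↦ hv (.inl h))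
      obtain ⟨z, hz, hq⟩ := hS.walk g hgH u v huv huY fun h ↦ hv (.inl h)
      exact ⟨z, ⟨hz.1, .inl hz.2⟩, hq⟩
    · rw [Set.piecewise_eq_of_notMem _ _ _ hgY]
      exact hwalk g ⟨⟨hgcut, hgH⟩, hgY⟩ u v huv hu hv

end Shelter

/-- The order on pairs of a set and a shelter on it used for Zorn's lemma: the larger shelter
agrees with the smaller one on the edges leaving both sets. -/
def ShelterExtends (I : E → Sym2 V) (P Q : Set V × (E → List E)) : Prop :=
  P.1 ⊆ Q.1 ∧ Set.EqOn Q.2 P.2 (cut I P.1 ∩ cut I Q.1)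

theorem mem_cut_of_subset_of_subset {Z : Set V} {g : E} (hXY : X ⊆ Y) (hYZ : Y ⊆ Z)
    (hX : g ∈ cut I X) (hZ : g ∈ cut I Z) : g ∈ cut I Y := by
  obtain ⟨u, v, huv, hu, -⟩ := hX
  exact ⟨u, v, huv, hXY hu, fun hv ↦ (mem_cut huv).1 hZ (iff_of_true (hYZ (hXY hu)) (hYZ hv))⟩

theorem ShelterExtends.trans {P Q R : Set V × (E → List E)} (hPQ : ShelterExtends I P Q)
    (hQR : ShelterExtends I Q R) : ShelterExtends I P R := by
  refine ⟨hPQ.1.trans hQR.1, fun g ⟨hP, hR⟩ ↦ ?_⟩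
  have hQ := mem_cut_of_subset_of_subset hPQ.1 hQR.1 hP hR
  exact (hQR.2 ⟨hQ, hR⟩).trans (hPQ.2 ⟨hP, hQ⟩)

theorem exists_mem_cut_of_directed {ι : Type*} {P : ι → Set V × (E → List E)}
    (hdir : Directed (ShelterExtends I) P) {g g' : E} (hg : g ∈ cut I (⋃ i, (P i).1))
    (hg' : g' ∈ cut I (⋃ i, (P i).1)) : ∃ i, g ∈ cut I (P i).1 ∧ g' ∈ cut I (P i).1 := by
  have hsub (i : ι) : (P i).1 ⊆ ⋃ i, (P i).1 := Set.subset_iUnion (fun i ↦ (P i).1) i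
  have hmem : ∀ g ∈ cut I (⋃ i, (P i).1), ∃ i, g ∈ cut I (P i).1 := by
    rintro g ⟨u, v, huv, hu, hv⟩
    obtain ⟨i, hi⟩ := Set.mem_iUnion.1 hu
    exact ⟨i, u, v, huv, hi, fun h ↦ hv (hsub i h)⟩
  obtain ⟨i, hi⟩ := hmem g hg
  obtain ⟨j, hj⟩ := hmem g' hg'
  obtain ⟨k, hik, hjk⟩ := hdir i j
  exact ⟨k, mem_cut_of_subset_of_subset hik.1 (hsub k) hi hg,
    mem_cut_of_subset_of_subset hjk.1 (hsub k) hj hg'⟩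

theorem Shelter.exists_iUnion_of_directed {ι : Type*} {P : ι → Set V × (E → List E)}
    (hP : ∀ i, Shelter I H T (P i).1 (P i).2) (hdir : Directed (ShelterExtends I) P) :
    ∃ q, Shelter I H T (⋃ i, (P i).1) q ∧ ∀ i, ShelterExtends I (P i) (⋃ i, (P i).1, q) := by
  have hsub (i : ι) : (P i).1 ⊆ ⋃ i, (P i).1 := Set.subset_iUnion (fun i ↦ (P i).1) i
  have hex : ∀ g, ∃ l, ∀ i, g ∈ cut I (P i).1 → g ∈ cut I (⋃ i, (P i).1) → (P i).2 g = l := by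
    intro g
    by_cases hg : ∃ i, g ∈ cut I (P i).1
    · obtain ⟨i, hi⟩ := hg
      refine ⟨(P i).2 g, fun j hj hU ↦ ?_⟩
      obtain ⟨k, hik, hjk⟩ := hdir i j
      have hk := mem_cut_of_subset_of_subset hik.1 (hsub k) hi hU
      exact (hjk.2 ⟨hj, hk⟩).symm.trans (hik.2 ⟨hi, hk⟩)
    · exact ⟨[], fun i hi ↦ absurd ⟨i, hi⟩ hg⟩
  choose q hq using hex
  have hcommon {g g'} := exists_mem_cut_of_directed hdir (g := g) (g' := g')
  refine ⟨q, ⟨⟨?_, ?_, ?_⟩, ?_⟩, fun i ↦ ⟨hsub i, fun g hg ↦ (hq g i hg.1 hg.2).symm⟩⟩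
  · rintro g ⟨hg, hgH⟩
    obtain ⟨i, hi, -⟩ := hcommon hg hg
    exact hq g i hi hg ▸ (hP i).nodup g ⟨hi, hgH⟩
  · rintro g ⟨hg, hgH⟩ e he
    obtain ⟨i, hi, -⟩ := hcommon hg hg
    obtain ⟨heH, heI⟩ := (hP i).subset g ⟨hi, hgH⟩ e (hq g i hi hg ▸ he)
    exact ⟨heH, inside_mono (hsub i) heI⟩
  · rintro g ⟨hg, hgH⟩ g' ⟨hg', hgH'⟩ e he he'
    obtain ⟨i, hi, hi'⟩ := hcommon hg hg'
    exact (hP i).eq_of_mem g ⟨hi, hgH⟩ g' ⟨hi', hgH'⟩ e (hq g i hi hg ▸ he) (hq g' i hi' hg' ▸ he')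
  · intro g hgH u v huv hu hv
    obtain ⟨i, hi⟩ := Set.mem_iUnion.1 hu
    have hvi : v ∉ (P i).1 := fun h ↦ hv (hsub i h)
    obtain ⟨z, hz, hwalk⟩ := (hP i).walk g hgH u v huv hi hvi
    exact ⟨z, ⟨hz.1, hsub i hz.2⟩, hq g i ⟨u, v, huv, hi, hvi⟩ ⟨u, v, huv, hu, hv⟩ ▸ hwalk⟩

theorem Shelter.exists_sUnion {𝒳 : Set (Set V)} (h : ∀ X ∈ 𝒳, ∃ q, Shelter I H T X q) :
    ∃ q, Shelter I H T (⋃₀ 𝒳) q := by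
  let S := {P : Set V × (E → List E) // Shelter I H T P.1 P.2 ∧ P.1 ⊆ ⋃₀ 𝒳}
  have : Std.Refl fun P Q : S ↦ ShelterExtends I P.1 Q.1 := ⟨fun _ ↦ ⟨subset_rfl, fun _ _ ↦ rfl⟩⟩
  obtain ⟨M, hM⟩ := exists_maximal_of_chains_bounded
      (r := fun P Q : S ↦ ShelterExtends I P.1 Q.1) (fun c hc ↦ by
    obtain ⟨q, hq, hext⟩ := Shelter.exists_iUnion_of_directed (P := fun P : c ↦ P.1.1)
      (fun P ↦ P.1.2.1) (hc.directedOn.directed_val)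
    exact ⟨⟨_, hq, Set.iUnion_subset fun P ↦ P.1.2.2⟩, fun P hP ↦ hext ⟨P, hP⟩⟩)
    ShelterExtends.trans
  suffices M.1.1 = ⋃₀ 𝒳 from this ▸ ⟨_, M.2.1⟩
  refine M.2.2.antisymm (Set.sUnion_subset fun X hX ↦ ?_)
  obtain ⟨q', hq'⟩ := h X hX
  obtain ⟨q'', hq'', heq⟩ := M.2.1.exists_union hq'
  have hmax := hM ⟨(M.1.1 ∪ X, q''), hq'', Set.union_subset M.2.2 (Set.subset_sUnion_of_mem hX)⟩
    ⟨Set.subset_union_left, heq.mono Set.inter_subset_left⟩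
  exact Set.subset_union_right.trans hmax.1

end Shelters

section DeficientFamilies

variable {V : Type u} {E : Type v} {I : E → Sym2 V} {H H' : Set E} {t : V} {w : E → List E}
  {en : E → V} {T : Set V}

theorem star_mono (h : H' ⊆ H) : star I H' t ⊆ star I H t :=
  Set.inter_subset_inter_right _ h

namespace StarTrails

theorem restrict (F : StarTrails I H t w en) (h : H' ⊆ H)
    (hw : ∀ s ∈ star I H' t, ∀ e ∈ w s, e ∈ H') : StarTrails I H' t w en where
  nodup s hs := F.nodup s (star_mono h hs)
  subset := hw
  eq_of_mem s hs s' hs' := F.eq_of_mem s (star_mono h hs) s' (star_mono h hs')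
  walk s hs := F.walk s (star_mono h hs)
  head s hs := F.head s (star_mono h hs)

/-- An edge at `t` that ends a trail would also start one. -/
theorem ne_start (F : StarTrails I H t w en) {s : E} (hs : s ∈ star I H t) {l₁ l₂ : List E} {d : V}
    (hl : w s = l₁ ++ l₂) (hne : l₁ ≠ []) (hl₁ : EdgeWalk I t l₁ d) : d ≠ t := by
  rintro rfl
  obtain ⟨l, hsl : s :: l = w s⟩ := F.head s hs
  obtain ⟨-, y, hy, hI⟩ := mem_star.1 hs
  obtain _ | ⟨a, k⟩ := l₁
  · exact hne rfl
  obtain ⟨rfl, rfl⟩ : s = a ∧ l = k ++ l₂ := List.cons.inj (hsl.trans hl)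
  obtain ⟨m₁, f, m₂, x, z, rfl, -, hf, -, hx, hz⟩ :=
    (hl₁.of_cons hI).exists_crossing (X := {d}ᶜ) hy (by simp)
  obtain rfl : z = d := by simpa using hz
  have hfs : f ∈ w s := by simp [hl]
  have hfstar : f ∈ star I H z := mem_star.2 ⟨F.subset s hs f hfs, x, hx, hf.trans Sym2.eq_swap⟩
  obtain rfl := F.eq_of_mem f hfstar s hs f (F.mem_self hfstar) hfs
  have hnd := F.nodup f hs
  simp [hl] at hnd

theorem end_ne_start (F : StarTrails I H t w en) {s : E} (hs : s ∈ star I H t) : en s ≠ t :=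
  F.ne_start hs (List.append_nil _).symm (List.ne_nil_of_mem (F.mem_self hs)) (F.walk s hs)

end StarTrails

/-- The edges of `H` that lie on no trail of the family. -/
def unusedEdges (I : E → Sym2 V) (H : Set E) (t : V) (w : E → List E) : Set E :=
  {e ∈ H | ∀ s ∈ star I H t, e ∉ w s}

/-- The vertices reachable from `x` along unused edges. -/
def unusedComponent (I : E → Sym2 V) (H : Set E) (t : V) (w : E → List E) (x : V) : Set V :=
  {z | ∃ l, EdgeWalk I x l z ∧ ∀ e ∈ l, e ∈ unusedEdges I H t w}

theorem self_mem_unusedComponent {x : V} : x ∈ unusedComponent I H t w x :=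
  ⟨[], .nil x, by simp⟩

theorem mem_unusedComponent_of_edge {x a b : V} {e : E} (he : e ∈ unusedEdges I H t w)
    (hab : I e = s(a, b)) (ha : a ∈ unusedComponent I H t w x) :
    b ∈ unusedComponent I H t w x := by
  obtain ⟨l, hl, hlu⟩ := ha
  refine ⟨l ++ [e], hl.append (.single hab), ?_⟩
  simpa [or_imp, forall_and, he] using hlu

namespace StarTrails

theorem start_notMem_unusedComponent (F : StarTrails I H t w en) {x : V} (hx : x ≠ t) :
    t ∉ unusedComponent I H t w x := by
  rintro ⟨l, hl, hlu⟩
  obtain ⟨m₁, f, m₂, a, b, rfl, -, hf, -, ha, hb⟩ :=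
    hl.exists_crossing (X := {t}ᶜ) hx (by simp)
  obtain rfl : b = t := by simpa using hb
  obtain ⟨hfH, hunused⟩ := hlu f (by simp)
  have hfstar : f ∈ star I H b := mem_star.2 ⟨hfH, a, ha, hf.trans Sym2.eq_swap⟩
  exact hunused f hfstar (F.mem_self hfstar)

theorem exists_prefix_of_mem_cut (F : StarTrails I H t w en) {s e : E} {C : Set V}
    (hs : s ∈ star I H t) (hes : e ∈ w s) (he : e ∈ cut I C) :
    ∃ l₁ l₂ c, w s = l₁ ++ l₂ ∧ EdgeWalk I t l₁ c ∧ c ∈ C := by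
  obtain ⟨m₁, m₂, hm⟩ := List.append_of_mem hes
  obtain ⟨a, ha, hm₂⟩ := edgeWalk_append.1 (hm ▸ F.walk s hs)
  obtain ⟨b, hab, -⟩ := edgeWalk_cons.1 hm₂
  by_cases haC : a ∈ C
  · exact ⟨m₁, e :: m₂, a, hm, ha, haC⟩
  · have hbC : b ∈ C := by
      rw [mem_cut hab] at he
      tauto
    exact ⟨m₁ ++ [e], m₂, b, by simp [hm], ha.append (.single hab), hbC⟩

/-- If no other trail visited `C`, then the boundary of `C` would consist of the edges that the
trail ending in `C` uses, which are odd in number. -/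
theorem exists_visit (F : StarTrails I H t w en) (hIE : InnerEulerianOn I T H) (ht : t ∈ T)
    {s₀ : E} (hs₀ : s₀ ∈ star I H t) {C : Set V} (hCT : Disjoint C T) (hC₀ : en s₀ ∈ C)
    (hC : ∀ e ∈ unusedEdges I H t w, ∀ a b, I e = s(a, b) → a ∈ C → b ∈ C) :
    ∃ s₁ ∈ star I H t, s₁ ≠ s₀ ∧ ∃ l₁ l₂ c, w s₁ = l₁ ++ l₂ ∧ EdgeWalk I t l₁ c ∧ c ∈ C := by
  by_contra hcon
  have hused : cut I C ∩ H = cut I C ∩ {e | e ∈ w s₀} := by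
    refine Set.Subset.antisymm (fun e ⟨he, heH⟩ ↦ ⟨he, ?_⟩)
      (Set.inter_subset_inter_right _ (F.subset s₀ hs₀))
    by_contra hes₀
    have hunused : e ∈ unusedEdges I H t w := by
      refine ⟨heH, fun s hs hes ↦ hcon ⟨s, hs, ?_, F.exists_prefix_of_mem_cut hs hes he⟩⟩
      rintro rfl
      exact hes₀ hes
    obtain ⟨a, b, hab, ha, hb⟩ := he
    exact hb (hC e hunused a b hab ha)
  refine hIE C hCT ⟨?_, ?_⟩
  · exact hused ▸ (w s₀).finite_toSet.inter_of_right _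
  · have htC : t ∉ C := fun h ↦ Set.disjoint_left.1 hCT h ht
    rw [hused, ← Nat.not_even_iff_odd, (F.walk s₀ hs₀).even_ncard_cut (F.nodup s₀ hs₀)]
    tauto

end StarTrails

/-- An inner Eulerian edge set with a family of trails starting at `t`, all of which, except
possibly that of the edge `exception`, end in `T \ {t}`. -/
structure DeficientFamily (I : E → Sym2 V) (T : Set V) (t : V) where
  edges : Set E
  trail : E → List E
  endpoint : E → V
  exception : E
  innerEulerian : InnerEulerianOn I T edges
  starTrails : StarTrails I edges t trail endpoint
  endpoint_mem : ∀ s ∈ star I edges t, s ≠ exception → endpoint s ∈ T \ {t}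

namespace DeficientFamily

/-- `P.Step u Q`: the deficient family `Q` arises from `P` by removing the trail `u`, which
completes the exceptional trail of `P` if that starts at an edge of `P`. -/
structure Step (P : DeficientFamily I T t) (u : List E) (Q : DeficientFamily I T t) : Prop where
  edges_eq : Q.edges = P.edges \ {e | e ∈ u}
  complete : P.exception ∈ star I P.edges t → [P.exception] <+: u ∧ u.Nodup ∧
    (∀ e ∈ u, e ∈ P.edges) ∧ ∃ b ∈ T \ {t}, EdgeWalk I t u b
  mem_star : ∀ s ∈ star I P.edges t, s ≠ P.exception → s ∈ star I Q.edges t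
  trail_eq : ∀ s ∈ star I Q.edges t, s ≠ Q.exception → Q.trail s = P.trail s

theorem exists_step_of_unused (P : DeficientFamily I T t) (ht : t ∈ T)
    (hexc : P.exception ∈ star I P.edges t) {s₁ : E} (F : StarTrails I P.edges t w en)
    (hw : ∀ s, s ≠ s₁ → w s = P.trail s) (hen : ∀ s, s ≠ s₁ → en s = P.endpoint s)
    {v : List E} {b : V} (hv : ∀ e ∈ v, e ∈ unusedEdges I P.edges t w) (hnd : v.Nodup)
    (hwalk : EdgeWalk I (en P.exception) v b) (hb : b ∈ T \ {t}) : ∃ u Q, P.Step u Q := by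
  set s₀ := P.exception
  set u := w s₀ ++ v
  have hu : EdgeWalk I t u b := (F.walk s₀ hexc).append hwalk
  have hund : u.Nodup := (F.nodup s₀ hexc).append hnd fun e he hev ↦ (hv e hev).2 s₀ hexc he
  have huH : ∀ e ∈ u, e ∈ P.edges := fun e he ↦
    (List.mem_append.1 he).elim (F.subset s₀ hexc e) fun hev ↦ (hv e hev).1
  have hdisj : ∀ s ∈ star I P.edges t, s ≠ s₀ → ∀ e ∈ w s, e ∉ u := fun s hs hne e hes heu ↦
    (List.mem_append.1 heu).elim (fun he ↦ hne (F.eq_of_mem s hs s₀ hexc e hes he))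
      fun hev ↦ (hv e hev).2 s hs hes
  have hsub : star I (P.edges \ {e | e ∈ u}) t ⊆ star I P.edges t := star_mono Set.sdiff_subset
  have hne : ∀ s ∈ star I (P.edges \ {e | e ∈ u}) t, s ≠ s₀ := by
    rintro s ⟨-, -, hsu⟩ rfl
    exact hsu (List.mem_append_left _ (F.mem_self hexc))
  let Q : DeficientFamily I T t := {
    edges := P.edges \ {e | e ∈ u}
    trail := w
    endpoint := en
    exception := s₁
    innerEulerian := P.innerEulerian.diff_trail hu hund huH ht hb.1
    starTrails := F.restrict Set.sdiff_subset fun s hs e he ↦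
      ⟨F.subset s (hsub hs) e he, hdisj s (hsub hs) (hne s hs) e he⟩
    endpoint_mem s hs hs₁ := hen s hs₁ ▸ P.endpoint_mem s (hsub hs) (hne s hs) }
  refine ⟨u, Q, rfl,
    fun _ ↦ ⟨(F.head s₀ hexc).trans (List.prefix_append _ _), hund, huH, b, hb, hu⟩,
    fun s hs hne ↦ ⟨hs.1, hs.2, hdisj s hs hne s (F.mem_self hs)⟩, fun s _ hs₁ ↦ hw s hs₁⟩

theorem exists_step_of_visit (P : DeficientFamily I T t) (ht : t ∈ T)
    (hexc : P.exception ∈ star I P.edges t) {s₁ : E} (hs₁ : s₁ ∈ star I P.edges t)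
    (hne : s₁ ≠ P.exception) {l₁ l₂ : List E} {c : V} (hl : P.trail s₁ = l₁ ++ l₂)
    (hl₁ : EdgeWalk I t l₁ c)
    (hc : c ∈ unusedComponent I P.edges t P.trail (P.endpoint P.exception)) :
    ∃ u Q, P.Step u Q := by
  classical
  have F := P.starTrails
  have hct : c ≠ t := by
    rintro rfl
    exact F.start_notMem_unusedComponent (F.end_ne_start hexc) hc
  obtain ⟨D₀, hD₀, hunused⟩ := hc
  obtain ⟨D, hDnd, hDsub, hD⟩ := hD₀.exists_nodup
  have hnd : (l₁ ++ l₂).Nodup := hl ▸ F.nodup s₁ hs₁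
  have hmem : ∀ e ∈ l₂, e ∈ P.trail s₁ := fun e he ↦ hl ▸ List.mem_append_right _ he
  have hunused' : ∀ e ∈ D ++ l₂,
      e ∈ unusedEdges I P.edges t (Function.update P.trail s₁ l₁) := by
    intro e he
    rcases List.mem_append.1 he with he | he
    · refine ⟨(hunused e (hDsub he)).1, fun s hs hes ↦ ?_⟩
      obtain rfl | hss₁ := eq_or_ne s s₁
      · rw [Function.update_self] at hes
        exact (hunused e (hDsub he)).2 s hs (hl ▸ List.mem_append_left _ hes)
      · rw [Function.update_of_ne hss₁] at hes
        exact (hunused e (hDsub he)).2 s hs hes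
    · refine ⟨F.subset s₁ hs₁ e (hmem e he), fun s hs hes ↦ ?_⟩
      obtain rfl | hss₁ := eq_or_ne s s₁
      · rw [Function.update_self] at hes
        exact (List.nodup_append.1 hnd).2.2 e hes e he rfl
      · rw [Function.update_of_ne hss₁] at hes
        exact hss₁ (F.eq_of_mem s hs s₁ hs₁ e hes (hmem e he))
  refine P.exists_step_of_unused ht hexc (F.truncate hs₁ hl hl₁ hct)
    (fun s hs ↦ Function.update_of_ne hs _ _) (fun s hs ↦ Function.update_of_ne hs _ _) hunused'
    (hDnd.append hnd.of_append_right fun e heD he ↦ (hunused e (hDsub heD)).2 s₁ hs₁ (hmem e he))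
    ?_ (P.endpoint_mem s₁ hs₁ hne)
  rw [Function.update_of_ne hne.symm]
  exact hD.append (F.edgeWalk_suffix hs₁ hl hl₁)

theorem exists_step (P : DeficientFamily I T t) (ht : t ∈ T) : ∃ u Q, P.Step u Q := by
  by_cases hexc : P.exception ∈ star I P.edges t
  swap
  · exact ⟨[], P, by simp, fun h ↦ absurd h hexc, fun s hs _ ↦ hs, fun _ _ _ ↦ rfl⟩
  have F := P.starTrails
  have hstart : t ∉ unusedComponent I P.edges t P.trail (P.endpoint P.exception) :=
    F.start_notMem_unusedComponent (F.end_ne_start hexc)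
  by_cases hCT : Disjoint (unusedComponent I P.edges t P.trail (P.endpoint P.exception)) T
  · obtain ⟨s₁, hs₁, hne, l₁, l₂, c, hl, hl₁, hc⟩ := F.exists_visit P.innerEulerian ht hexc hCT
      self_mem_unusedComponent fun e he a b hab ↦ mem_unusedComponent_of_edge he hab
    exact P.exists_step_of_visit ht hexc hs₁ hne hl hl₁ hc
  · obtain ⟨z, ⟨l, hl, hunused⟩, hz⟩ := Set.not_disjoint_iff.1 hCT
    obtain ⟨l', hnd, hsub, hl'⟩ := hl.exists_nodup
    refine P.exists_step_of_unused ht hexc (s₁ := P.exception) F (fun _ _ ↦ rfl) (fun _ _ ↦ rfl)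
      (fun e he ↦ hunused e (hsub he)) hnd hl' ⟨hz, ?_⟩
    rintro rfl
    exact hstart ⟨l, hl, hunused⟩

section Iteration

variable {P : ℕ → DeficientFamily I T t} {u : ℕ → List E}

theorem antitone_edges (h : ∀ n, (P n).Step (u n) (P (n + 1))) :
    Antitone fun n ↦ (P n).edges :=
  antitone_nat_of_succ_le fun n ↦ (h n).edges_eq.trans_subset Set.sdiff_subset

theorem notMem_of_mem_edges (h : ∀ n, (P n).Step (u n) (P (n + 1))) {n m : ℕ} (hnm : n < m) {e : E}
    (he : e ∈ (P m).edges) : e ∉ u n := by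
  have he' : e ∈ (P (n + 1)).edges := antitone_edges h hnm he
  rw [(h n).edges_eq] at he'
  exact he'.2

theorem mem_star_and_trail_eq (h : ∀ n, (P n).Step (u n) (P (n + 1))) {s : E}
    (hs : s ∈ star I (P 0).edges t) (hne : ∀ n, s ∈ star I (P n).edges t → s ≠ (P n).exception)
    (n : ℕ) : s ∈ star I (P n).edges t ∧ (P n).trail s = (P 0).trail s := by
  induction n with
  | zero => exact ⟨hs, rfl⟩
  | succ n ih =>
    have hsn := (h n).mem_star s ih.1 (hne n ih.1)
    exact ⟨hsn, ((h n).trail_eq s hsn (hne _ hsn)).trans ih.2⟩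

/-- The trail eventually assigned to the edge `s`: the completed trail `u n` if `s` becomes
exceptional at time `n`, and the initial trail if it never does. -/
def IsFinalTrail (P : ℕ → DeficientFamily I T t) (u : ℕ → List E) (s : E) (l : List E) : Prop :=
  (∃ n, s ∈ star I (P n).edges t ∧ s = (P n).exception ∧ l = u n) ∨
    (∀ n, s ∈ star I (P n).edges t → s ≠ (P n).exception) ∧ l = (P 0).trail s

theorem exists_isFinalTrail (P : ℕ → DeficientFamily I T t) (u : ℕ → List E) (s : E) :
    ∃ l, IsFinalTrail P u s l := by
  by_cases h : ∃ n, s ∈ star I (P n).edges t ∧ s = (P n).exception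
  · obtain ⟨n, hs, hn⟩ := h
    exact ⟨u n, .inl ⟨n, hs, hn, rfl⟩⟩
  · exact ⟨(P 0).trail s, .inr ⟨fun n hs hn ↦ h ⟨n, hs, hn⟩, rfl⟩⟩

theorem IsFinalTrail.spec (h : ∀ n, (P n).Step (u n) (P (n + 1))) {s : E} {l : List E}
    (hl : IsFinalTrail P u s l) (hs : s ∈ star I (P 0).edges t) :
    [s] <+: l ∧ l.Nodup ∧ (∀ e ∈ l, e ∈ (P 0).edges) ∧ ∃ b ∈ T \ {t}, EdgeWalk I t l b := by
  rcases hl with ⟨n, hsn, rfl, rfl⟩ | ⟨hne, rfl⟩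
  · obtain ⟨hhead, hnd, hsub, hb⟩ := (h n).complete hsn
    exact ⟨hhead, hnd, fun e he ↦ antitone_edges h n.zero_le (hsub e he), hb⟩
  · have F := (P 0).starTrails
    exact ⟨F.head s hs, F.nodup s hs, F.subset s hs, _, (P 0).endpoint_mem s hs (hne 0 hs),
      F.walk s hs⟩

theorem disjoint_trail_of_never_exception (h : ∀ n, (P n).Step (u n) (P (n + 1))) {s : E}
    (hs : s ∈ star I (P 0).edges t) (hne : ∀ n, s ∈ star I (P n).edges t → s ≠ (P n).exception)
    (n : ℕ) : List.Disjoint ((P 0).trail s) (u n) := by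
  intro e he
  obtain ⟨hsn, htrail⟩ := mem_star_and_trail_eq h hs hne (n + 1)
  exact notMem_of_mem_edges h n.lt_succ_self ((P (n + 1)).starTrails.subset s hsn e (htrail ▸ he))

theorem IsFinalTrail.eq_of_mem (h : ∀ n, (P n).Step (u n) (P (n + 1))) {s s' e : E}
    {l l' : List E} (hl : IsFinalTrail P u s l) (hl' : IsFinalTrail P u s' l')
    (hs : s ∈ star I (P 0).edges t) (hs' : s' ∈ star I (P 0).edges t) (he : e ∈ l) (he' : e ∈ l') :
    s = s' := by
  rcases hl with ⟨n, hsn, hn, rfl⟩ | ⟨hne, rfl⟩ <;> rcases hl' with ⟨m, hsm, hm, rfl⟩ | ⟨hne', rfl⟩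
  · rcases lt_trichotomy n m with hnm | rfl | hmn
    · exact absurd he (notMem_of_mem_edges h hnm (((h m).complete (hm ▸ hsm)).2.2.1 e he'))
    · rw [hn, hm]
    · exact absurd he' (notMem_of_mem_edges h hmn (((h n).complete (hn ▸ hsn)).2.2.1 e he))
  · exact absurd he (disjoint_trail_of_never_exception h hs' hne' n he')
  · exact absurd he' (disjoint_trail_of_never_exception h hs hne m he)
  · exact (P 0).starTrails.eq_of_mem s hs s' hs' e he he'

end Iteration

theorem linkedTo (P : DeficientFamily I T t) (ht : t ∈ T) : LinkedTo I P.edges t (T \ {t}) := by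
  choose u next hstep using fun P : DeficientFamily I T t ↦ P.exists_step ht
  let Q : ℕ → DeficientFamily I T t := fun n ↦ next^[n] P
  have hQ : ∀ n, (Q n).Step (u (Q n)) (Q (n + 1)) := fun n ↦ by
    simpa only [Q, Function.iterate_succ_apply'] using hstep (Q n)
  choose w hw using exists_isFinalTrail Q fun n ↦ u (Q n)
  have hspec (s : E) (hs : s ∈ star I P.edges t) := (hw s).spec hQ hs
  have hex : ∀ s, ∃ b, s ∈ star I P.edges t → b ∈ T \ {t} ∧ EdgeWalk I t (w s) b := fun s ↦ by
    by_cases hs : s ∈ star I P.edges t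
    · obtain ⟨b, hb⟩ := (hspec s hs).2.2.2
      exact ⟨b, fun _ ↦ hb⟩
    · exact ⟨t, fun h ↦ absurd h hs⟩
  choose en hen using hex
  exact ⟨w, en, {
    nodup s hs := (hspec s hs).2.1
    subset s hs := (hspec s hs).2.2.1
    eq_of_mem s hs s' hs' _ := (hw s).eq_of_mem hQ (hw s') hs hs'
    walk s hs := (hen s hs).2
    head s hs := (hspec s hs).1 }, fun s hs ↦ (hen s hs).1⟩

end DeficientFamily

theorem StarTrails.linkedTo_of_forall_ne (F : StarTrails I H t w en) (hIE : InnerEulerianOn I T H)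
    (ht : t ∈ T) {s₀ : E} (hen : ∀ s ∈ star I H t, s ≠ s₀ → en s ∈ T \ {t}) :
    LinkedTo I H t (T \ {t}) :=
  DeficientFamily.linkedTo ⟨H, w, en, s₀, hIE, F, hen⟩ ht

end DeficientFamilies

section EdgeDeletion

variable {V : Type u} {E : Type v} {I J : E → Sym2 V} {H H' : Set E} {T B X : Set V}
  {t t' x y : V} {e f : E} {w w' : E → List E} {en en' : E → V}

theorem star_congr (h : ∀ e ∈ H, I e = J e) : star I H t = star J H t :=
  cut_inter_congr h

theorem notMem_star (he : I e = s(x, y)) (hx : x ≠ t) (hy : y ≠ t) : e ∉ star I H t := by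
  rintro ⟨hcut, -⟩
  exact (mem_cut he).1 hcut (iff_of_false hx hy)

theorem star_diff_of_disjoint {D : Set E} (h : Disjoint D (star I H t)) :
    star I (H \ D) t = star I H t :=
  (star_mono Set.sdiff_subset).antisymm fun _ hs ↦
    ⟨hs.1, hs.2, fun hsD ↦ Set.disjoint_left.1 h hsD hs⟩

theorem EdgeDisjointOn.exists_forall_mem_imp_eq {S : Set E} (h : EdgeDisjointOn H S w) (e : E) :
    ∃ s₀, ∀ s ∈ S, e ∈ w s → s = s₀ := by
  by_cases he : ∃ s ∈ S, e ∈ w s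
  · obtain ⟨s₀, hs₀, hes₀⟩ := he
    exact ⟨s₀, fun s hs hes ↦ h.eq_of_mem s hs s₀ hs₀ e hes hes₀⟩
  · exact ⟨e, fun s hs hes ↦ absurd ⟨s, hs, hes⟩ he⟩

theorem exists_maximal_prefix_disjoint (A : Set E) (l : List E) :
    ∃ l', l' <+: l ∧ (∀ k ∈ l', k ∉ A) ∧ (l' = l ∨ ∃ k ∈ A, l' ++ [k] <+: l) := by
  induction l with
  | nil => exact ⟨[], List.prefix_rfl, by simp, .inl rfl⟩
  | cons g l ih =>
    by_cases hg : g ∈ A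
    · exact ⟨[], List.nil_prefix, by simp, .inr ⟨g, hg, List.prefix_append [g] l⟩⟩
    · obtain ⟨l', hpre, hA, hl'⟩ := ih
      refine ⟨g :: l', (List.prefix_cons_inj g).2 hpre, by simpa [hg] using hA, ?_⟩
      exact hl'.imp (congrArg (g :: ·)) fun ⟨k, hk, h⟩ ↦ ⟨k, hk, (List.prefix_cons_inj g).2 h⟩

namespace StarTrails

theorem congr (F : StarTrails I H t w en) (h : ∀ e ∈ H, I e = J e) : StarTrails J H t w en where
  toEdgeDisjointOn := star_congr h ▸ F.toEdgeDisjointOn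
  walk s hs := by
    rw [← star_congr h] at hs
    exact (F.walk s hs).congr fun e he ↦ h e (F.subset s hs e he)
  head := star_congr h ▸ F.head

theorem traverses_congr (F : StarTrails I H t w en) (h : ∀ e ∈ H, I e = J e) {c d : V}
    (hf : Traverses I H t w c f d) : Traverses J H t w c f d := by
  obtain ⟨s, hs, l₁, l₂, hl, hl₁, hcd⟩ := hf
  have hwH : ∀ k ∈ l₁ ++ f :: l₂, I k = J k := fun k hk ↦ h k (F.subset s hs k (hl ▸ hk))
  exact ⟨s, star_congr h ▸ hs, l₁, l₂, hl,
    hl₁.congr fun k hk ↦ hwH k (List.mem_append_left _ hk), hwH f (by simp) ▸ hcd⟩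

theorem mono (F : StarTrails I H t w en) (hH : H ⊆ H') (hstar : star I H' t ⊆ star I H t) :
    StarTrails I H' t w en where
  toEdgeDisjointOn := F.toEdgeDisjointOn.mono hH hstar
  walk s hs := F.walk s (hstar hs)
  head s hs := F.head s (hstar hs)

open Classical in
theorem insert_edge (F : StarTrails I H t w en) (heH : e ∉ H) (he : I e = s(t, y)) :
    StarTrails I (insert e H) t (Function.update w e [e]) (Function.update en e y) := by
  have hstar : star I (insert e H) t \ {e} ⊆ star I H t :=
    fun s hs ↦ ⟨hs.1.1, hs.1.2.resolve_left hs.2⟩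
  refine ⟨(F.toEdgeDisjointOn.mono (Set.subset_insert e H) hstar).update (List.nodup_singleton e)
    (by simp) ?_, fun s hs ↦ ?_, fun s hs ↦ ?_⟩
  · rintro s hs hse k hk hks
    rw [List.mem_singleton.1 hk] at hks
    exact heH (F.subset s (hstar ⟨hs, hse⟩) e hks)
  · obtain rfl | hse := eq_or_ne s e
    · simpa only [Function.update_self] using .single he
    · simpa only [Function.update_of_ne hse] using F.walk s (hstar ⟨hs, hse⟩)
  · obtain rfl | hse := eq_or_ne s e
    · rw [Function.update_self]
    · simpa only [Function.update_of_ne hse] using F.head s (hstar ⟨hs, hse⟩)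

theorem diff_trail (F : StarTrails I H t w en) {s₁ : E} (hs₁ : s₁ ∈ star I H t) :
    StarTrails I (H \ {k | k ∈ w s₁}) t w en := by
  refine F.restrict Set.sdiff_subset fun s hs k hk ↦ ?_
  have hs' := star_mono Set.sdiff_subset hs
  refine ⟨F.subset s hs' k hk, fun hk₁ ↦ hs.2.2 ?_⟩
  obtain rfl := F.eq_of_mem s hs' s₁ hs₁ k hk hk₁
  exact F.mem_self hs'

theorem exists_truncation (F : StarTrails I H t w en) (A : Set E) :
    ∃ w' en', StarTrails I (H \ A) t w' en' ∧ ∀ s ∈ star I (H \ A) t, w' s <+: w s ∧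
      ((w' s = w s ∧ en' s = en s) ∨ ∃ k ∈ A, w' s ++ [k] <+: w s) := by
  choose w' hpre hA hw' using fun s ↦ exists_maximal_prefix_disjoint A (w s)
  have hwalk : ∀ s, ∃ c, s ∈ star I H t → EdgeWalk I t (w' s) c := fun s ↦ by
    by_cases hs : s ∈ star I H t
    · obtain ⟨l, hl⟩ := hpre s
      obtain ⟨c, hc, -⟩ := edgeWalk_append.1 (hl ▸ F.walk s hs)
      exact ⟨c, fun _ ↦ hc⟩
    · exact ⟨t, fun h ↦ absurd h hs⟩
  choose en' hen' using hwalk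
  have hsub : star I (H \ A) t ⊆ star I H t := star_mono Set.sdiff_subset
  have F₀ : StarTrails I (H \ A) t w' en' := {
    nodup s hs := (F.nodup s (hsub hs)).sublist (hpre s).sublist
    subset s hs k hk := ⟨F.subset s (hsub hs) k ((hpre s).subset hk), hA s k hk⟩
    eq_of_mem s hs s' hs' k hk hk' := F.eq_of_mem s (hsub hs) s' (hsub hs') k
      ((hpre s).subset hk) ((hpre s').subset hk')
    walk s hs := hen' s (hsub hs)
    head s hs := by
      refine List.prefix_of_prefix_length_le (F.head s (hsub hs)) (hpre s) ?_
      rw [List.length_singleton, Nat.one_le_iff_ne_zero, Ne, List.length_eq_zero_iff]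
      intro hnil
      rcases hw' s with h | ⟨k, hk, h⟩
      · exact List.ne_nil_of_mem (F.mem_self (hsub hs)) (h ▸ hnil)
      · obtain ⟨l, hl⟩ := F.head s (hsub hs)
        obtain ⟨m, hm⟩ := h
        simp only [hnil, List.nil_append, List.singleton_append] at hl hm
        exact hs.2.2 ((List.cons.inj (hm.trans hl.symm)).1 ▸ hk) }
  refine ⟨w', en', F₀, fun s hs ↦ ⟨hpre s, (hw' s).imp_left fun h ↦ ⟨h, ?_⟩⟩⟩
  exact (h ▸ F₀.walk s hs).unique (F.walk s (hsub hs))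

end StarTrails

namespace IsTight

theorem congr (hX : IsTight I H t w X) (F : StarTrails I H t w en) (h : ∀ e ∈ H, I e = J e) :
    IsTight J H t w X where
  mem := hX.mem
  traverses_out g hg u v huv hu hv :=
    F.traverses_congr h (hX.traverses_out g hg u v ((h g hg).trans huv) hu hv)
  not_traverses_in g u v hu hv hg :=
    hX.not_traverses_in g u v hu hv
      ((F.congr h).traverses_congr (fun k hk ↦ (h k hk).symm) hg)

theorem restrict (hX : IsTight I H t w X) (h : H' ⊆ H)
    (hw : ∀ s ∈ star I H t, ∀ e ∈ w s, e ∈ H' → s ∈ H') : IsTight I H' t w X where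
  mem := hX.mem
  traverses_out g hg u v huv hu hv := by
    obtain ⟨s, hs, l₁, l₂, hl, huse⟩ := hX.traverses_out g (h hg) u v huv hu hv
    exact ⟨s, ⟨hs.1, hw s hs g (by simp [hl]) hg⟩, l₁, l₂, hl, huse⟩
  not_traverses_in g u v hu hv := fun ⟨s, hs, hg⟩ ↦
    hX.not_traverses_in g u v hu hv ⟨s, star_mono h hs, hg⟩

open Classical in
theorem append_edge (hX : IsTight I (H \ {f}) t w X) (F : StarTrails I H t w en) {s : E}
    (hs : s ∈ star I H t) (hf : I f = s(en s, y)) (hfw : ∀ s ∈ star I H t, f ∉ w s)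
    (hsX : en s ∈ X) (hy : y ∉ X) : IsTight I H t (Function.update w s (w s ++ [f])) X := by
  have hstar : star I (H \ {f}) t = star I H t :=
    star_diff_of_disjoint (Set.disjoint_singleton_left.2 fun h ↦ hfw f h (F.mem_self h))
  have htrav {c g d} : Traverses I H t (Function.update w s (w s ++ [f])) c g d ↔
      Traverses I (H \ {f}) t w c g d ∨ g = f ∧ c = en s ∧ d = y := by
    rw [traverses_update_iff hs, usesDart_append (F.walk s hs), usesDart_cons hf,
      or_iff_left not_usesDart_nil, Traverses, hstar]
    constructor
    · rintro ((h | h) | ⟨r, hr, -, h⟩)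
      exacts [.inl ⟨s, hs, h⟩, .inr h, .inl ⟨r, hr, h⟩]
    · rintro (⟨r, hr, h⟩ | h)
      · obtain rfl | hrs := eq_or_ne r s
        exacts [.inl (.inl h), .inr ⟨r, hr, hrs, h⟩]
      · exact .inl (.inr h)
  refine ⟨hX.mem, fun g hg u v huv hu hv ↦ htrav.2 ?_, fun g u v hu hv h ↦ ?_⟩
  · obtain rfl | hgf := eq_or_ne g f
    · rcases Sym2.eq_iff.1 (hf.symm.trans huv) with ⟨rfl, rfl⟩ | ⟨rfl, rfl⟩
      exacts [.inr ⟨rfl, rfl, rfl⟩, absurd hu hy]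
    · exact .inl (hX.traverses_out g ⟨hg, hgf⟩ u v huv hu hv)
  · rcases htrav.1 h with h | ⟨-, rfl, rfl⟩
    exacts [hX.not_traverses_in g u v hu hv h, hv hsX]

end IsTight

theorem LinkedTo.mono {B' : Set V} (h : LinkedTo I H t B) (hB : B ⊆ B') : LinkedTo I H t B' := by
  obtain ⟨w, en, F, hen⟩ := h
  exact ⟨w, en, F, fun s hs ↦ hB (hen s hs)⟩

theorem LinkedTo.diff {D : Set E} (h : LinkedTo I H t B) (hB : t ∉ B)
    (hD : D ⊆ inside I B ∪ star I H t) : LinkedTo I (H \ D) t B := by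
  obtain ⟨w, en, F, hw⟩ := h.exists_avoidsBeforeEnd hB
  have hsub : star I (H \ D) t ⊆ star I H t := star_mono Set.sdiff_subset
  refine ⟨w, en, F.restrict Set.sdiff_subset fun s hs k hk ↦ ⟨F.subset s (hsub hs) k hk, ?_⟩,
    fun s hs ↦ (hw s (hsub hs)).1⟩
  intro hkD
  rcases hD hkD with hkB | hkt
  · exact (hw s (hsub hs)).2.notMem_inside (F.walk s (hsub hs)) k hk hkB
  · obtain rfl := F.eq_of_mem s (hsub hs) k hkt k hk (F.mem_self hkt)
    exact hs.2.2 hkD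

/-- The grapht on the edge set `H` is inner Eulerian and satisfies the linkability condition. -/
def Linkable (I : E → Sym2 V) (T : Set V) (H : Set E) : Prop :=
  InnerEulerianOn I T H ∧ ∀ t ∈ T, LinkedTo I H t (T \ {t})

namespace Linkable

theorem congr (h : Linkable I T H) (hIJ : ∀ e ∈ H, I e = J e) : Linkable J T H := by
  refine ⟨h.1.congr hIJ, fun t ht ↦ ?_⟩
  obtain ⟨w, en, F, hen⟩ := h.2 t ht
  exact ⟨w, en, F.congr hIJ, star_congr hIJ ▸ hen⟩

theorem diff_terminal_edge (h : Linkable I T H) (he : I e = s(t, x)) (heH : e ∈ H) (ht : t ∈ T)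
    (hx : x ∈ T) (hxt : x ≠ t) : Linkable I T (H \ {k | k ∈ [e]}) := by
  refine ⟨h.1.diff_trail (.single he) (List.nodup_singleton e) (by simpa using heH) ht hx,
    fun t' ht' ↦ (h.2 t' ht').diff (by simp) ?_⟩
  rintro k hk
  rw [List.mem_singleton.1 hk]
  obtain rfl | htt' := eq_or_ne t t'
  · exact .inr (mem_star.2 ⟨heH, x, hxt, he⟩)
  obtain rfl | hxt' := eq_or_ne x t'
  · exact .inr (mem_star.2 ⟨heH, t, hxt.symm, he.trans Sym2.eq_swap⟩)
  · exact .inl ((mem_inside he).2 ⟨⟨ht, htt'⟩, hx, hxt'⟩)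

end Linkable

end EdgeDeletion

section SplittingOff

variable {V : Type u} {E : Type v} {I : E → Sym2 V} {H : Set E} {T X : Set V} {t t' x y : V}
  {e f : E} {w w' : E → List E} {en en' : E → V} {s₁ s₂ : E}

open Classical in
/-- The incidence function after splitting off: `e` now joins `t` to `y`. It replaces an edge pair
`t x`, `x y` when the second edge of the pair is deleted as well. -/
noncomputable def splitOff (I : E → Sym2 V) (e : E) (t y : V) : E → Sym2 V :=
  Function.update I e s(t, y)

theorem splitOff_self : splitOff I e t y e = s(t, y) := by
  simp [splitOff]

theorem splitOff_of_ne {k : E} (h : k ≠ e) : splitOff I e t y k = I k := by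
  simp [splitOff, h]

/-- The edges `e = t x` and `f = x y` of `H` can be split off at the inner vertex `x`. -/
structure SplitPair (I : E → Sym2 V) (H : Set E) (T : Set V) (t x y : V) (e f : E) : Prop where
  left_eq : I e = s(t, x)
  right_eq : I f = s(x, y)
  left_mem : e ∈ H
  right_mem : f ∈ H
  ne : e ≠ f
  start_mem : t ∈ T
  mid_notMem : x ∉ T

theorem SplitPair.innerEulerianOn (h : SplitPair I H T t x y e f) (hIE : InnerEulerianOn I T H) :
    InnerEulerianOn (splitOff I e t y) T (H \ {f}) := by
  refine hIE.exchange (D := {k | k ∈ [e, f]}) (D' := {k | k ∈ [e]}) (List.finite_toSet _)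
    (List.finite_toSet _) ?_ ?_ ?_ (fun k hk ↦ (splitOff_of_ne ?_).symm) fun X _ ↦ ?_
  · simp [Set.subset_def, h.left_mem, h.right_mem]
  · simp [Set.subset_def, h.left_mem, h.ne]
  · ext k
    simp only [Set.mem_sdiff, Set.mem_ofPred_eq, List.mem_cons, List.not_mem_nil, or_false,
      Set.mem_singleton_iff]
    tauto
  · rintro rfl
    exact hk.2 List.mem_cons_self
  · rw [(EdgeWalk.cons h.left_eq (.single h.right_eq)).even_ncard_cut (by simp [h.ne]),
      (EdgeWalk.single splitOff_self).even_ncard_cut (List.nodup_singleton e)]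

theorem SplitPair.linkedTo_of_eq_end (h : SplitPair I H T t x y e f)
    (hL : Linkable I T H) (hy : y ∈ T) (hyt : y ≠ t) :
    LinkedTo (splitOff I e t y) (H \ {f}) y (T \ {y}) := by
  classical
  obtain ⟨w, en, F, hen⟩ := hL.2 y hy
  obtain ⟨w', en', F', hw'⟩ := F.exists_truncation {e, f}
  have hsplit : ∀ k ∈ H \ {e, f}, I k = splitOff I e t y k :=
    fun k hk ↦ (splitOff_of_ne fun hke ↦ hk.2 (.inl hke)).symm
  have hH : insert e (H \ {e, f}) = H \ {f} := by
    ext k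
    by_cases hk : k = e <;> simp [hk, h.ne, h.left_mem]
  have hfstar : f ∈ star I H y := mem_star.2
    ⟨h.right_mem, x, fun hxy ↦ h.mid_notMem (hxy ▸ hy), h.right_eq.trans Sym2.eq_swap⟩
  have F'' := (F'.congr hsplit).insert_edge (e := e) (y := t) (fun he ↦ he.2 (.inl rfl))
    (splitOff_self.trans Sym2.eq_swap)
  rw [hH] at F''
  obtain ⟨s₀, hs₀⟩ := F.exists_forall_mem_imp_eq e
  refine F''.linkedTo_of_forall_ne (h.innerEulerianOn hL.1) hy (s₀ := s₀) fun s hs hss₀ ↦ ?_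
  obtain rfl | hse := eq_or_ne s e
  · rw [Function.update_self]
    exact ⟨h.start_mem, hyt.symm⟩
  rw [Function.update_of_ne hse]
  have hs' : s ∈ star I (H \ {e, f}) y := by
    rw [star_congr hsplit]
    exact ⟨hs.1, (hH ▸ hs.2).resolve_left hse⟩
  have hsH : s ∈ star I H y := star_mono Set.sdiff_subset hs'
  obtain ⟨-, ⟨-, hends⟩ | ⟨k, rfl | rfl, hk⟩⟩ := hw' s hs'
  · exact hends ▸ hen s hsH
  · exact absurd (hs₀ s hsH (hk.subset (by simp))) hss₀
  · exact absurd (F.eq_of_mem s hsH k hfstar k (hk.subset (by simp)) (F.mem_self hfstar)) hs.2.2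

/-- A linkage `(w, en)` of `t'`, whose trails stop at their first terminal, and its truncation
`(w', en')` before the edges `e` and `f` of a split pair. -/
structure SplitTruncation (I : E → Sym2 V) (H : Set E) (T : Set V) (t y : V) (e f : E) (t' : V)
    (w : E → List E) (en : E → V) (w' : E → List E) (en' : E → V) : Prop where
  starTrails : StarTrails I H t' w en
  end_mem : ∀ s ∈ star I H t', en s ∈ T \ {t'}
  avoids : ∀ s ∈ star I H t', AvoidsBeforeEnd I (T \ {t'}) t' (w s)
  truncated : StarTrails (splitOff I e t y) (H \ {f}) t' w' en'
  star_eq : star (splitOff I e t y) (H \ {f}) t' = star I H t'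
  left_notMem : ∀ s ∈ star I H t', e ∉ w' s
  isPrefix : ∀ s ∈ star I H t', w' s <+: w s
  end_mem_or : ∀ s ∈ star I H t',
    en' s ∈ T \ {t'} ∨ w' s ++ [e] <+: w s ∨ w' s ++ [f] <+: w s

theorem SplitPair.exists_splitTruncation (h : SplitPair I H T t x y e f) (hL : Linkable I T H)
    (ht' : t' ∈ T) (htt' : t ≠ t') (hyt' : y ≠ t') :
    ∃ w en w' en', SplitTruncation I H T t y e f t' w en w' en' := by
  obtain ⟨w, en, F, hw⟩ := (hL.2 t' ht').exists_avoidsBeforeEnd (by simp)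
  obtain ⟨w', en', F', hw'⟩ := F.exists_truncation {e, f}
  have hxt' : x ≠ t' := fun hxt' ↦ h.mid_notMem (hxt' ▸ ht')
  have hsplit : ∀ k ∈ H \ {e, f}, I k = splitOff I e t y k :=
    fun k hk ↦ (splitOff_of_ne fun hke ↦ hk.2 (.inl hke)).symm
  have hdiff : (H \ {f}) \ {e} = H \ {e, f} := by
    rw [Set.sdiff_sdiff, Set.union_comm, Set.singleton_union]
  have hstarJ : star (splitOff I e t y) (H \ {f}) t' = star (splitOff I e t y) (H \ {e, f}) t' := by
    rw [← hdiff]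
    exact (star_diff_of_disjoint
      (Set.disjoint_singleton_left.2 (notMem_star splitOff_self htt' hyt'))).symm
  have hstarI : star I (H \ {e, f}) t' = star I H t' := by
    refine star_diff_of_disjoint (Set.disjoint_left.2 ?_)
    rintro k (rfl | rfl)
    exacts [notMem_star h.left_eq htt' hxt', notMem_star h.right_eq hxt' hyt']
  refine ⟨w, en, w', en', F, fun s hs ↦ (hw s hs).1, fun s hs ↦ (hw s hs).2,
    (F'.congr hsplit).mono ?_ hstarJ.le, ?_, ?_, ?_, ?_⟩
  · exact Set.sdiff_subset_sdiff_right (by simp)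
  · rw [hstarJ, ← star_congr hsplit, hstarI]
  · intro s hs he
    exact (F'.subset s (hstarI ▸ hs) e he).2 (.inl rfl)
  · exact fun s hs ↦ (hw' s (hstarI ▸ hs)).1
  · intro s hs
    rcases (hw' s (hstarI ▸ hs)).2 with ⟨-, hends⟩ | ⟨k, rfl | rfl, hk⟩
    exacts [.inl (hends ▸ (hw s hs).1), .inr (.inl hk), .inr (.inr hk)]

namespace SplitTruncation

theorem walk (hw : SplitTruncation I H T t y e f t' w en w' en') {s : E} (hs : s ∈ star I H t') :
    EdgeWalk I t' (w' s) (en' s) :=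
  (hw.truncated.walk s (hw.star_eq ▸ hs)).congr fun _ hk ↦
    splitOff_of_ne fun hke ↦ hw.left_notMem s hs (hke ▸ hk)

theorem linkedTo_of_forall_ne (hw : SplitTruncation I H T t y e f t' w en w' en')
    (hIE : InnerEulerianOn (splitOff I e t y) T (H \ {f})) (ht' : t' ∈ T) {s₀ : E}
    (h : ∀ s ∈ star I H t', s ≠ s₀ → en' s ∈ T \ {t'}) :
    LinkedTo (splitOff I e t y) (H \ {f}) t' (T \ {t'}) :=
  hw.truncated.linkedTo_of_forall_ne hIE ht' (hw.star_eq ▸ h)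

theorem exists_prefix (hw : SplitTruncation I H T t y e f t' w en w' en')
    (hIE : InnerEulerianOn (splitOff I e t y) T (H \ {f})) (ht' : t' ∈ T)
    (hno : ¬ LinkedTo (splitOff I e t y) (H \ {f}) t' (T \ {t'})) :
    (∃ s ∈ star I H t', w' s ++ [e] <+: w s) ∧ ∃ s ∈ star I H t', w' s ++ [f] <+: w s := by
  have hex (g : E) : ∃ s ∈ star I H t', en' s ∉ T \ {t'} ∧ g ∉ w s := by
    by_contra! hall
    obtain ⟨s₀, hs₀⟩ := hw.starTrails.exists_forall_mem_imp_eq g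
    refine hno (hw.linkedTo_of_forall_ne hIE ht' (s₀ := s₀) fun s hs hne ↦ ?_)
    by_contra hend
    exact hne (hs₀ s hs (hall s hs hend))
  constructor
  · obtain ⟨s, hs, hend, hfs⟩ := hex f
    refine ⟨s, hs, ((hw.end_mem_or s hs).resolve_left hend).resolve_right fun hpre ↦ ?_⟩
    exact hfs (hpre.subset (by simp))
  · obtain ⟨s, hs, hend, hes⟩ := hex e
    refine ⟨s, hs, ((hw.end_mem_or s hs).resolve_left hend).resolve_left fun hpre ↦ ?_⟩
    exact hes (hpre.subset (by simp))

theorem end_mem_of_ne (hw : SplitTruncation I H T t y e f t' w en w' en')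
    (hs₁ : s₁ ∈ star I H t') (hs₂ : s₂ ∈ star I H t') (he : w' s₁ ++ [e] <+: w s₁)
    (hf : w' s₂ ++ [f] <+: w s₂) {s : E} (hs : s ∈ star I H t') (h₁ : s ≠ s₁) (h₂ : s ≠ s₂) :
    en' s ∈ T \ {t'} := by
  rcases hw.end_mem_or s hs with hend | hpre | hpre
  · exact hend
  · exact absurd (hw.starTrails.eq_of_mem s hs s₁ hs₁ e (hpre.subset (by simp))
      (he.subset (by simp))) h₁
  · exact absurd (hw.starTrails.eq_of_mem s hs s₂ hs₂ f (hpre.subset (by simp))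
      (hf.subset (by simp))) h₂

theorem eq_append_left (hw : SplitTruncation I H T t y e f t' w en w' en')
    (h : SplitPair I H T t x y e f) (htt' : t ≠ t') (hs₁ : s₁ ∈ star I H t')
    (he : w' s₁ ++ [e] <+: w s₁) : w s₁ = w' s₁ ++ [e] ∧ en' s₁ = x := by
  obtain ⟨l, hl⟩ := he
  have htB : t ∈ T \ {t'} := ⟨h.start_mem, htt'⟩
  have hl' : w s₁ = w' s₁ ++ e :: l := by simp [← hl]
  obtain ⟨b, hb, -⟩ := edgeWalk_cons.1 (hw.starTrails.edgeWalk_suffix hs₁ hl' (hw.walk hs₁))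
  rcases Sym2.eq_iff.1 (h.left_eq.symm.trans hb) with ⟨rfl, rfl⟩ | ⟨rfl, rfl⟩
  · exact absurd htB (hw.avoids s₁ hs₁ hl' (hw.walk hs₁))
  · cases l with
    | nil => exact ⟨hl', rfl⟩
    | cons g l =>
      exact absurd htB (hw.avoids s₁ hs₁ hl.symm ((hw.walk hs₁).append (.single hb)))

theorem end_right_eq (hw : SplitTruncation I H T t y e f t' w en w' en')
    (h : SplitPair I H T t x y e f)
    (hIE : InnerEulerianOn (splitOff I e t y) T (H \ {f})) (ht' : t' ∈ T) (htt' : t ≠ t')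
    (hno : ¬ LinkedTo (splitOff I e t y) (H \ {f}) t' (T \ {t'})) (hs₁ : s₁ ∈ star I H t')
    (hs₂ : s₂ ∈ star I H t') (he : w' s₁ ++ [e] <+: w s₁) (hf : w' s₂ ++ [f] <+: w s₂) :
    en' s₂ = x := by
  classical
  obtain ⟨l, hl⟩ := hf
  have hl' : w s₂ = w' s₂ ++ f :: l := by simp [← hl]
  obtain ⟨b, hb, -⟩ := edgeWalk_cons.1 (hw.starTrails.edgeWalk_suffix hs₂ hl' (hw.walk hs₂))
  rcases Sym2.eq_iff.1 (h.right_eq.symm.trans hb) with ⟨hx, -⟩ | ⟨-, hy⟩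
  · exact hx.symm
  have F := hw.truncated.append_edge (e := e) (y := t) (hw.star_eq ▸ hs₂) ⟨h.left_mem, h.ne⟩
    (by rw [splitOff_self, ← hy, Sym2.eq_swap]) (hw.star_eq ▸ hw.left_notMem)
  refine absurd (F.linkedTo_of_forall_ne hIE ht' (s₀ := s₁) fun s hs hss₁ ↦ ?_) hno
  obtain rfl | hss₂ := eq_or_ne s s₂
  · rw [Function.update_self]
    exact ⟨h.start_mem, htt'⟩
  · rw [Function.update_of_ne hss₂]
    exact hw.end_mem_of_ne hs₁ hs₂ he ⟨l, hl⟩ (hw.star_eq ▸ hs) hss₁ hss₂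

end SplitTruncation

/-- The two trails `s₁` and `s₂` that prevent `t'` from being linked after splitting off: the
former passes through `e`, the latter through `f`, and their truncations both end at `x`. -/
structure SplitObstruction (I : E → Sym2 V) (H : Set E) (T : Set V) (t x y : V) (e f : E) (t' : V)
    (w : E → List E) (en : E → V) (w' : E → List E) (en' : E → V) (s₁ s₂ : E) : Prop
    extends SplitTruncation I H T t y e f t' w en w' en' where
  left_mem_star : s₁ ∈ star I H t'
  right_mem_star : s₂ ∈ star I H t'
  left_eq_append : w s₁ = w' s₁ ++ [e]
  right_isPrefix : w' s₂ ++ [f] <+: w s₂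
  left_end : en' s₁ = x
  right_end : en' s₂ = x

theorem SplitPair.exists_splitObstruction (h : SplitPair I H T t x y e f) (hL : Linkable I T H)
    (hyt : y ≠ t) (ht' : t' ∈ T) (htt' : t ≠ t')
    (hno : ¬ LinkedTo (splitOff I e t y) (H \ {f}) t' (T \ {t'})) :
    ∃ w en w' en' s₁ s₂, SplitObstruction I H T t x y e f t' w en w' en' s₁ s₂ := by
  have hyt' : y ≠ t' := by
    rintro rfl
    exact hno (h.linkedTo_of_eq_end hL ht' hyt)
  have hIE := h.innerEulerianOn hL.1
  obtain ⟨w, en, w', en', hw⟩ := h.exists_splitTruncation hL ht' htt' hyt'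
  obtain ⟨⟨s₁, hs₁, he⟩, s₂, hs₂, hf⟩ := hw.exists_prefix hIE ht' hno
  obtain ⟨hwe, hend⟩ := hw.eq_append_left h htt' hs₁ he
  exact ⟨w, en, w', en', s₁, s₂, hw, hs₁, hs₂, hwe, hf, hend,
    hw.end_right_eq h hIE ht' htt' hno hs₁ hs₂ he hf⟩

namespace SplitObstruction

theorem exists_isTight (hw : SplitObstruction I H T t x y e f t' w en w' en' s₁ s₂)
    (h : SplitPair I H T t x y e f) (hIE : InnerEulerianOn I T H) (ht' : t' ∈ T) (htt' : t ≠ t')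
    (hno : ¬ LinkedTo (splitOff I e t y) (H \ {f}) t' (T \ {t'})) :
    ∃ X, x ∈ X ∧ y ∉ X ∧ Disjoint X (T \ {t'}) ∧
      IsTight (splitOff I e t y) (H \ {f}) t' w' X := by
  have he : w' s₁ ++ [e] <+: w s₁ := hw.left_eq_append ▸ List.prefix_rfl
  obtain ⟨z, hz, w₁, en₁, π, haug⟩ | ⟨X, hxX, hXT, hX⟩ :=
    hw.truncated.exists_isAugmentation_or_isTight (B := T \ {t'})
      (hw.star_eq ▸ hw.left_mem_star) (by simp)
  · refine absurd (haug.starTrails.linkedTo_of_forall_ne (h.innerEulerianOn hIE) ht'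
      (s₀ := π.symm s₂) fun s hs hne ↦ ?_) hno
    obtain hπ | hπ := eq_or_ne (π s) s₁
    · exact haug.end_of_eq s hs hπ ▸ hz
    · rw [haug.end_of_ne s hs hπ]
      exact hw.end_mem_of_ne hw.left_mem_star hw.right_mem_star he hw.right_isPrefix
        (hw.star_eq ▸ (haug.apply_mem_star s).2 hs) hπ fun hπ₂ ↦ hne (by simp [← hπ₂])
  · refine ⟨X, hw.left_end ▸ hxX, fun hy ↦ ?_, hXT, hX⟩
    have htX : t ∉ X := fun ht ↦ Set.disjoint_left.1 hXT ht ⟨h.start_mem, htt'⟩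
    obtain ⟨s, hs, l₁, l₂, hl, -⟩ := hX.traverses_out e ⟨h.left_mem, h.ne⟩ y t
      (splitOff_self.trans Sym2.eq_swap) hy htX
    exact hw.left_notMem s (hw.star_eq ▸ hs) (by simp [hl])

theorem start_notMem_left (hw : SplitObstruction I H T t x y e f t' w en w' en' s₁ s₂) {s k : E}
    (hs : s ∈ star I H t') (hk : k ∈ w' s) (hk₁ : k ∉ w s₁) : s ∉ w s₁ := by
  intro hss₁
  obtain rfl := hw.starTrails.eq_of_mem s hs s₁ hw.left_mem_star s (hw.starTrails.mem_self hs) hss₁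
  exact hk₁ ((hw.isPrefix s hs).subset hk)

theorem notMem_left (hw : SplitObstruction I H T t x y e f t' w en w' en' s₁ s₂) {s k : E}
    (hs : s ∈ star I H t') (hk : k ∈ w s) (hss₁ : s ∉ w s₁) : k ∉ w s₁ := by
  intro hk₁
  obtain rfl := hw.starTrails.eq_of_mem s hs s₁ hw.left_mem_star k hk hk₁
  exact hss₁ (hw.starTrails.mem_self hs)

theorem right_notMem_left (hw : SplitObstruction I H T t x y e f t' w en w' en' s₁ s₂)
    (hef : e ≠ f) : s₂ ∉ w s₁ := by
  intro h
  obtain rfl := hw.starTrails.eq_of_mem s₂ hw.right_mem_star s₁ hw.left_mem_star s₂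
    (hw.starTrails.mem_self hw.right_mem_star) h
  have hpre := hw.right_isPrefix
  rw [hw.left_eq_append, List.prefix_append_right_inj] at hpre
  exact hef (List.singleton_inj.1 (hpre.eq_of_length rfl)).symm

theorem starTrails_and_isTight_diff
    (hw : SplitObstruction I H T t x y e f t' w en w' en' s₁ s₂)
    (hX : IsTight (splitOff I e t y) (H \ {f}) t' w' X) :
    StarTrails I ((H \ {k | k ∈ w s₁}) \ {f}) t' w' en' ∧
      IsTight I ((H \ {k | k ∈ w s₁}) \ {f}) t' w' X := by
  have hsub : (H \ {k | k ∈ w s₁}) \ {f} ⊆ H \ {f} := Set.sdiff_subset_sdiff_left Set.sdiff_subset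
  have hsplit : ∀ k ∈ (H \ {k | k ∈ w s₁}) \ {f}, splitOff I e t y k = I k :=
    fun k hk ↦ splitOff_of_ne fun hke ↦ hk.1.2 (by simp [hke, hw.left_eq_append])
  have F : StarTrails (splitOff I e t y) ((H \ {k | k ∈ w s₁}) \ {f}) t' w' en' := by
    refine hw.truncated.restrict hsub fun s hs k hk ↦ ?_
    have hs' := star_mono hsub hs
    have hkH := hw.truncated.subset s hs' k hk
    rw [hw.star_eq] at hs'
    exact ⟨⟨hkH.1, hw.notMem_left hs' ((hw.isPrefix s hs').subset hk) hs.2.1.2⟩, hkH.2⟩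
  exact ⟨F.congr hsplit, (hX.restrict hsub fun s hs k hk hkH ↦
    ⟨⟨hs.2.1, hw.start_notMem_left (hw.star_eq ▸ hs) hk hkH.1.2⟩, hs.2.2⟩).congr F hsplit⟩

theorem exists_shelter (hw : SplitObstruction I H T t x y e f t' w en w' en' s₁ s₂)
    (h : SplitPair I H T t x y e f) (ht' : t' ∈ T)
    (hX : IsTight (splitOff I e t y) (H \ {f}) t' w' X) (hx : x ∈ X) (hy : y ∉ X) :
    ∃ q, Shelter I (H \ {k | k ∈ w s₁}) T X q := by
  obtain ⟨F, hX'⟩ := hw.starTrails_and_isTight_diff hX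
  have hs₂ : s₂ ∈ star I (H \ {k | k ∈ w s₁}) t' :=
    ⟨hw.right_mem_star.1, hw.right_mem_star.2, hw.right_notMem_left h.ne⟩
  have hfG : f ∈ H \ {k | k ∈ w s₁} :=
    ⟨h.right_mem, hw.notMem_left hw.right_mem_star (hw.right_isPrefix.subset (by simp)) hs₂.2.2⟩
  have hstar : star I ((H \ {k | k ∈ w s₁}) \ {f}) t' = star I (H \ {k | k ∈ w s₁}) t' :=
    star_diff_of_disjoint (Set.disjoint_singleton_left.2 (notMem_star h.right_eq
      (fun hxt' ↦ h.mid_notMem (hxt' ▸ ht')) fun hyt' ↦ hy (hyt' ▸ hX.mem)))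
  have hfw : ∀ s ∈ star I (H \ {k | k ∈ w s₁}) t', f ∉ w' s :=
    fun s hs hf ↦ (F.subset s (hstar ▸ hs) f hf).2 rfl
  have hf : I f = s(en' s₂, y) := hw.right_end ▸ h.right_eq
  have F' := F.mono Set.sdiff_subset hstar.ge
  exact (F'.append_edge hs₂ hfG hf hfw).exists_shelter_of_isTight
    (hX'.append_edge F' hs₂ hf hfw (hw.right_end ▸ hx) hy) ht'

theorem mem_inside (hw : SplitObstruction I H T t x y e f t' w en w' en' s₁ s₂)
    (hX : IsTight (splitOff I e t y) (H \ {f}) t' w' X) (hx : x ∈ X) {k : E} (hk : k ∈ w' s₁) :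
    k ∈ inside I X := by
  have hs₁ := hw.star_eq ▸ hw.left_mem_star
  have hmem := hX.mem_inside_of_mem_prefix hs₁ (List.append_nil _).symm
    (hw.left_end ▸ hw.truncated.walk s₁ hs₁) hx k hk
  have hke : k ≠ e := fun hke ↦ hw.left_notMem s₁ hw.left_mem_star (hke ▸ hk)
  rwa [inside, Set.mem_ofPred_eq, splitOff_of_ne hke] at hmem

/-- A tight set `X` lets every other terminal bypass the trail of `s₁`, which stays inside `X` up
to its last edge `e`. -/
theorem linkable (hw : SplitObstruction I H T t x y e f t' w en w' en' s₁ s₂)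
    (h : SplitPair I H T t x y e f) (hL : Linkable I T H) (ht' : t' ∈ T) (htt' : t ≠ t')
    (hno : ¬ LinkedTo (splitOff I e t y) (H \ {f}) t' (T \ {t'})) :
    Linkable I T (H \ {k | k ∈ w s₁}) := by
  have F := hw.starTrails
  have hs₁ := hw.left_mem_star
  refine ⟨hL.1.diff_trail (F.walk s₁ hs₁) (F.nodup s₁ hs₁) (F.subset s₁ hs₁) ht'
    (hw.end_mem s₁ hs₁).1, fun t'' ht'' ↦ ?_⟩
  obtain rfl | ht''t' := eq_or_ne t'' t'
  · exact ⟨w, en, F.diff_trail hs₁, fun s hs ↦ hw.end_mem s (star_mono Set.sdiff_subset hs)⟩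
  obtain ⟨X, hx, hy, hXT, hX⟩ := hw.exists_isTight h hL.1 ht' htt' hno
  obtain ⟨q, hq⟩ := hw.exists_shelter h ht' hX hx hy
  have ht''X : t'' ∉ X := fun hmem ↦ Set.disjoint_left.1 hXT hmem ⟨ht'', ht''t'⟩
  refine hq.linkedTo ht''X (((hL.2 t'' ht'').mono Set.subset_union_left).diff
    (by simp [ht''X]) fun k hk ↦ ?_)
  rw [Set.mem_ofPred_eq, hw.left_eq_append, List.mem_append, List.mem_singleton] at hk
  rcases hk with hk | rfl
  · exact .inl (inside_mono Set.subset_union_right (hw.mem_inside hX hx hk))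
  · obtain rfl | htt'' := eq_or_ne t t''
    · exact .inr (mem_star.2 ⟨h.left_mem, x, fun hxt ↦ h.mid_notMem (hxt ▸ ht''), h.left_eq⟩)
    · exact .inl ((Linkage.mem_inside h.left_eq).2 ⟨.inl ⟨h.start_mem, htt''⟩, .inr hx⟩)

end SplitObstruction

/-- The first edge `e = t x` of a trail extends, by a trail `p` from `x` that stops at the first
terminal it meets, to a trail whose removal preserves linkability. -/
def HasLinkableContinuation (I : E → Sym2 V) (H : Set E) (T : Set V) (t x : V) (e : E) : Prop :=
  ∃ p b, EdgeWalk I x p b ∧ p.Nodup ∧ (∀ k ∈ p, k ∈ H ∧ k ≠ e) ∧ b ∈ T ∧ b ≠ t ∧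
    AvoidsBeforeEnd I T x p ∧ Linkable I T (H \ {k | k ∈ e :: p})

theorem SplitObstruction.hasLinkableContinuation
    (hw : SplitObstruction I H T t x y e f t' w en w' en' s₁ s₂) (ht' : t' ∈ T) (htt' : t ≠ t')
    (hL : Linkable I T (H \ {k | k ∈ w s₁})) :
    HasLinkableContinuation I H T t x e := by
  have F := hw.starTrails
  have hs₁ := hw.left_mem_star
  have hwalk : EdgeWalk I t' (w' s₁) x := hw.left_end ▸ hw.walk hs₁
  have hnd : (w' s₁ ++ [e]).Nodup := hw.left_eq_append ▸ F.nodup s₁ hs₁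
  refine ⟨(w' s₁).reverse, t', hwalk.reverse, List.nodup_reverse.2 hnd.of_append_left,
    fun k hk ↦ ?_, ht', htt'.symm, ?_, ?_⟩
  · rw [List.mem_reverse] at hk
    exact ⟨F.subset s₁ hs₁ k ((hw.isPrefix s₁ hs₁).subset hk),
      fun hke ↦ hw.left_notMem s₁ hs₁ (hke ▸ hk)⟩
  · intro m g m' d hm hd hdT
    have hm' : w' s₁ = (m'.reverse ++ [g]) ++ m.reverse := by
      rw [← List.reverse_reverse (w' s₁), hm]
      simp
    obtain ⟨k, l, hkl⟩ := List.exists_cons_of_ne_nil (List.append_ne_nil_of_right_ne_nil m.reverse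
      (List.cons_ne_nil e []))
    have hl : w s₁ = (m'.reverse ++ [g]) ++ k :: l := by
      rw [hw.left_eq_append, hm', List.append_assoc, hkl]
    have hd' : EdgeWalk I t' (m'.reverse ++ [g]) d := by
      obtain ⟨c, hc, hcm⟩ := edgeWalk_append.1 (hm' ▸ hwalk)
      have hm_rev := hcm.reverse
      rw [List.reverse_reverse] at hm_rev
      exact hd.unique hm_rev ▸ hc
    exact hw.avoids s₁ hs₁ hl hd' ⟨hdT, F.ne_start hs₁ hl (by simp) hd'⟩
  · convert hL using 3
    ext k
    rw [hw.left_eq_append, List.mem_append, List.mem_singleton, List.mem_cons, List.mem_reverse,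
      or_comm]

theorem Linkable.hasLinkableContinuation_of_mem (hL : Linkable I T H) (he : I e = s(t, x))
    (heH : e ∈ H) (ht : t ∈ T) (hx : x ∈ T) (hxt : x ≠ t) :
    HasLinkableContinuation I H T t x e :=
  ⟨[], x, .nil x, List.nodup_nil, by simp, hx, hxt, avoidsBeforeEnd_nil,
    hL.diff_terminal_edge he heH ht hx hxt⟩

namespace SplitPair

theorem star_eq (h : SplitPair I H T t x y e f) (hyt : y ≠ t) (F : StarTrails I H t w en)
    (hf : f ∈ w e) : star (splitOff I e t y) (H \ {f}) t = star I H t := by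
  have hxt : x ≠ t := fun hxt ↦ h.mid_notMem (hxt ▸ h.start_mem)
  have he : e ∈ star I H t := mem_star.2 ⟨h.left_mem, x, hxt, h.left_eq⟩
  have hfstar : f ∉ star I H t := fun hfs ↦
    h.ne (F.eq_of_mem e he f hfs f hf (F.mem_self hfs))
  rw [← star_diff_of_disjoint (Set.disjoint_singleton_left.2 hfstar)]
  ext s
  obtain rfl | hse := eq_or_ne s e
  · simp [mem_star, h.left_mem, h.ne, splitOff_self, h.left_eq, hxt, hyt]
  · simp [mem_star, splitOff_of_ne hse]

open Classical in
theorem starTrails_shorten (h : SplitPair I H T t x y e f) (hyt : y ≠ t)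
    (F : StarTrails I H t w en) {l : List E} (hw : w e = e :: f :: l) :
    StarTrails (splitOff I e t y) (H \ {f}) t (Function.update w e (e :: l)) en := by
  have hxt : x ≠ t := fun hxt ↦ h.mid_notMem (hxt ▸ h.start_mem)
  have he : e ∈ star I H t := mem_star.2 ⟨h.left_mem, x, hxt, h.left_eq⟩
  have hnd : (e :: f :: l).Nodup := hw ▸ F.nodup e he
  have hfe {s} (hs : s ∈ star I H t) (hse : s ≠ e) : e ∉ w s ∧ f ∉ w s :=
    ⟨fun hes ↦ hse (F.eq_of_mem s hs e he e hes (by simp [hw])),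
      fun hfs ↦ hse (F.eq_of_mem s hs e he f hfs (by simp [hw]))⟩
  have F' : EdgeDisjointOn H (star I H t) (Function.update w e (e :: l)) := by
    refine F.toEdgeDisjointOn.of_sublist fun s _ ↦ ?_
    obtain rfl | hse := eq_or_ne s e
    · rw [Function.update_self, hw]
      exact (List.sublist_cons_self f l).cons_cons s
    · rw [Function.update_of_ne hse]
  refine ⟨⟨?_, fun s hs k hk ↦ ⟨?_, ?_⟩, ?_⟩, fun s hs ↦ ?_, fun s hs ↦ ?_⟩ <;>
    simp only [h.star_eq hyt F (show f ∈ w e by simp [hw])] at *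
  · exact F'.nodup
  · exact F'.subset s hs k hk
  · rintro rfl
    obtain rfl | hse := eq_or_ne s e
    · rw [Function.update_self] at hk
      simp only [List.nodup_cons, List.mem_cons, not_or] at hnd hk
      exact hk.elim (hnd.1.1 ·.symm) hnd.2.1
    · rw [Function.update_of_ne hse] at hk
      exact (hfe hs hse).2 hk
  · exact F'.eq_of_mem
  · obtain rfl | hse := eq_or_ne s e
    · rw [Function.update_self]
      have hl := ((hw ▸ F.walk s hs : EdgeWalk I t (s :: f :: l) (en s)).of_cons h.left_eq).of_cons
        h.right_eq
      refine .cons splitOff_self (hl.congr fun k hk ↦ (splitOff_of_ne ?_).symm)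
      rintro rfl
      exact (List.nodup_cons.1 hnd).1 (.tail _ hk)
    · rw [Function.update_of_ne hse]
      refine (F.walk s hs).congr fun k hk ↦ (splitOff_of_ne ?_).symm
      rintro rfl
      exact (hfe hs hse).1 hk
  · obtain rfl | hse := eq_or_ne s e
    · rw [Function.update_self]
      exact List.prefix_append [s] l
    · rw [Function.update_of_ne hse]
      exact F.head s hs

/-- Undoing a split: the continuation of the new edge `e = t y` is prolonged by `f = x y`. -/
theorem hasLinkableContinuation (h : SplitPair I H T t x y e f)
    (hc : HasLinkableContinuation (splitOff I e t y) (H \ {f}) T t y e) :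
    HasLinkableContinuation I H T t x e := by
  obtain ⟨p, b, hwalk, hnd, hp, hbT, hbt, havoid, hL⟩ := hc
  have hpI : ∀ k ∈ p, splitOff I e t y k = I k := fun k hk ↦ splitOff_of_ne (hp k hk).2
  refine ⟨f :: p, b, .cons h.right_eq (hwalk.congr hpI), ?_, ?_, hbT, hbt,
    (avoidsBeforeEnd_cons h.right_eq).2 ⟨h.mid_notMem, fun m k m' d hm hd ↦ ?_⟩, ?_⟩
  · exact List.nodup_cons.2 ⟨fun hf ↦ (hp f hf).1.2 rfl, hnd⟩
  · simpa [h.right_mem, h.ne.symm] using fun k hk ↦ ⟨(hp k hk).1.1, (hp k hk).2⟩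
  · exact havoid hm (hd.congr fun g hg ↦ (hpI g (by simp [hm, hg])).symm)
  · have hH : (H \ {f}) \ {k | k ∈ e :: p} = H \ {k | k ∈ e :: f :: p} := by
      ext k
      simp only [Set.mem_sdiff, Set.mem_ofPred_eq, List.mem_cons, Set.mem_singleton_iff]
      tauto
    exact hH ▸ hL.congr fun k hk ↦ splitOff_of_ne fun hke ↦ hk.2 (by simp [hke])

end SplitPair

/-- Splitting off the first two edges of the trail that starts with `e` shortens it, so that
induction applies unless the splitting destroys linkability. -/
theorem StarTrails.hasLinkableContinuation (hL : Linkable I T H) (F : StarTrails I H t w en)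
    (ht : t ∈ T) (hen : ∀ s ∈ star I H t, en s ∈ T \ {t}) (he : e ∈ star I H t)
    (hex : I e = s(t, x)) {l : List E} (hl : w e = e :: l) :
    HasLinkableContinuation I H T t x e := by
  classical
  induction l generalizing I H w x with
  | nil =>
    have hx : en e = x := (hl ▸ F.walk e he).unique (.single hex)
    exact hL.hasLinkableContinuation_of_mem hex he.2 ht (hx ▸ (hen e he).1) (hx ▸ (hen e he).2)
  | cons f l ih =>
    have hwalk : EdgeWalk I t (e :: f :: l) (en e) := hl ▸ F.walk e he
    have hxt : x ≠ t := F.ne_start he (l₁ := [e]) hl (by simp) (.single hex)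
    by_cases hx : x ∈ T
    · exact hL.hasLinkableContinuation_of_mem hex he.2 ht hx hxt
    obtain ⟨y, hf, -⟩ := edgeWalk_cons.1 (hwalk.of_cons hex)
    have hyt : y ≠ t := F.ne_start he (l₁ := [e, f]) hl (by simp) (.cons hex (.single hf))
    have hef : e ≠ f := by
      rintro rfl
      simpa [hl] using F.nodup e he
    have h : SplitPair I H T t x y e f :=
      ⟨hex, hf, he.2, F.subset e he f (by simp [hl]), hef, ht, hx⟩
    have hstar := h.star_eq hyt F (show f ∈ w e by simp [hl])
    have F' := h.starTrails_shorten hyt F hl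
    by_cases hall : ∀ t' ∈ T, LinkedTo (splitOff I e t y) (H \ {f}) t' (T \ {t'})
    · exact h.hasLinkableContinuation (ih ⟨h.innerEulerianOn hL.1, hall⟩ F' (hstar ▸ hen)
        (hstar ▸ he) splitOff_self (Function.update_self ..))
    · push Not at hall
      obtain ⟨t', ht', hno⟩ := hall
      have htt' : t ≠ t' := by
        rintro rfl
        exact hno ⟨_, _, F', hstar ▸ hen⟩
      obtain ⟨w, en, w', en', s₁, s₂, hw⟩ := h.exists_splitObstruction hL hyt ht' htt' hno
      exact hw.hasLinkableContinuation ht' htt' (hw.linkable h hL ht' htt' hno)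

theorem Linkable.exists_hasLinkableContinuation (hL : Linkable I T H) (ht : t ∈ T)
    (he : e ∈ star I H t) : ∃ x, I e = s(t, x) ∧ HasLinkableContinuation I H T t x e := by
  obtain ⟨w, en, F, hen⟩ := hL.2 t ht
  obtain ⟨-, x, -, hex⟩ := mem_star.1 he
  obtain ⟨l, hl⟩ := F.head e he
  exact ⟨x, hex, F.hasLinkableContinuation hL ht hen he hex hl.symm⟩

end SplittingOff

section Countable

variable {V : Type u} {E : Type v} {I : E → Sym2 V} {H : Set E} {T B X : Set V} {t : V}
  {w w' : E → List E} {en en' : E → V} {s₀ : E}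

/-- A trail between two distinct terminals that meets no terminal in between. -/
def IsTerminalTrail (I : E → Sym2 V) (T : Set V) (l : List E) : Prop :=
  ∃ a ∈ T, ∃ b ∈ T, a ≠ b ∧ EdgeWalk I a l b ∧ l.Nodup ∧
    ∀ m₁ m₂ d, l = m₁ ++ m₂ → m₁ ≠ [] → m₂ ≠ [] → EdgeWalk I a m₁ d → d ∉ T

/-- A perfect linkage of the subgraph `H` by edge-disjoint trails rather than paths, so that no
loops have to be erased while it is built. -/
def HasPerfectLinkage (I : E → Sym2 V) (T : Set V) (H : Set E) : Prop :=
  ∃ P : Set (List E), (∀ l ∈ P, IsTerminalTrail I T l ∧ ∀ e ∈ l, e ∈ H) ∧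
    (∀ l ∈ P, ∀ l' ∈ P, ∀ e, e ∈ l → e ∈ l' → l = l') ∧
    ∀ t ∈ T, ∀ e ∈ star I H t, ∃ l ∈ P, e ∈ l

theorem HasPerfectLinkage.iUnion {ι : Type*} {D : ι → Set E}
    (hD : ∀ i, HasPerfectLinkage I T (D i)) (hdisj : ∀ i j e, e ∈ D i → e ∈ D j → i = j) :
    HasPerfectLinkage I T (⋃ i, D i) := by
  choose P htrail hP hcover using hD
  refine ⟨⋃ i, P i, fun l hl ↦ ?_, fun l hl l' hl' e he he' ↦ ?_, fun t ht e he ↦ ?_⟩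
  · obtain ⟨i, hi⟩ := Set.mem_iUnion.1 hl
    exact ⟨(htrail i l hi).1, fun e he ↦ Set.mem_iUnion.2 ⟨i, (htrail i l hi).2 e he⟩⟩
  · obtain ⟨i, hi⟩ := Set.mem_iUnion.1 hl
    obtain ⟨j, hj⟩ := Set.mem_iUnion.1 hl'
    obtain rfl := hdisj i j e ((htrail i l hi).2 e he) ((htrail j l' hj).2 e he')
    exact hP i l hi l' hj e he he'
  · obtain ⟨i, hi⟩ := Set.mem_iUnion.1 he.2
    obtain ⟨l, hl, hel⟩ := hcover i t ht e ⟨he.1, hi⟩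
    exact ⟨l, Set.mem_iUnion.2 ⟨i, hl⟩, hel⟩

namespace Linkable

theorem exists_isTerminalTrail (hL : Linkable I T H) (ht : t ∈ T) {e : E} (he : e ∈ star I H t) :
    ∃ l, IsTerminalTrail I T l ∧ e ∈ l ∧ (∀ k ∈ l, k ∈ H) ∧ Linkable I T (H \ {k | k ∈ l}) := by
  obtain ⟨x, hex, p, b, hwalk, hnd, hp, hbT, hbt, havoid, hL'⟩ :=
    hL.exists_hasLinkableContinuation ht he
  refine ⟨e :: p, ⟨t, ht, b, hbT, hbt.symm, .cons hex hwalk,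
    List.nodup_cons.2 ⟨fun h ↦ (hp e h).2 rfl, hnd⟩, ?_⟩, List.mem_cons_self,
    List.forall_mem_cons.2 ⟨he.2, fun k hk ↦ (hp k hk).1⟩, hL'⟩
  rintro (_ | ⟨a, m₁⟩) m₂ d hm hm₁ hm₂ hd
  · exact absurd rfl hm₁
  · obtain ⟨rfl, rfl⟩ := List.cons.inj hm
    obtain ⟨f, m₂, rfl⟩ := List.exists_cons_of_ne_nil hm₂
    exact havoid rfl (hd.of_cons hex)

theorem exists_diff_linkable (hL : Linkable I T H) (e : E) :
    ∃ l : List E, (l ≠ [] → IsTerminalTrail I T l) ∧ (∀ k ∈ l, k ∈ H) ∧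
      Linkable I T (H \ {k | k ∈ l}) ∧ ∀ t ∈ T, e ∈ star I H t → e ∈ l := by
  by_cases h : ∃ t ∈ T, e ∈ star I H t
  · obtain ⟨t, ht, he⟩ := h
    obtain ⟨l, hl, hel, hlH, hL'⟩ := hL.exists_isTerminalTrail ht he
    exact ⟨l, fun _ ↦ hl, hlH, hL', fun _ _ _ ↦ hel⟩
  · exact ⟨[], by simp, by simp, by simpa using hL, fun t ht he ↦ absurd ⟨t, ht, he⟩ h⟩

theorem exists_seq_terminalTrail (hL : Linkable I T H) (g : ℕ → E) :
    ∃ p : ℕ → List E, (∀ n, p n ≠ [] → IsTerminalTrail I T (p n)) ∧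
      (∀ n, ∀ e ∈ p n, e ∈ H ∧ ∀ m < n, e ∉ p m) ∧
      ∀ n, ∀ t ∈ T, g n ∈ star I H t → ∃ m, g n ∈ p m := by
  choose p htrail hp hlinkable hcover using
    fun (K : {K : Set E // Linkable I T K}) (e : E) ↦ K.2.exists_diff_linkable e
  let K : ℕ → {K : Set E // Linkable I T K} :=
    fun n ↦ Nat.rec ⟨H, hL⟩ (fun n K ↦ ⟨K.1 \ {k | k ∈ p K (g n)}, hlinkable K (g n)⟩) n
  have hK : ∀ n e, e ∈ (K n).1 ↔ e ∈ H ∧ ∀ m < n, e ∉ p (K m) (g m) := by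
    intro n e
    induction n with
    | zero => simp [K]
    | succ n ih =>
      change e ∈ (K n).1 ∧ e ∉ p (K n) (g n) ↔ _
      rw [ih, and_assoc, Nat.forall_lt_succ_right]
  refine ⟨fun n ↦ p (K n) (g n), fun n ↦ htrail _ _, fun n e he ↦ (hK n e).1 (hp _ _ e he),
    fun n t ht hgn ↦ ?_⟩
  by_contra! hno
  exact hno n (hcover _ _ t ht ⟨hgn.1, (hK n _).2 ⟨hgn.2, fun m _ ↦ hno m⟩⟩)

theorem hasPerfectLinkage_of_countable (hL : Linkable I T H) (hH : H.Countable) :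
    HasPerfectLinkage I T H := by
  obtain rfl | hne := H.eq_empty_or_nonempty
  · exact ⟨∅, by simp, by simp, fun t _ e he ↦ absurd he.2 (Set.notMem_empty e)⟩
  obtain ⟨g, rfl⟩ := hH.exists_eq_range hne
  obtain ⟨p, htrail, hp, hcover⟩ := hL.exists_seq_terminalTrail g
  refine ⟨{l | l ≠ [] ∧ ∃ n, p n = l}, ?_, ?_, fun t ht e he ↦ ?_⟩
  · rintro _ ⟨hl, n, rfl⟩
    exact ⟨htrail n hl, fun e he ↦ (hp n e he).1⟩
  · rintro _ ⟨-, n, rfl⟩ _ ⟨-, n', rfl⟩ e he he'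
    obtain h | rfl | h := lt_trichotomy n n'
    · exact absurd he ((hp n' e he').2 n h)
    · rfl
    · exact absurd he' ((hp n e he).2 n' h)
  · obtain ⟨n, rfl⟩ := he.2
    obtain ⟨m, hm⟩ := hcover n t ht he
    exact ⟨p m, ⟨List.ne_nil_of_mem hm, m, rfl⟩, hm⟩

end Linkable

section Rerouting

open Cardinal

theorem mk_biUnion_le_of_forall_mk_le {α ι : Type u} {c : Cardinal.{u}} (hc : ℵ₀ ≤ c) {s : Set ι}
    (hs : #s ≤ c) {f : ι → Set α} (hf : ∀ i ∈ s, #(f i) ≤ c) : #(⋃ i ∈ s, f i : Set α) ≤ c :=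
  (mk_biUnion_le f s).trans (mul_le_of_le hc hs (ciSup_le' fun i ↦ hf i i.2))

/-- `A` is a set of finite blocks of pairs `(s, l)`, each of which replaces the trail `w s` by a
trail `l` that ends in `B`. The replacements are compatible with each other and with the trails
`w s` that are kept. Every block serves some `s` whose original trail does not end in `B`, which
bounds the number of blocks. -/
structure IsRerouting (I : E → Sym2 V) (H : Set E) (t : V) (B : Set V) (w : E → List E)
    (en : E → V) (A : Set (Finset (E × List E))) : Prop where
  exists_end_notMem : ∀ β ∈ A, ∃ p ∈ β, en p.1 ∉ B
  trail : ∀ β ∈ A, ∀ p ∈ β, p.1 ∈ star I H t ∧ [p.1] <+: p.2 ∧ p.2.Nodup ∧ (∀ e ∈ p.2, e ∈ H) ∧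
    ∃ b ∈ B, EdgeWalk I t p.2 b
  eq_of_mem : ∀ β ∈ A, ∀ p ∈ β, ∀ β' ∈ A, ∀ p' ∈ β', ∀ e, e ∈ p.2 → e ∈ p'.2 → β = β' ∧ p = p'
  notMem : ∀ s ∈ star I H t, (∀ β ∈ A, ∀ p ∈ β, p.1 ≠ s) → ∀ β ∈ A, ∀ p ∈ β, ∀ e ∈ p.2, e ∉ w s

/-- The edges that are not available when `s₀` is rerouted next: those of the rerouted trails, and
those of the other trails that do not end in `B`. -/
def blockedEdges (I : E → Sym2 V) (H : Set E) (t : V) (B : Set V) (w : E → List E) (en : E → V)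
    (A : Set (Finset (E × List E))) (s₀ : E) : Set E :=
  (⋃ β ∈ A, {e | ∃ p ∈ β, e ∈ p.2}) ∪
    ⋃ s ∈ {s | s ∈ star I H t ∧ en s ∉ B}, {e | s ≠ s₀ ∧ e ∈ w s}

variable {A : Set (Finset (E × List E))}

theorem mem_blockedEdges {e : E} : e ∈ blockedEdges I H t B w en A s₀ ↔
    (∃ β ∈ A, ∃ p ∈ β, e ∈ p.2) ∨ ∃ s ∈ star I H t, en s ∉ B ∧ s ≠ s₀ ∧ e ∈ w s := by
  simp only [blockedEdges, Set.mem_union, Set.mem_iUnion, Set.mem_ofPred_eq, exists_prop, and_assoc]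

namespace IsRerouting

theorem sUnion {C : Set (Set (Finset (E × List E)))} (hC : ∀ A ∈ C, IsRerouting I H t B w en A)
    (hchain : IsChain (· ⊆ ·) C) : IsRerouting I H t B w en (⋃₀ C) where
  exists_end_notMem := fun β ⟨A, hA, hβ⟩ ↦ (hC A hA).exists_end_notMem β hβ
  trail := fun β ⟨A, hA, hβ⟩ ↦ (hC A hA).trail β hβ
  eq_of_mem := by
    rintro β ⟨A, hA, hβ⟩ p hp β' ⟨A', hA', hβ'⟩
    obtain h | h := hchain.total hA hA'
    · exact (hC A' hA').eq_of_mem β (h hβ) p hp β' hβ'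
    · exact (hC A hA).eq_of_mem β hβ p hp β' (h hβ')
  notMem := fun s hs h β ⟨A, hA, hβ⟩ ↦
    (hC A hA).notMem s hs (fun β hβ ↦ h β ⟨A, hA, hβ⟩) β hβ

theorem mem_self (hA : IsRerouting I H t B w en A) {β : Finset (E × List E)} (hβ : β ∈ A)
    {p : E × List E} (hp : p ∈ β) : p.1 ∈ p.2 :=
  (hA.trail β hβ p hp).2.1.subset List.mem_cons_self

theorem linkedTo (hA : IsRerouting I H t B w en A) (F : StarTrails I H t w en)
    (hall : ∀ s ∈ star I H t, en s ∉ B → ∃ β ∈ A, ∃ p ∈ β, p.1 = s) : LinkedTo I H t B := by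
  have htrail : ∀ s, ∃ l b, s ∈ star I H t → ((∃ β ∈ A, (s, l) ∈ β) ∨
      ((∀ β ∈ A, ∀ p ∈ β, p.1 ≠ s) ∧ l = w s)) ∧ b ∈ B ∧ EdgeWalk I t l b ∧ [s] <+: l ∧
      l.Nodup ∧ ∀ e ∈ l, e ∈ H := by
    intro s
    by_cases hs : s ∈ star I H t
    swap
    · exact ⟨[], t, fun h ↦ absurd h hs⟩
    by_cases h : ∃ β ∈ A, ∃ p ∈ β, p.1 = s
    · obtain ⟨β, hβ, ⟨s, l⟩, hp, rfl⟩ := h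
      obtain ⟨-, hhead, hnd, hlH, b, hb, hwalk⟩ := hA.trail β hβ _ hp
      exact ⟨l, b, fun _ ↦ ⟨.inl ⟨β, hβ, hp⟩, hb, hwalk, hhead, hnd, hlH⟩⟩
    · have hb : en s ∈ B := not_not.1 fun hb ↦ h (hall s hs hb)
      push Not at h
      exact ⟨w s, en s, fun _ ↦
        ⟨.inr ⟨h, rfl⟩, hb, F.walk s hs, F.head s hs, F.nodup s hs, F.subset s hs⟩⟩
  choose w' en' hw' using htrail
  refine ⟨w', en', ⟨⟨fun s hs ↦ (hw' s hs).2.2.2.2.1, fun s hs ↦ (hw' s hs).2.2.2.2.2, ?_⟩,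
    fun s hs ↦ (hw' s hs).2.2.1, fun s hs ↦ (hw' s hs).2.2.2.1⟩, fun s hs ↦ (hw' s hs).2.1⟩
  intro s hs s' hs' e he he'
  obtain ⟨β, hβ, hp⟩ | ⟨h, hw⟩ := (hw' s hs).1 <;>
    obtain ⟨β', hβ', hp'⟩ | ⟨h', hw₁⟩ := (hw' s' hs').1
  · exact congrArg Prod.fst (hA.eq_of_mem β hβ _ hp β' hβ' _ hp' e he he').2
  · exact absurd (hw₁ ▸ he') (hA.notMem s' hs' h' β hβ _ hp e he)
  · exact absurd (hw ▸ he) (hA.notMem s hs h β' hβ' _ hp' e he')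
  · exact F.eq_of_mem s hs s' hs' e (hw ▸ he) (hw₁ ▸ he')

theorem mk_blockedEdges_le (hA : IsRerouting I H t B w en A) {c : Cardinal.{v}} (hc : ℵ₀ ≤ c)
    (hdef : #{s | s ∈ star I H t ∧ en s ∉ B} ≤ c) : #(blockedEdges I H t B w en A s₀) ≤ c := by
  have hA_le : #A ≤ c := by
    choose p hp hpB using fun β : A ↦ hA.exists_end_notMem β β.2
    refine le_trans (mk_le_of_injective (f := fun β : A ↦
      (⟨(p β).1, (hA.trail β β.2 _ (hp β)).1, hpB β⟩ : {s | s ∈ star I H t ∧ en s ∉ B})) ?_) hdef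
    intro β β' h
    have h : (p β).1 = (p β').1 := congrArg Subtype.val h
    exact Subtype.ext (hA.eq_of_mem β β.2 _ (hp β) β' β'.2 _ (hp β') _ (hA.mem_self β.2 (hp β))
      (h ▸ hA.mem_self β'.2 (hp β'))).1
  refine (mk_union_le _ _).trans (add_le_of_le hc
    (mk_biUnion_le_of_forall_mk_le hc hA_le fun β _ ↦ (Set.Finite.lt_aleph0 ?_).le.trans hc)
    (mk_biUnion_le_of_forall_mk_le hc hdef fun s _ ↦ (Set.Finite.lt_aleph0 ?_).le.trans hc))
  · exact (β.finite_toSet.biUnion (t := fun p ↦ {e | e ∈ p.2}) fun p _ ↦ p.2.finite_toSet).subset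
      fun e ⟨p, hp, he⟩ ↦ Set.mem_biUnion (Finset.mem_coe.2 hp) he
  · exact (w s).finite_toSet.subset fun e he ↦ he.2

theorem notMem_blockedEdges (hA : IsRerouting I H t B w en A) (F : StarTrails I H t w en) {s : E}
    (hs : s ∈ star I H t) (hsA : ∀ β ∈ A, ∀ p ∈ β, p.1 ≠ s) (hsB : s = s₀ ∨ en s ∈ B) {e : E}
    (he : e ∈ w s) : e ∉ blockedEdges I H t B w en A s₀ := by
  intro h
  obtain ⟨β, hβ, p, hp, hep⟩ | ⟨s', hs', hs'B, hne, hes'⟩ := mem_blockedEdges.1 h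
  · exact hA.notMem s hs hsA β hβ p hp e hep he
  · obtain rfl := F.eq_of_mem s hs s' hs' e he hes'
    exact hsB.elim hne hs'B

theorem mem_star_diff_blockedEdges (hA : IsRerouting I H t B w en A) (F : StarTrails I H t w en)
    {s : E} : s ∈ star I (H \ blockedEdges I H t B w en A s₀) t ↔
      s ∈ star I H t ∧ (∀ β ∈ A, ∀ p ∈ β, p.1 ≠ s) ∧ (s = s₀ ∨ en s ∈ B) := by
  constructor
  · rintro ⟨hst, hsH, hblocked⟩
    refine ⟨⟨hst, hsH⟩, ?_, ?_⟩
    · rintro β hβ p hp rfl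
      exact hblocked (mem_blockedEdges.2 (.inl ⟨β, hβ, p, hp, hA.mem_self hβ hp⟩))
    · by_contra! h
      exact hblocked (mem_blockedEdges.2 (.inr
        ⟨s, ⟨hst, hsH⟩, h.2, h.1, F.mem_self ⟨hst, hsH⟩⟩))
  · rintro ⟨hs, hsA, hsB⟩
    exact ⟨hs.1, hs.2, hA.notMem_blockedEdges F hs hsA hsB (F.mem_self hs)⟩

theorem starTrails_diff_blockedEdges (hA : IsRerouting I H t B w en A)
    (F : StarTrails I H t w en) : StarTrails I (H \ blockedEdges I H t B w en A s₀) t w en :=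
  F.restrict Set.sdiff_subset fun s hs e he ↦
    have ⟨hs, hsA, hsB⟩ := (hA.mem_star_diff_blockedEdges F).1 hs
    ⟨F.subset s hs e he, hA.notMem_blockedEdges F hs hsA hsB he⟩

theorem notMem_block (hA : IsRerouting I H t B w en A) (F : StarTrails I H t w en)
    (F' : StarTrails I (H \ blockedEdges I H t B w en A s₀) t w' en')
    (hs₀ : s₀ ∈ star I (H \ blockedEdges I H t B w en A s₀) t)
    {β₀ : Finset (E × List E)}
    (hβ₀ : ∀ p, p ∈ β₀ ↔ p.1 ∈ star I (H \ blockedEdges I H t B w en A s₀) t ∧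
      (p.1 = s₀ ∨ w' p.1 ≠ w p.1) ∧ p.2 = w' p.1)
    {s : E} (hs : s ∈ star I H t) (hsA : ∀ β ∈ A, ∀ p ∈ β, p.1 ≠ s)
    (hsβ₀ : ∀ p ∈ β₀, p.1 ≠ s) : ∀ p ∈ β₀, ∀ e ∈ p.2, e ∉ w s := by
  intro p hp e he hes
  obtain ⟨hps, -, hpw⟩ := (hβ₀ p).1 hp
  by_cases hsB : en s ∈ B
  · have hs' := (hA.mem_star_diff_blockedEdges F (s₀ := s₀)).2 ⟨hs, hsA, .inr hsB⟩
    have hws : w' s = w s := not_not.1 fun hne ↦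
      hsβ₀ (s, w' s) ((hβ₀ _).2 ⟨hs', .inr hne, rfl⟩) rfl
    exact hsβ₀ p hp (F'.eq_of_mem _ hps _ hs' e (hpw ▸ he) (hws ▸ hes))
  · have hne : s ≠ s₀ := fun h ↦ hsβ₀ _ ((hβ₀ (s₀, w' s₀)).2 ⟨hs₀, .inl rfl, rfl⟩) h.symm
    exact (F'.subset _ hps e (hpw ▸ he)).2 (mem_blockedEdges.2 (.inr ⟨s, hs, hsB, hne, hes⟩))

theorem insert (hA : IsRerouting I H t B w en A) (F : StarTrails I H t w en)
    (F' : StarTrails I (H \ blockedEdges I H t B w en A s₀) t w' en') (hs₀B : en s₀ ∉ B)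
    (hs₀ : s₀ ∈ star I (H \ blockedEdges I H t B w en A s₀) t)
    (hen' : ∀ s ∈ star I (H \ blockedEdges I H t B w en A s₀) t, en' s ∈ B)
    {β₀ : Finset (E × List E)}
    (hβ₀ : ∀ p, p ∈ β₀ ↔ p.1 ∈ star I (H \ blockedEdges I H t B w en A s₀) t ∧
      (p.1 = s₀ ∨ w' p.1 ≠ w p.1) ∧ p.2 = w' p.1) :
    IsRerouting I H t B w en (insert β₀ A) := by
  have hs₀β : (s₀, w' s₀) ∈ β₀ := (hβ₀ _).2 ⟨hs₀, .inl rfl, rfl⟩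
  have hblocked : ∀ p ∈ β₀, ∀ e ∈ p.2, e ∉ blockedEdges I H t B w en A s₀ := by
    intro p hp e he
    obtain ⟨hs, -, hp⟩ := (hβ₀ p).1 hp
    exact (F'.subset _ hs e (hp ▸ he)).2
  have hold : ∀ p ∈ β₀, ∀ β ∈ A, ∀ p' ∈ β, ∀ e ∈ p.2, e ∉ p'.2 := fun p hp β hβ p' hp' e he he' ↦
    hblocked p hp e he (mem_blockedEdges.2 (.inl ⟨β, hβ, p', hp', he'⟩))
  refine ⟨?_, ?_, ?_, ?_⟩
  · rintro β (rfl | hβ)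
    exacts [⟨_, hs₀β, hs₀B⟩, hA.exists_end_notMem β hβ]
  · rintro β (rfl | hβ)
    swap
    · exact hA.trail β hβ
    intro p hp
    obtain ⟨hs, -, hp⟩ := (hβ₀ p).1 hp
    rw [hp]
    exact ⟨star_mono Set.sdiff_subset hs, F'.head _ hs, F'.nodup _ hs,
      fun e he ↦ (F'.subset _ hs e he).1, en' p.1, hen' _ hs, F'.walk _ hs⟩
  · rintro β (rfl | hβ) p hp β' (rfl | hβ') p' hp' e he he'
    · obtain ⟨hs, -, hp⟩ := (hβ₀ p).1 hp
      obtain ⟨hs', -, hp'⟩ := (hβ₀ p').1 hp'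
      have hpp' := F'.eq_of_mem _ hs _ hs' e (hp ▸ he) (hp' ▸ he')
      exact ⟨rfl, Prod.ext hpp' (by rw [hp, hp', hpp'])⟩
    · exact absurd he' (hold p hp β' hβ' p' hp' e he)
    · exact absurd he (hold p' hp' β hβ p hp e he')
    · exact hA.eq_of_mem β hβ p hp β' hβ' p' hp' e he he'
  · rintro s hs hsA β (rfl | hβ) p hp e he hes
    swap
    · exact hA.notMem s hs (fun β hβ ↦ hsA β (.inr hβ)) β hβ p hp e he hes
    exact hA.notMem_block F F' hs₀ hβ₀ hs (fun β hβ ↦ hsA β (.inr hβ)) (hsA _ (.inl rfl)) p hp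
      e he hes

theorem exists_shelter_of_maximal (hA : Maximal (IsRerouting I H t B w en) A)
    (F : StarTrails I H t w en) (ht : t ∈ T) (hB : t ∉ B) (hs₀ : s₀ ∈ star I H t)
    (hs₀B : en s₀ ∉ B) (hs₀A : ∀ β ∈ A, ∀ p ∈ β, p.1 ≠ s₀) :
    ∃ X, en s₀ ∈ X ∧ Disjoint X B ∧
      ∃ q, Shelter I (H \ blockedEdges I H t B w en A s₀) T X q := by
  classical
  have hstar := fun s ↦ hA.1.mem_star_diff_blockedEdges F (s₀ := s₀) (s := s)
  have F₁ := hA.1.starTrails_diff_blockedEdges F (s₀ := s₀)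
  have hs₁ := (hstar s₀).2 ⟨hs₀, hs₀A, .inl rfl⟩
  obtain ⟨z, hz, w', en', π, h⟩ | ⟨X, hX, hXB, htight⟩ :=
    F₁.exists_isAugmentation_or_isTight hs₁ hB
  · have hen' : ∀ s ∈ star I (H \ blockedEdges I H t B w en A s₀) t, en' s ∈ B := by
      intro s hs
      by_cases hπ : π s = s₀
      · rwa [h.end_of_eq s hs hπ]
      · rw [h.end_of_ne s hs hπ]
        exact ((hstar _).1 ((h.apply_mem_star s).2 hs)).2.2.resolve_left hπ
    have hfin : {s | s ∈ star I (H \ blockedEdges I H t B w en A s₀) t ∧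
        (s = s₀ ∨ w' s ≠ w s)}.Finite :=
      ((Set.finite_singleton s₀).union h.finite_ne).subset fun s hs ↦ hs.2
    have hβ₀ : ∀ p, p ∈ hfin.toFinset.image (fun s ↦ (s, w' s)) ↔
        p.1 ∈ star I (H \ blockedEdges I H t B w en A s₀) t ∧
          (p.1 = s₀ ∨ w' p.1 ≠ w p.1) ∧ p.2 = w' p.1 := by
      rintro ⟨s, l⟩
      simp only [Finset.mem_image, Set.Finite.mem_toFinset, Set.mem_ofPred_eq, Prod.mk.injEq]
      grind
    have hmem := hA.2 (hA.1.insert F h.starTrails hs₀B hs₁ hen' hβ₀) (Set.subset_insert _ _)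
      (Set.mem_insert _ _)
    exact absurd rfl (hs₀A _ hmem (s₀, w' s₀) ((hβ₀ _).2 ⟨hs₁, .inl rfl, rfl⟩))
  · exact ⟨X, hX, hXB, F₁.exists_shelter_of_isTight htight ht⟩

end IsRerouting

/-- Trails that miss `B` can be redirected into `B` one after the other, unless a shelter away from
`B` survives the deletion of few edges. -/
theorem StarTrails.linkedTo_of_forall_not_shelter (F : StarTrails I H t w en) (ht : t ∈ T)
    (hB : t ∉ B) {c : Cardinal.{v}} (hc : ℵ₀ ≤ c)
    (hdef : #{s | s ∈ star I H t ∧ en s ∉ B} ≤ c)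
    (hno : ∀ s ∈ star I H t, en s ∉ B → ∀ Z : Set E, #Z ≤ c → ∀ X, en s ∈ X → Disjoint X B →
      ∀ q, ¬ Shelter I (H \ Z) T X q) : LinkedTo I H t B := by
  obtain ⟨A, hA⟩ := zorn_subset {A | IsRerouting I H t B w en A} fun C hC hchain ↦
    ⟨⋃₀ C, .sUnion hC hchain, fun A hA ↦ Set.subset_sUnion_of_mem hA⟩
  refine hA.1.linkedTo F fun s hs hsB ↦ ?_
  by_contra! hsA
  obtain ⟨X, hX, hXB, q, hq⟩ := IsRerouting.exists_shelter_of_maximal hA F ht hB hs hsB hsA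
  exact hno s hs hsB _ (hA.1.mk_blockedEdges_le hc hdef) X hX hXB q hq

end Rerouting

end Countable

section Closed

variable {V : Type*} {E : Type*} {ι κ : Type*} {I : E → Sym2 V} {J : κ → Set ι}
  {P Q : κ → Set E → Prop} {F A A' : Set E}

/-- The set `F` is closed under the operation `f`, whose arguments are finite sets. -/
def ClosedUnder (f : Finset E → Set E) (F : Set E) : Prop :=
  ∀ A : Finset E, (A : Set E) ⊆ F → f A ⊆ F

/-- There are operations `f i` with countable values such that `P k F` holds whenever `J k` is
nonempty and `F` is closed under `f i` for all `i ∈ J k`. For a single operation this says that `P`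
contains a club. -/
def HoldsOnClosed (J : κ → Set ι) (P : κ → Set E → Prop) : Prop :=
  ∃ f : ι → Finset E → Set E, (∀ i A, (f i A).Countable) ∧
    ∀ k F, (J k).Nonempty → (∀ i ∈ J k, ClosedUnder (f i) F) → P k F

/-- The ends of the edges in `A`. -/
def endpoints (I : E → Sym2 V) (A : Set E) : Set V := {x | ∃ e ∈ A, x ∈ I e}

theorem endpoints_mono (h : A ⊆ A') : endpoints I A ⊆ endpoints I A' :=
  fun _ ⟨e, he, hx⟩ ↦ ⟨e, h he, hx⟩

theorem finite_endpoints (hA : A.Finite) : (endpoints I A).Finite := by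
  have h : endpoints I A = ⋃ e ∈ A, {x | x ∈ I e} := by
    ext x
    simp [endpoints]
  refine h ▸ hA.biUnion fun e _ ↦ ?_
  induction I e using Sym2.ind with
  | _ a b => exact (Set.toFinite {a, b}).subset fun x hx ↦ by simpa using hx

theorem exists_finset_mem_endpoints {x : V} (hx : x ∈ endpoints I F) :
    ∃ A : Finset E, (A : Set E) ⊆ F ∧ x ∈ endpoints I (A : Set E) := by
  obtain ⟨e, he, hx⟩ := hx
  exact ⟨{e}, by simpa using he, e, by simp, hx⟩

namespace HoldsOnClosed

theorem of_closedUnder {f : Finset E → Set E} (hf : ∀ A, (f A).Countable)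
    (hP : ∀ k F, ClosedUnder f F → P k F) : HoldsOnClosed J P :=
  ⟨fun _ ↦ f, fun _ ↦ hf, fun k F ⟨i, hi⟩ h ↦ hP k F (h i hi)⟩

theorem mono (h : HoldsOnClosed J P) (hPQ : ∀ k F, (J k).Nonempty → P k F → Q k F) :
    HoldsOnClosed J Q := by
  obtain ⟨f, hf, hP⟩ := h
  exact ⟨f, hf, fun k F hk hF ↦ hPQ k F hk (hP k F hk hF)⟩

theorem imp {p : Prop} (h : p → HoldsOnClosed J P) : HoldsOnClosed J fun k F ↦ p → P k F := by
  by_cases hp : p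
  · exact (h hp).mono fun _ _ _ hP _ ↦ hP
  · exact of_closedUnder (f := fun _ ↦ ∅) (fun _ ↦ Set.countable_empty) fun _ _ _ h ↦ absurd h hp

theorem and (hP : HoldsOnClosed J P) (hQ : HoldsOnClosed J Q) :
    HoldsOnClosed J fun k F ↦ P k F ∧ Q k F := by
  obtain ⟨f, hf, hP⟩ := hP
  obtain ⟨g, hg, hQ⟩ := hQ
  refine ⟨fun i A ↦ f i A ∪ g i A, fun i A ↦ (hf i A).union (hg i A), fun k F hk hF ↦
    ⟨hP k F hk fun i hi A hA ↦ ?_, hQ k F hk fun i hi A hA ↦ ?_⟩⟩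
  · exact Set.subset_union_left.trans (hF i hi A hA)
  · exact Set.subset_union_right.trans (hF i hi A hA)

/-- Diagonal intersection: the operation for `v` only has to be applied once `v` is in `s` or an
edge in `F` ends at `v`. -/
theorem forall_mem_endpoints {P : V → κ → Set E → Prop} {s : Set V} (hs : s.Countable)
    (h : ∀ v, HoldsOnClosed J (P v)) :
    HoldsOnClosed J fun k F ↦ ∀ v ∈ s ∪ endpoints I F, P v k F := by
  classical
  choose f hf hP using h
  refine ⟨fun i A ↦ ⋃ v ∈ s ∪ endpoints I (A : Set E), ⋃ B ∈ (A.powerset : Set (Finset E)),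
    f v i B, fun i A ↦ ?_, fun k F hk hF v hv ↦ hP v k F hk fun i hi B hB ↦ ?_⟩
  · exact (hs.union (finite_endpoints A.finite_toSet).countable).biUnion fun v _ ↦
      (Finset.countable_toSet _).biUnion fun B _ ↦ hf v i B
  · obtain ⟨A, hA, hv⟩ :
        ∃ A : Finset E, (A : Set E) ⊆ F ∧ v ∈ s ∪ endpoints I (A : Set E) := by
      rcases hv with hv | hv
      · exact ⟨∅, by simp, .inl hv⟩
      · obtain ⟨A, hA, hv⟩ := exists_finset_mem_endpoints hv
        exact ⟨A, hA, .inr hv⟩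
    have hAB : ((A ∪ B : Finset E) : Set E) ⊆ F := by
      rw [Finset.coe_union]
      exact Set.union_subset hA hB
    refine Set.Subset.trans (fun e he ↦ ?_) (hF i hi (A ∪ B) hAB)
    have hv' : v ∈ s ∪ endpoints I ((A ∪ B : Finset E) : Set E) :=
      hv.imp_right fun h ↦ endpoints_mono (by simp) h
    have hB' : B ∈ ((A ∪ B).powerset : Set (Finset E)) :=
      Finset.mem_coe.2 (Finset.mem_powerset.2 Finset.subset_union_right)
    exact Set.mem_biUnion hv' (Set.mem_biUnion hB' he)

end HoldsOnClosed

end Closed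

section Connectivity

variable {V : Type u} {E : Type v} {I : E → Sym2 V} {T X : Set V} {H K K' : Set E} {x y : V}

/-- Adjacency in the graph on `K` in which the set `T` is identified to one vertex. -/
def TerminalAdj (I : E → Sym2 V) (T : Set V) (K : Set E) (x y : V) : Prop :=
  (x ∈ T ∧ y ∈ T) ∨ ∃ e ∈ K, I e = s(x, y)

/-- Connectedness in the graph on `K` in which the set `T` is identified to one vertex. -/
def TerminalConn (I : E → Sym2 V) (T : Set V) (K : Set E) : V → V → Prop :=
  Relation.ReflTransGen (TerminalAdj I T K)

namespace TerminalConn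

theorem symm (h : TerminalConn I T K x y) : TerminalConn I T K y x := by
  have : Std.Symm (TerminalAdj I T K) :=
    ⟨fun a b ↦ Or.imp And.symm fun ⟨e, he, hab⟩ ↦ ⟨e, he, hab.trans Sym2.eq_swap⟩⟩
  exact Relation.ReflTransGen.stdSymm.symm _ _ h

theorem mono (hK : K ⊆ K') (h : TerminalConn I T K x y) : TerminalConn I T K' x y :=
  Relation.ReflTransGen.mono (fun _ _ ↦ Or.imp_right fun ⟨e, he, hab⟩ ↦ ⟨e, hK he, hab⟩) _ _ h

theorem of_mem {e : E} (he : e ∈ K) (hx : x ∈ I e) (hy : y ∈ I e) : TerminalConn I T K x y := by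
  obtain rfl | hxy := eq_or_ne x y
  · exact .refl
  · exact .single (.inr ⟨e, he, (Sym2.mem_and_mem_iff hxy).1 ⟨hx, hy⟩⟩)

theorem exists_finite (h : TerminalConn I T K x y) :
    ∃ S : Set E, S.Finite ∧ S ⊆ K ∧ TerminalConn I T S x y := by
  induction h with
  | refl => exact ⟨∅, Set.finite_empty, Set.empty_subset _, .refl⟩
  | tail _ hadj ih =>
    obtain ⟨S, hS, hSK, hconn⟩ := ih
    rcases hadj with hT | ⟨e, he, hxy⟩
    · exact ⟨S, hS, hSK, hconn.tail (.inl hT)⟩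
    · exact ⟨insert e S, hS.insert e, Set.insert_subset he hSK,
        (hconn.mono (Set.subset_insert _ _)).tail (.inr ⟨e, Set.mem_insert _ _, hxy⟩)⟩

theorem mem_of_disjoint_cut (h : TerminalConn I T K x y) (hX : Disjoint X T)
    (hK : Disjoint K (cut I X)) (hx : x ∈ X) : y ∈ X := by
  induction h with
  | refl => exact hx
  | tail _ hadj ih =>
    rcases hadj with hT | ⟨e, he, hxy⟩
    · exact absurd hT.1 (Set.disjoint_left.1 hX ih)
    · by_contra hy
      exact Set.disjoint_left.1 hK he ⟨_, _, hxy, ih, hy⟩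

end TerminalConn

end Connectivity

section Restriction

variable {V : Type u} {E : Type v} {ι κ : Type*} {I : E → Sym2 V} {J : κ → Set ι} {H : Set E}
  {T B : Set V} {t t₀ : V}

/-- The witness is the set of all vertices that can be reached from `X` through the finite cut of
`X` in `H ∩ F` without using that cut again. -/
theorem InnerEulerianOn.inter (ht₀ : t₀ ∈ T) (hH : InnerEulerianOn I T H) {F : Set E}
    (hF : ∀ x ∈ {t₀} ∪ endpoints I F, ∀ y ∈ {t₀} ∪ endpoints I F, ∀ A : Finset E, (A : Set E) ⊆ F →
      TerminalConn I T (H \ A) x y → TerminalConn I T ((H ∩ F) \ A) x y) :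
    InnerEulerianOn I T (H ∩ F) := by
  rintro X hX ⟨hfin, hodd⟩
  obtain ⟨A, hA⟩ := hfin.exists_finset_coe
  have hAF : (A : Set E) ⊆ F := hA ▸ fun e he ↦ he.2.2
  have hAX : Disjoint ((H ∩ F) \ A) (cut I X) := by
    rw [hA]
    exact Set.disjoint_left.2 fun e he heX ↦ he.2 ⟨heX, he.1⟩
  set Z : Set V := {z | ∃ v ∈ X, v ∈ endpoints I (A : Set E) ∧ TerminalConn I T (H \ A) v z}
  have hZX : ∀ z ∈ Z, z ∈ {t₀} ∪ endpoints I F → z ∈ X := fun z ⟨v, hv, hvA, hvz⟩ hz ↦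
    (hF v (.inr (endpoints_mono hAF hvA)) z hz A hAF hvz).mem_of_disjoint_cut hX hAX hv
  have hZT : Disjoint Z T := by
    refine Set.disjoint_left.2 fun z ⟨v, hv, hvA, hvz⟩ hzT ↦ ?_
    exact Set.disjoint_left.1 hX
      (hZX t₀ ⟨v, hv, hvA, hvz.tail (.inl ⟨hzT, ht₀⟩)⟩ (.inl rfl)) ht₀
  have hcut : cut I Z ∩ H = A := by
    refine Set.Subset.antisymm ?_ fun e he ↦ ?_
    · rintro e ⟨⟨z, z', he, ⟨v, hv, hvA, hvz⟩, hz'⟩, heH⟩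
      by_contra heA
      exact hz' ⟨v, hv, hvA, hvz.tail (.inr ⟨e, ⟨heH, heA⟩, he⟩)⟩
    · obtain ⟨⟨u, v, huv, hu, hv⟩, heH, heF⟩ := hA ▸ he
      refine ⟨⟨u, v, huv, ⟨u, hu, ⟨e, he, by simp [huv]⟩, .refl⟩, fun hvZ ↦ ?_⟩, heH⟩
      exact hv (hZX v hvZ (.inr ⟨e, heF, by simp [huv]⟩))
  exact hH Z hZT (by rw [hcut, hA]; exact ⟨hfin, hodd⟩)

theorem holdsOnClosed_terminalConn_inter (x y : V) :
    HoldsOnClosed J fun _ F ↦ ∀ A : Finset E, (A : Set E) ⊆ F →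
      TerminalConn I T (H \ A) x y → TerminalConn I T ((H ∩ F) \ A) x y := by
  choose π hfin hsub hconn using
    fun (A : Finset E) (h : TerminalConn I T (H \ A) x y) ↦ h.exists_finite
  refine .of_closedUnder (f := fun A ↦ ⋃ h, π A h)
    (fun A ↦ Set.countable_iUnion fun h ↦ (hfin A h).countable) fun _ F hF A hA h ↦ ?_
  have hπF : π A h ⊆ F := (Set.subset_iUnion (π A) h).trans (hF A hA)
  exact (hconn A h).mono fun e he ↦ ⟨⟨(hsub A h he).1, hπF he⟩, (hsub A h he).2⟩

theorem InnerEulerianOn.holdsOnClosed_inter (ht₀ : t₀ ∈ T) (hH : InnerEulerianOn I T H) :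
    HoldsOnClosed J fun _ F ↦ InnerEulerianOn I T (H ∩ F) :=
  .mono (.forall_mem_endpoints (Set.countable_singleton t₀) fun x ↦
    .forall_mem_endpoints (Set.countable_singleton t₀) fun y ↦
      holdsOnClosed_terminalConn_inter x y) fun _ _ _ hF ↦ hH.inter ht₀ hF

theorem LinkedTo.holdsOnClosed_inter (h : LinkedTo I H t B) :
    HoldsOnClosed J fun _ F ↦ LinkedTo I (H ∩ F) t B := by
  obtain ⟨w, en, W, hen⟩ := h
  refine .of_closedUnder (f := fun A ↦ ⋃ s ∈ (A : Set E), {e | e ∈ w s})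
    (fun A ↦ A.countable_toSet.biUnion fun s _ ↦ (List.finite_toSet (w s)).countable)
    fun _ F hF ↦ ?_
  have hsub : star I (H ∩ F) t ⊆ star I H t := star_mono Set.inter_subset_left
  refine ⟨w, en, W.restrict Set.inter_subset_left fun s hs e he ↦
    ⟨W.subset s (hsub hs) e he, hF {s} (by simpa using hs.2.2) ?_⟩, fun s hs ↦ hen s (hsub hs)⟩
  simpa using he

theorem linkedTo_of_star_eq_empty (h : star I H t = ∅) : LinkedTo I H t B := by
  refine ⟨fun _ ↦ [], fun _ ↦ t, ⟨⟨?_, ?_, ?_⟩, ?_, ?_⟩, ?_⟩ <;> simp [h]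

theorem Linkable.holdsOnClosed_inter (ht₀ : t₀ ∈ T) (hL : Linkable I T H) :
    HoldsOnClosed J fun _ F ↦ Linkable I T (H ∩ F) := by
  refine .mono (.and (hL.1.holdsOnClosed_inter ht₀)
    (.forall_mem_endpoints (I := I) Set.countable_empty fun t ↦ .imp fun ht : t ∈ T ↦
      (hL.2 t ht).holdsOnClosed_inter)) fun _ F _ ⟨hIE, hlink⟩ ↦ ⟨hIE, fun t ht ↦ ?_⟩
  by_cases htF : t ∈ endpoints I F
  · exact hlink t (.inr htF) ht
  · refine linkedTo_of_star_eq_empty (Set.eq_empty_of_forall_notMem fun s hs ↦ htF ?_)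
    obtain ⟨hs, y, -, hty⟩ := mem_star.1 hs
    exact ⟨s, hs.2, by simp [hty]⟩

end Restriction

open Cardinal

section Complement

variable {V : Type u} {E : Type v} {I : E → Sym2 V} {H F : Set E} {T X Z : Set V} {t₀ : V}

theorem exists_odd_ncard_fiber {α β : Type*} {s : Set α} (hodd : Odd s.ncard) (f : α → β) :
    ∃ b, Odd {a ∈ s | f a = b}.ncard := by
  classical
  have hs : s.Finite := Set.finite_of_ncard_ne_zero hodd.pos.ne'
  by_contra! hcon
  refine Nat.not_even_iff_odd.2 hodd ?_
  rw [Set.ncard_eq_toFinset_card s hs, Finset.card_eq_sum_card_image f]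
  refine Finset.even_sum _ fun b _ ↦ ?_
  have hb : ({a ∈ hs.toFinset | f a = b} : Set α) = {a ∈ s | f a = b} := by simp
  rw [← Set.ncard_coe_finset, Finset.coe_filter, hb]
  exact Nat.not_odd_iff_even.1 (hcon b)

theorem exists_odd_ncard_cut_inter_component (hodd : Odd (cut I X ∩ H).ncard) :
    ∃ v, Odd (cut I X ∩ (H ∩ inside I {z | TerminalConn I T H v z})).ncard := by
  obtain ⟨K, hK⟩ :=
    exists_odd_ncard_fiber hodd fun e ↦ {z | TerminalConn I T H (Quot.out (I e)).1 z}
  obtain ⟨e₀, -, rfl⟩ := Set.nonempty_of_ncard_ne_zero hK.pos.ne'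
  refine ⟨(Quot.out (I e₀)).1, ?_⟩
  convert hK using 2
  ext e
  rw [← Set.inter_assoc]
  refine and_congr_right fun he ↦ ⟨fun h ↦ ?_, fun h x hx ↦ ?_⟩
  · have hconn := h _ (Sym2.out_fst_mem (I e))
    exact Set.ext fun z ↦ ⟨hconn.trans, hconn.symm.trans⟩
  · exact h.subset (TerminalConn.of_mem he.2 (Sym2.out_fst_mem (I e)) hx)

theorem cut_inter_eq_cut_inter_component {v : V}
    (hZ : Z ⊆ {z | TerminalConn I T (H \ F) v z}) (hZF : Disjoint Z (endpoints I F))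
    (hZX : ∀ x y, TerminalConn I T (H \ F) v x → TerminalConn I T (H \ F) v y →
      ((x ∈ Z ↔ y ∈ Z) ↔ (x ∈ X ↔ y ∈ X))) :
    cut I Z ∩ H = cut I X ∩ ((H \ F) ∩ inside I {z | TerminalConn I T (H \ F) v z}) := by
  ext e
  constructor
  · rintro ⟨heZ, heH⟩
    obtain ⟨a, b, he, ha, -⟩ := id heZ
    have heF : e ∉ F := fun heF ↦ Set.disjoint_left.1 hZF ha ⟨e, heF, by simp [he]⟩
    have hb := (hZ ha).trans
      (TerminalConn.of_mem ⟨heH, heF⟩ (y := b) (by simp [he]) (by simp [he]))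
    rw [mem_cut he, hZX a b (hZ ha) hb, ← mem_cut he] at heZ
    exact ⟨heZ, ⟨heH, heF⟩, (mem_inside he).2 ⟨hZ ha, hb⟩⟩
  · rintro ⟨heX, ⟨heH, -⟩, hein⟩
    obtain ⟨a, b, he, -⟩ := id heX
    obtain ⟨ha, hb⟩ := (mem_inside he).1 hein
    rw [mem_cut he, ← hZX a b ha hb, ← mem_cut he] at heX
    exact ⟨heX, heH⟩

theorem InnerEulerianOn.diff (ht₀ : t₀ ∈ T) (hH : InnerEulerianOn I T H) {c : Cardinal.{v}}
    (hc : ℵ₀ ≤ c) (hF : #F ≤ c)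
    (hsep : ∀ x ∈ {t₀} ∪ endpoints I F, ∀ y ∈ {t₀} ∪ endpoints I F,
      TerminalConn I T (H \ F) x y → ∀ S : Set E, #S ≤ c → TerminalConn I T (H \ S) x y) :
    InnerEulerianOn I T (H \ F) := by
  rintro X hX ⟨hfin, hodd⟩
  obtain ⟨v, hv⟩ := exists_odd_ncard_cut_inter_component (T := T) hodd
  set K := {z | TerminalConn I T (H \ F) v z}
  have not_cut : ∀ Z ⊆ K, Disjoint Z T → Disjoint Z (endpoints I F) →
      ¬ ∀ x y, x ∈ K → y ∈ K → ((x ∈ Z ↔ y ∈ Z) ↔ (x ∈ X ↔ y ∈ X)) := fun Z hZK hZT hZF hZX ↦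
    hH Z hZT <| cut_inter_eq_cut_inter_component hZK hZF hZX ▸
      ⟨hfin.subset (Set.inter_subset_inter_right _ Set.inter_subset_left), hv⟩
  by_cases hx : ∃ x ∈ K ∩ X, x ∈ {t₀} ∪ endpoints I F
  · by_cases hy : ∃ y ∈ K \ X, y ∈ {t₀} ∪ endpoints I F
    · obtain ⟨x, ⟨hxK, hxX⟩, hxF⟩ := hx
      obtain ⟨y, ⟨hyK, hyX⟩, hyF⟩ := hy
      have hS : #(F ∪ cut I X ∩ (H \ F) : Set E) ≤ c :=
        (mk_union_le _ _).trans (add_le_of_le hc hF (hfin.lt_aleph0.le.trans hc))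
      refine hyX ((hsep x hxF y hyF (hxK.symm.trans hyK) _ hS).mem_of_disjoint_cut hX ?_ hxX)
      exact Set.disjoint_left.2 fun e he heX ↦
        he.2 (.inr ⟨heX, he.1, fun heF ↦ he.2 (.inl heF)⟩)
    · push Not at hy
      have hzT : ∀ z ∈ K \ X, z ∉ T := fun z hz hzT ↦ hy t₀
        ⟨Relation.ReflTransGen.tail hz.1 (.inl ⟨hzT, ht₀⟩), Set.disjoint_right.1 hX ht₀⟩ (.inl rfl)
      refine not_cut (K \ X) Set.sdiff_subset (Set.disjoint_left.2 hzT)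
        (Set.disjoint_left.2 fun z hz hzF ↦ hy z hz (.inr hzF)) fun x y hx hy ↦ ?_
      simp only [Set.mem_sdiff, hx, hy, true_and, not_iff_not]
  · push Not at hx
    refine not_cut (K ∩ X) Set.inter_subset_left (hX.mono_left Set.inter_subset_right)
      (Set.disjoint_left.2 fun z hz hzF ↦ hx z hz (.inr hzF)) fun x y hx hy ↦ ?_
    simp only [Set.mem_inter_iff, hx, hy, true_and]

end Complement

section Capture

variable {V : Type u} {E ι : Type v} {κ : Type*} {I : E → Sym2 V} {H : Set E} {T : Set V} {t₀ : V}

theorem exists_countable_cover {W : Set E} {s : Set ι} (h : #W ≤ #s * ℵ₀) :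
    ∃ g : ι → Set E, (∀ i, (g i).Countable) ∧ W ⊆ ⋃ i ∈ s, g i := by
  obtain ⟨φ⟩ : #W ≤ #(s × ULift.{v} ℕ) := by simpa using h
  refine ⟨fun i ↦ Subtype.val '' {e : W | (φ e).1 = i}, fun i ↦ ?_, fun e he ↦ ?_⟩
  · refine Set.Countable.image (Set.MapsTo.countable_of_injOn (Set.mapsTo_univ (fun e ↦ (φ e).2) _)
      (fun e he e' he' h ↦ ?_) Set.countable_univ) _
    exact φ.injective (Prod.ext (Subtype.ext (he.trans he'.symm)) h)
  · exact Set.mem_biUnion (φ ⟨e, he⟩).1.2 ⟨⟨e, he⟩, rfl, rfl⟩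

theorem aleph0_le_mk_mul_aleph0 {s : Set ι} (hs : s.Nonempty) : ℵ₀ ≤ #s * ℵ₀ :=
  le_mul_left (mk_ne_zero_iff.2 hs.to_subtype)

variable [LinearOrder ι] [WellFoundedLT ι]

/-- `W` is a witness for the least index that has one, so that it is small enough to be covered by
countable sets for all later indices. -/
theorem exists_holdsOnClosed_subset (Q : Set E → Prop) :
    ∃ W, HoldsOnClosed (Set.Iio : ι → Set ι) fun a F ↦
      ∀ S : Set E, #S ≤ #(Set.Iio a) * ℵ₀ → Q S → Q W ∧ W ⊆ F := by
  by_cases h : ∃ a : ι, ∃ S : Set E, #S ≤ #(Set.Iio a) * ℵ₀ ∧ Q S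
  · obtain ⟨a₀, ⟨W, hW, hQ⟩, hmin⟩ := WellFounded.has_min (wellFounded_lt (α := ι))
      {a | ∃ S : Set E, #S ≤ #(Set.Iio a) * ℵ₀ ∧ Q S} h
    obtain ⟨g, hg, hWg⟩ := exists_countable_cover hW
    refine ⟨W, fun i _ ↦ g i, fun i _ ↦ hg i, fun a F _ hF S hS hQS ↦ ⟨hQ, ?_⟩⟩
    have ha : a₀ ≤ a := not_lt.1 (hmin a ⟨S, hS, hQS⟩)
    exact hWg.trans (Set.iUnion₂_subset fun i hi ↦ hF i (hi.trans_le ha) ∅ (by simp))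
  · exact ⟨∅, .of_closedUnder (f := fun _ ↦ ∅) (fun _ ↦ Set.countable_empty)
      fun a _ _ S hS hQ ↦ absurd ⟨a, S, hS, hQ⟩ h⟩

theorem holdsOnClosed_terminalConn_diff (x y : V) :
    HoldsOnClosed (Set.Iio : ι → Set ι) fun a F ↦ TerminalConn I T (H \ F) x y →
      ∀ S : Set E, #S ≤ #(Set.Iio a) * ℵ₀ → TerminalConn I T (H \ S) x y := by
  obtain ⟨W, hW⟩ := exists_holdsOnClosed_subset (ι := ι) fun S ↦ ¬ TerminalConn I T (H \ S) x y
  refine hW.mono fun a F _ hF hconn S hS ↦ ?_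
  by_contra hcon
  obtain ⟨hW, hWF⟩ := hF S hS hcon
  exact hW (hconn.mono (Set.sdiff_subset_sdiff_right hWF))

theorem InnerEulerianOn.holdsOnClosed_diff (ht₀ : t₀ ∈ T) (hH : InnerEulerianOn I T H) :
    HoldsOnClosed (Set.Iio : ι → Set ι) fun a F ↦ #F ≤ #(Set.Iio a) * ℵ₀ →
      InnerEulerianOn I T (H \ F) :=
  .mono (.forall_mem_endpoints (Set.countable_singleton t₀) fun x ↦
    .forall_mem_endpoints (Set.countable_singleton t₀) fun y ↦
      holdsOnClosed_terminalConn_diff x y) fun _ _ ha hF hcard ↦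
    hH.diff ht₀ (aleph0_le_mk_mul_aleph0 ha) hcard hF

end Capture

section ShelterReplacement

variable {V : Type u} {E : Type v} {ι κ : Type*} {I : E → Sym2 V} {J : κ → Set ι} {H F D : Set E}
  {T B X Y : Set V} {t : V} {a b : V} {l : List E} {S : Set E} {w q : E → List E} {en : E → V}

theorem EdgeDisjointOn.holdsOnClosed_diff (hw : EdgeDisjointOn H S w) :
    HoldsOnClosed J fun _ F ↦ ∀ s ∈ S, s ∉ F → ∀ e ∈ w s, e ∉ F := by
  refine .of_closedUnder (f := fun A ↦ ⋃ e ∈ (A : Set E), {s ∈ S | e ∈ w s}) (fun A ↦ ?_)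
    fun _ F hF s hs hsF e he heF ↦ hsF (hF {e} (by simpa using heF) (by simp [hs, he]))
  exact A.countable_toSet.biUnion fun e _ ↦ Set.Subsingleton.countable
    fun s hs s' hs' ↦ hw.eq_of_mem s hs.1 s' hs'.1 e hs.2 hs'.2

theorem LinkedTo.holdsOnClosed_diff (h : LinkedTo I H t B) :
    HoldsOnClosed J fun _ F ↦ LinkedTo I (H \ F) t B := by
  obtain ⟨w, en, W, hen⟩ := h
  refine W.holdsOnClosed_diff.mono fun _ F _ hF ↦ ?_
  have hsub : star I (H \ F) t ⊆ star I H t := star_mono Set.sdiff_subset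
  exact ⟨w, en, W.restrict Set.sdiff_subset fun s hs e he ↦
    ⟨W.subset s (hsub hs) e he, hF s (hsub hs) hs.2.2 e he⟩, fun s hs ↦ hen s (hsub hs)⟩

theorem Shelter.diff (h : Shelter I H T X q)
    (hF : ∀ s ∈ cut I X ∩ H, s ∉ F → ∀ e ∈ q s, e ∉ F) : Shelter I (H \ F) T X q where
  nodup s hs := h.nodup s ⟨hs.1, hs.2.1⟩
  subset s hs e he :=
    have := h.subset s ⟨hs.1, hs.2.1⟩ e he
    ⟨⟨this.1, hF s ⟨hs.1, hs.2.1⟩ hs.2.2 e he⟩, this.2⟩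
  eq_of_mem s hs s' hs' := h.eq_of_mem s ⟨hs.1, hs.2.1⟩ s' ⟨hs'.1, hs'.2.1⟩
  walk s hs := h.walk s hs.1

theorem Shelter.holdsOnClosed_diff {W : Set E} (h : Shelter I (H \ W) T X q) :
    HoldsOnClosed J fun _ F ↦ W ⊆ F → Shelter I (H \ F) T X q :=
  EdgeDisjointOn.holdsOnClosed_diff h.toEdgeDisjointOn |>.mono fun _ F _ hF hWF ↦ by
    simpa [Set.sdiff_sdiff, Set.union_eq_self_of_subset_left hWF] using h.diff hF

theorem EdgeWalk.exists_prefix_avoiding (h : EdgeWalk I a l b) (D : Set E) :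
    ∃ l' c, l' <+: l ∧ EdgeWalk I a l' c ∧ (∀ e ∈ l', e ∉ D) ∧
      (l' = l ∧ c = b ∨ ∃ e ∈ D, c ∈ I e ∧ l' ++ [e] <+: l) := by
  induction h with
  | nil a => exact ⟨[], a, List.nil_prefix, .nil a, by simp, .inl ⟨rfl, rfl⟩⟩
  | @cons a c b e l he _ ih =>
    by_cases heD : e ∈ D
    · exact ⟨[], a, List.nil_prefix, .nil a, by simp, .inr ⟨e, heD, by simp [he], by simp⟩⟩
    · obtain ⟨l', d, hl', hwalk, hD, hend⟩ := ih
      refine ⟨e :: l', d, by simpa using hl', .cons he hwalk, by simpa [heD] using hD, ?_⟩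
      simpa using hend

theorem StarTrails.exists_diff_truncation (W : StarTrails I H t w en) (D : Set E) :
    ∃ w' en', StarTrails I (H \ D) t w' en' ∧ ∀ s ∈ star I (H \ D) t,
      en' s = en s ∨ ∃ e ∈ w s, e ∈ D ∧ en' s ∈ I e := by
  have htrunc : ∀ s, ∃ l c, s ∈ star I H t → l <+: w s ∧ EdgeWalk I t l c ∧ (∀ e ∈ l, e ∉ D) ∧
      (l = w s ∧ c = en s ∨ ∃ e ∈ D, c ∈ I e ∧ l ++ [e] <+: w s) := fun s ↦ by
    by_cases hs : s ∈ star I H t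
    · obtain ⟨l, c, h⟩ := (W.walk s hs).exists_prefix_avoiding D
      exact ⟨l, c, fun _ ↦ h⟩
    · exact ⟨[], t, fun h ↦ absurd h hs⟩
  choose w' en' h using htrunc
  have hsub : star I (H \ D) t ⊆ star I H t := star_mono Set.sdiff_subset
  have hw : EdgeDisjointOn H (star I (H \ D) t) w' :=
    (W.toEdgeDisjointOn.mono subset_rfl hsub).of_sublist fun s hs ↦ (h s (hsub hs)).1.sublist
  have hne : ∀ s ∈ star I (H \ D) t, w' s ≠ [] := fun s hs hnil ↦ by
    have hs' := hsub hs
    rcases (h s hs').2.2.2 with ⟨heq, -⟩ | ⟨e, heD, -, hpre⟩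
    · exact List.ne_nil_of_mem (W.mem_self hs') (heq ▸ hnil)
    · rw [hnil] at hpre
      have hse : [s] <+: [e] := List.prefix_of_prefix_length_le (W.head s hs') hpre le_rfl
      exact hs.2.2 ((List.mem_singleton.1 (hse.subset (List.mem_singleton_self s))) ▸ heD)
  refine ⟨w', en', ⟨⟨hw.nodup, fun s hs e he ↦ ⟨hw.subset s hs e he, (h s (hsub hs)).2.2.1 e he⟩,
    hw.eq_of_mem⟩, fun s hs ↦ (h s (hsub hs)).2.1, fun s hs ↦ ?_⟩, fun s hs ↦ ?_⟩
  · exact List.prefix_of_prefix_length_le (W.head s (hsub hs)) (h s (hsub hs)).1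
      (List.length_pos_iff.2 (hne s hs))
  · exact (h s (hsub hs)).2.2.2.imp And.right fun ⟨e, heD, hc, hpre⟩ ↦
      ⟨e, hpre.subset (by simp), heD, hc⟩

theorem linkedTo_diff_of_shelter (hL : LinkedTo I H t (T \ {t})) (ht : t ∈ T) {c : Cardinal.{v}}
    (hc : ℵ₀ ≤ c) (hF : #F ≤ c) (htY : t ∉ Y) (hY : Shelter I (H \ F) T Y q)
    (hYF : ∀ v ∈ endpoints I F, ∀ S : Set E, #S ≤ c → ∀ X q, v ∈ X → (X ∩ T).Subsingleton →
      Shelter I (H \ S) T X q → v ∈ Y) :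
    LinkedTo I (H \ F) t (T \ {t}) := by
  refine hY.linkedTo htY ?_
  obtain ⟨w, en, W, hen⟩ := hL
  obtain ⟨w', en', W', htrunc⟩ := W.exists_diff_truncation F
  have hsub : star I (H \ F) t ⊆ star I H t := star_mono Set.sdiff_subset
  have hhit : ∀ s, s ∈ star I (H \ F) t ∧ en' s ∉ T \ {t} ∪ Y →
      ∃ e ∈ w s, e ∈ F ∧ en' s ∈ I e := fun s ⟨hs, hsB⟩ ↦
    (htrunc s hs).resolve_left fun h ↦ hsB (.inl (h ▸ hen s (hsub hs)))
  refine W'.linkedTo_of_forall_not_shelter ht (by simp [htY]) hc ?_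
    fun s hs hsB Z hZ X hsX hXB q' hq ↦ ?_
  · choose k hkw hkF _ using hhit
    refine (mk_le_of_injective (f := fun s ↦ (⟨k s.1 s.2, hkF s.1 s.2⟩ : F)) ?_).trans hF
    intro s s' h
    have hk : k s.1 s.2 = k s'.1 s'.2 := congrArg Subtype.val h
    exact Subtype.ext (W.eq_of_mem s (hsub s.2.1) s' (hsub s'.2.1) _ (hkw s.1 s.2)
      (hk ▸ hkw s'.1 s'.2))
  · obtain ⟨e, -, heF, hse⟩ := hhit s ⟨hs, hsB⟩
    have hXT : ∀ x ∈ X ∩ T, x = t := fun x hx ↦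
      by_contra fun hxt ↦ Set.disjoint_left.1 hXB hx.1 (.inl ⟨hx.2, hxt⟩)
    refine hsB (.inr (hYF _ ⟨e, heF, hse⟩ (F ∪ Z) ?_ X q' hsX ?_ (Set.sdiff_sdiff ▸ hq)))
    · exact (mk_union_le _ _).trans (add_le_of_le hc hF hZ)
    · exact fun x hx y hy ↦ (hXT x hx).trans (hXT y hy).symm

end ShelterReplacement

section Assembly

variable {V : Type u} {E ι : Type v} {I : E → Sym2 V} {H : Set E} {T : Set V} {t₀ : V}
  [LinearOrder ι] [WellFoundedLT ι]

/-- Up to the choice of one set `X`, closed sets `F` preserve the existence of a shelter of `v` that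
contains at most one terminal. -/
theorem exists_holdsOnClosed_shelter_diff (v : V) :
    ∃ X : Set V, (X ∩ T).Subsingleton ∧ HoldsOnClosed (Set.Iio : ι → Set ι) fun a F ↦
      ∀ S : Set E, #S ≤ #(Set.Iio a) * ℵ₀ → ∀ X' q', v ∈ X' → (X' ∩ T).Subsingleton →
        Shelter I (H \ S) T X' q' → v ∈ X ∧ ∃ q, Shelter I (H \ F) T X q := by
  obtain ⟨W, hW⟩ := exists_holdsOnClosed_subset (ι := ι) fun S ↦
    ∃ X q, v ∈ X ∧ (X ∩ T).Subsingleton ∧ Shelter I (H \ S) T X q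
  by_cases h : ∃ X q, v ∈ X ∧ (X ∩ T).Subsingleton ∧ Shelter I (H \ W) T X q
  · obtain ⟨X, q, hvX, hXT, hX⟩ := h
    refine ⟨X, hXT, (hW.and hX.holdsOnClosed_diff).mono ?_⟩
    rintro a F - ⟨hWF, hXF⟩ S hS X' q' hv hX'T hX'
    exact ⟨hvX, q, hXF (hWF S hS ⟨X', q', hv, hX'T, hX'⟩).2⟩
  · refine ⟨∅, by simp, hW.mono fun a F _ hWF S hS X' q' hv hX'T hX' ↦ ?_⟩
    exact absurd (hWF S hS ⟨X', q', hv, hX'T, hX'⟩).1 h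

theorem Linkable.holdsOnClosed_diff (ht₀ : t₀ ∈ T) (hL : Linkable I T H) :
    HoldsOnClosed (Set.Iio : ι → Set ι) fun a F ↦ #F ≤ #(Set.Iio a) * ℵ₀ →
      Linkable I T (H \ F) := by
  choose X hXT hX using
    exists_holdsOnClosed_shelter_diff (ι := ι) (I := I) (H := H) (T := T)
  have hlink : HoldsOnClosed (Set.Iio : ι → Set ι) fun _ F ↦ ∀ v ∈ ∅ ∪ endpoints I F,
      ∀ t ∈ X v ∩ T ∪ endpoints I F, t ∈ T → LinkedTo I (H \ F) t (T \ {t}) :=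
    .forall_mem_endpoints Set.countable_empty fun v ↦ .forall_mem_endpoints (hXT v).countable
      fun t ↦ .imp fun ht ↦ (hL.2 t ht).holdsOnClosed_diff
  refine ((hL.1.holdsOnClosed_diff ht₀).and ((HoldsOnClosed.forall_mem_endpoints (I := I)
    Set.countable_empty hX).and hlink)).mono ?_
  rintro a F ha ⟨hIE, hshelter, hlink⟩ hF
  refine ⟨hIE hF, fun t ht ↦ ?_⟩
  by_cases hcov : ∃ v ∈ endpoints I F, t ∈ X v
  · obtain ⟨v, hv, htv⟩ := hcov
    exact hlink v (.inr hv) t (.inl ⟨htv, ht⟩) ht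
  obtain ⟨q, hq⟩ := Shelter.exists_sUnion (I := I) (H := H \ F) (T := T)
    (𝒳 := {Y | ∃ v ∈ endpoints I F, Y = X v ∧ ∃ q, Shelter I (H \ F) T (X v) q}) (by
      rintro _ ⟨v, -, rfl, hq⟩
      exact hq)
  refine linkedTo_diff_of_shelter (hL.2 t ht) ht (aleph0_le_mk_mul_aleph0 ha) hF ?_ hq ?_
  · rintro ⟨_, ⟨v, hv, rfl, -⟩, htv⟩
    exact hcov ⟨v, hv, htv⟩
  · intro v hv S hS X' q' hvX' hX'T hX'
    obtain ⟨hvX, hq⟩ := hshelter v (.inr hv) S hS X' q' hvX' hX'T hX'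
    exact ⟨X v, ⟨v, hv, rfl, hq⟩, hvX⟩

end Assembly

section Filtration

variable {E ι : Type v} {c : Cardinal.{v}}

theorem mk_finset_subset_le {B : Set E} (hc : ℵ₀ ≤ c) (hB : #B ≤ c) :
    #{A : Finset E | (A : Set E) ⊆ B} ≤ c := by
  classical
  have hsub : {A : Finset E | (A : Set E) ⊆ B} ⊆
      Set.range fun A : Finset B ↦ A.map (.subtype _) := fun A hA ↦
    ⟨A.subtype (· ∈ B), Finset.subtype_map_of_mem fun e he ↦ hA he⟩
  refine (mk_le_mk_of_subset hsub).trans (mk_range_le.trans ?_)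
  rcases finite_or_infinite B with h | h
  · exact (lt_aleph0_of_finite (Finset B)).le.trans hc
  · rwa [mk_finset_of_infinite]

theorem exists_closedUnder_superset (f : Finset E → Set E) {A : Set E} (hc : ℵ₀ ≤ c) (hA : #A ≤ c)
    (hf : ∀ B, #(f B) ≤ c) : ∃ C, A ⊆ C ∧ #C ≤ c ∧ ClosedUnder f C := by
  let step (B : Set E) : Set E := B ∪ ⋃ D ∈ {D : Finset E | (D : Set E) ⊆ B}, f D
  let C (n : ULift.{v} ℕ) : Set E := step^[n.down] A
  have hstep : ∀ n : ULift.{v} ℕ, C ⟨n.down + 1⟩ = step (C n) := fun n ↦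
    Function.iterate_succ_apply' step n.down A
  have hcard : ∀ n, #(step^[n] A) ≤ c := fun n ↦ by
    induction n with
    | zero => exact hA
    | succ n ih =>
      rw [Function.iterate_succ_apply']
      exact (mk_union_le _ _).trans (add_le_of_le hc ih
        (mk_biUnion_le_of_forall_mk_le hc (mk_finset_subset_le hc ih) fun D _ ↦ hf D))
  have hmono : Monotone C := fun m n h ↦
    Function.monotone_iterate_of_id_le (fun _ ↦ Set.subset_union_left) h A
  refine ⟨⋃ n ∈ Set.univ, C n, Set.subset_biUnion_of_mem (u := C) (Set.mem_univ (ULift.up 0)),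
    mk_biUnion_le_of_forall_mk_le hc (by simpa using hc) fun n _ ↦ hcard n.down, fun D hD ↦ ?_⟩
  obtain ⟨n, hn⟩ := hmono.directed_le.exists_mem_subset_of_finset_subset_biUnion
    (by simpa using hD)
  calc f D ⊆ step (C n) := Set.subset_union_of_subset_right (Set.subset_biUnion_of_mem hn) _
    _ = C ⟨n.down + 1⟩ := (hstep n).symm
    _ ⊆ _ := Set.subset_biUnion_of_mem (u := C) (Set.mem_univ _)

variable [LinearOrder ι]

theorem mk_biUnion_Iio_le {C : ι → Set E} {a : ι}
    (hC : ∀ b < a, #(C b) ≤ #(Set.Iic b) * ℵ₀) :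
    #(⋃ b ∈ Set.Iio a, C b : Set E) ≤ #(Set.Iio a) * ℵ₀ := by
  rcases (Set.Iio a).eq_empty_or_nonempty with h | h
  · simp [h]
  · refine mk_biUnion_le_of_forall_mk_le (aleph0_le_mk_mul_aleph0 h)
      (le_mul_right aleph0_ne_zero) fun b hb ↦ (hC b hb).trans ?_
    gcongr
    exact mk_le_mk_of_subset (Set.Iic_subset_Iio.2 hb)

theorem closedUnder_biUnion_Iio {f : Finset E → Set E} {C : ι → Set E} (hC : Monotone C) {i a : ι}
    (hia : i < a) (hf : ∀ b, i ≤ b → ClosedUnder f (C b)) :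
    ClosedUnder f (⋃ b ∈ Set.Iio a, C b) := by
  intro A hA
  have hdir : DirectedOn (fun b b' ↦ C b ⊆ C b') (Set.Iio a) := fun b hb b' hb' ↦
    ⟨max b b', max_lt hb hb', hC (le_max_left _ _), hC (le_max_right _ _)⟩
  obtain ⟨b, hb, hAb⟩ := hdir.exists_mem_subset_of_finset_subset_biUnion ⟨i, hia⟩ hA
  calc f A ⊆ C (max i b) := hf _ (le_max_left i b) A (hAb.trans (hC (le_max_right i b)))
    _ ⊆ _ := Set.subset_biUnion_of_mem (u := C) (Set.mem_Iio.2 (max_lt hia hb))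

variable [WellFoundedLT ι]

theorem exists_closed_filtration (ε : ι → E)
    {f : ι → Finset E → Set E} (hf : ∀ i A, (f i A).Countable)
    {g : Set E → Finset E → Set E} (hg : ∀ F A, (g F A).Countable) :
    ∃ C : ι → Set E, ∀ b, ε b ∈ C b ∧ #(C b) ≤ #(Set.Iic b) * ℵ₀ ∧ (⋃ a ∈ Set.Iio b, C a) ⊆ C b ∧
      (∀ i ≤ b, ClosedUnder (f i) (C b)) ∧ ClosedUnder (g (⋃ a ∈ Set.Iio b, C a)) (C b) := by
  have hstep : ∀ (b : ι) (F : Set E), ∃ C : Set E, #F ≤ #(Set.Iio b) * ℵ₀ →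
      ε b ∈ C ∧ #C ≤ #(Set.Iic b) * ℵ₀ ∧ F ⊆ C ∧ (∀ i ≤ b, ClosedUnder (f i) C) ∧
        ClosedUnder (g F) C := by
    intro b F
    by_cases hF : #F ≤ #(Set.Iio b) * ℵ₀
    · have hc : ℵ₀ ≤ #(Set.Iic b) * ℵ₀ := aleph0_le_mk_mul_aleph0 ⟨b, le_rfl⟩
      have hFb : #(insert (ε b) F : Set E) ≤ #(Set.Iic b) * ℵ₀ := by
        refine mk_insert_le.trans (add_le_of_le hc (hF.trans ?_) (one_le_aleph0.trans hc))
        gcongr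
        exact mk_le_mk_of_subset Set.Iio_subset_Iic_self
      obtain ⟨C, hFC, hCcard, hC⟩ := exists_closedUnder_superset
        (fun A ↦ g F A ∪ ⋃ i ∈ Set.Iic b, f i A) hc hFb fun A ↦ (mk_union_le _ _).trans
          (add_le_of_le hc ((hg F A).le_aleph0.trans hc) (mk_biUnion_le_of_forall_mk_le hc
            (le_mul_right aleph0_ne_zero) fun i _ ↦ (hf i A).le_aleph0.trans hc))
      refine ⟨C, fun _ ↦ ⟨hFC (.inl rfl), hCcard, (Set.subset_insert _ _).trans hFC,
        fun i hi A hA ↦ ?_, fun A hA ↦ Set.subset_union_left.trans (hC A hA)⟩⟩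
      have hfi : f i A ⊆ ⋃ i ∈ Set.Iic b, f i A := Set.subset_biUnion_of_mem (u := (f · A)) hi
      exact (Set.subset_union_of_subset_right hfi _).trans (hC A hA)
    · exact ⟨∅, fun h ↦ absurd h hF⟩
  choose step hstep using hstep
  let C : ι → Set E := WellFoundedLT.fix fun b C ↦ step b (⋃ (a) (h : a ∈ Set.Iio b), C a h)
  have hC : ∀ b, C b = step b (⋃ a ∈ Set.Iio b, C a) := WellFoundedLT.fix_eq _
  refine ⟨C, fun b ↦ ?_⟩
  induction b using WellFoundedLT.induction with
  | ind b ih =>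
    have := hstep b _ (mk_biUnion_Iio_le fun a ha ↦ (ih a ha).2.1)
    rwa [← hC b] at this

end Filtration

section Uncountable

variable {V : Type u} {E ι : Type v} {I : E → Sym2 V} {H : Set E} {T : Set V} {t₀ : V}
  [LinearOrder ι] [WellFoundedLT ι]

theorem Linkable.exists_filtration (ht₀ : t₀ ∈ T) (hL : Linkable I T H) (ε : ι → E) :
    ∃ C : ι → Set E, ∀ b, ε b ∈ C b ∧ #(C b) ≤ #(Set.Iic b) * ℵ₀ ∧
      Linkable I T ((H \ ⋃ a ∈ Set.Iio b, C a) ∩ C b) := by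
  obtain ⟨f, hf, hdiff⟩ := hL.holdsOnClosed_diff (ι := ι) ht₀
  have hinter (F : Set E) : HoldsOnClosed (fun _ : Unit ↦ {()}) fun _ C ↦
      Linkable I T (H \ F) → Linkable I T ((H \ F) ∩ C) :=
    .imp fun h ↦ h.holdsOnClosed_inter ht₀
  choose g hg hinter using hinter
  obtain ⟨C, hC⟩ := exists_closed_filtration ε hf fun F A ↦ hg F () A
  choose hε hcard hsub hfC hgC using hC
  have hmono : Monotone C := monotone_iff_forall_lt.2 fun a b hab ↦
    (Set.subset_biUnion_of_mem (u := C) (Set.mem_Iio.2 hab)).trans (hsub b)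
  have hcompl : ∀ b, Linkable I T (H \ ⋃ a ∈ Set.Iio b, C a) := fun b ↦ by
    rcases (Set.Iio b).eq_empty_or_nonempty with h | h
    · simpa [h] using hL
    · exact hdiff b _ h (fun i hi ↦ closedUnder_biUnion_Iio hmono hi fun b hib ↦ hfC b i hib)
        (mk_biUnion_Iio_le fun a _ ↦ hcard a)
  exact ⟨C, fun b ↦ ⟨hε b, hcard b, hinter _ () _ ⟨(), rfl⟩ (fun _ _ ↦ hgC b) (hcompl b)⟩⟩

theorem Linkable.hasPerfectLinkage (ht₀ : t₀ ∈ T) (hL : Linkable I T H) :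
    HasPerfectLinkage I T H := by
  induction hc : #H using WellFoundedLT.induction generalizing H with
  | ind c ih =>
  rcases le_or_gt #H ℵ₀ with hcount | hH
  · exact hL.hasPerfectLinkage_of_countable (le_aleph0_iff_set_countable.1 hcount)
  obtain ⟨_, _, hord⟩ := exists_ord_eq_type_lt H
  obtain ⟨C, hC⟩ := hL.exists_filtration ht₀ (Subtype.val : H → E)
  choose hε hcard hlink using hC
  have hunion : H = ⋃ b, (H \ ⋃ a ∈ Set.Iio b, C a) ∩ C b := by
    refine Set.Subset.antisymm (fun e he ↦ ?_) (Set.iUnion_subset fun b e h ↦ h.1.1)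
    obtain ⟨b, hb, hmin⟩ := WellFounded.has_min (wellFounded_lt (α := H)) {b | e ∈ C b}
      ⟨⟨e, he⟩, hε ⟨e, he⟩⟩
    refine Set.mem_iUnion.2 ⟨b, ⟨he, fun hmem ↦ ?_⟩, hb⟩
    obtain ⟨a, ha, hea⟩ := Set.mem_iUnion₂.1 hmem
    exact hmin a hea ha
  rw [hunion]
  refine HasPerfectLinkage.iUnion (fun b ↦ ih _ ?_ (hlink b) rfl) fun a b e ha hb ↦ ?_
  · rw [← hc]
    exact (mk_le_mk_of_subset Set.inter_subset_right).trans_lt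
      ((hcard b).trans_lt (mul_lt_of_lt hH.le (mk_Iic_lt b hord hH.le) hH))
  · have hlt : ∀ i j, i < j → e ∈ C i → e ∈ (H \ ⋃ a ∈ Set.Iio j, C a) → False :=
      fun i j hij hi hj ↦ hj.2 (Set.mem_biUnion hij hi)
    exact le_antisymm (not_lt.1 fun h ↦ hlt _ _ h hb.2 ha.1) (not_lt.1 fun h ↦ hlt _ _ h ha.2 hb.1)

end Uncountable

section TPaths

variable {V : Type u} {E : Type v}

section TerminalTrail

variable {I : E → Sym2 V} {T : Set V} {l : List E} {a b t : V}

theorem head?_eq_or_getLast?_eq_of_mem_terminal (hw : EdgeWalk I a l b)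
    (hin : ∀ m₁ m₂ d, l = m₁ ++ m₂ → m₁ ≠ [] → m₂ ≠ [] → EdgeWalk I a m₁ d → d ∉ T)
    (ht : t ∈ T) {e : E} (he : e ∈ l) (hte : t ∈ I e) :
    t = a ∧ l.head? = some e ∨ t = b ∧ l.getLast? = some e := by
  obtain ⟨m₁, m₂, rfl⟩ := List.append_of_mem he
  obtain ⟨x, h₁, h₂⟩ := edgeWalk_append.1 hw
  obtain ⟨y, hxy, h₃⟩ := edgeWalk_cons.1 h₂
  rw [hxy, Sym2.mem_iff] at hte
  rcases hte with rfl | rfl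
  · rcases eq_or_ne m₁ [] with rfl | hm
    · exact .inl ⟨(edgeWalk_nil.1 h₁).symm, rfl⟩
    · exact absurd ht (hin m₁ (e :: m₂) t rfl hm (List.cons_ne_nil _ _) h₁)
  · rcases eq_or_ne m₂ [] with rfl | hm
    · exact .inr ⟨edgeWalk_nil.1 h₃, by simp⟩
    · exact absurd ht (hin (m₁ ++ [e]) m₂ t (by simp) (by simp) hm (h₁.append (.single hxy)))

theorem IsTerminalTrail.eq_of_mem_terminal (hl : IsTerminalTrail I T l) (ht : t ∈ T) {e f : E}
    (he : e ∈ l) (hf : f ∈ l) (hte : t ∈ I e) (htf : t ∈ I f) : e = f := by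
  obtain ⟨a, -, b, -, hab, hw, -, hin⟩ := hl
  rcases head?_eq_or_getLast?_eq_of_mem_terminal hw hin ht he hte with ⟨hta, h⟩ | ⟨htb, h⟩ <;>
  rcases head?_eq_or_getLast?_eq_of_mem_terminal hw hin ht hf htf with ⟨hta', h'⟩ | ⟨htb', h'⟩
  · exact Option.some.inj (h.symm.trans h')
  · exact absurd (hta.symm.trans htb') hab
  · exact absurd (hta'.symm.trans htb) hab
  · exact Option.some.inj (h.symm.trans h')

theorem IsTerminalTrail.exists_edgeWalk_from (hl : IsTerminalTrail I T l) (ht : t ∈ T) {s : E}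
    (hs : s ∈ l) (hts : t ∈ I s) :
    ∃ (l' : List E) (c : V), l'.Perm l ∧ EdgeWalk I t l' c ∧ l'.head? = some s ∧ c ∈ T \ {t} := by
  obtain ⟨a, ha, b, hb, hab, hw, -, hin⟩ := hl
  rcases head?_eq_or_getLast?_eq_of_mem_terminal hw hin ht hs hts with ⟨rfl, h⟩ | ⟨rfl, h⟩
  · exact ⟨l, b, .refl l, hw, h, hb, hab.symm⟩
  · exact ⟨l.reverse, a, l.reverse_perm, hw.reverse, by rwa [List.head?_reverse], ha, hab⟩

theorem EdgeWalk.exists_mem_start (h : EdgeWalk I a l b) (hab : a ≠ b) : ∃ e ∈ l, a ∈ I e := by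
  cases h with
  | nil => exact absurd rfl hab
  | cons he _ => exact ⟨_, List.mem_cons_self, he ▸ Sym2.mem_mk_left _ _⟩

end TerminalTrail

variable {G : Grapht V E}

section IsWalk

variable {vs : List V} {es : List E}

theorem edgeWalk_of_isWalk (h : G.IsWalk vs es) {a b : V} (ha : vs.head? = some a)
    (hb : vs.getLast? = some b) : EdgeWalk G.I a es b := by
  induction h generalizing a with
  | nil v => exact edgeWalk_nil.2 (Option.some.inj (ha.symm.trans hb))
  | cons he _ ih =>
    obtain rfl := Option.some.inj ha
    exact .cons he (ih rfl (by rwa [List.getLast?_cons_cons] at hb))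

theorem mem_verts_of_isWalk (h : G.IsWalk vs es) {e : E} (he : e ∈ es) {x : V} (hx : x ∈ G.I e) :
    x ∈ vs := by
  induction h with
  | nil v => exact absurd he List.not_mem_nil
  | cons hI _ ih =>
    rcases List.mem_cons.1 he with rfl | he
    · rw [hI, Sym2.mem_iff] at hx
      rcases hx with rfl | rfl <;> simp
    · exact List.mem_cons_of_mem _ (ih he)

theorem nodup_edges_of_isWalk (h : G.IsWalk vs es) (hvs : vs.Nodup) : es.Nodup := by
  induction h with
  | nil v => exact List.nodup_nil
  | cons hI h ih =>
    rw [List.nodup_cons] at hvs ⊢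
    exact ⟨fun he ↦ hvs.1 (mem_verts_of_isWalk h he (hI ▸ Sym2.mem_mk_left _ _)), ih hvs.2⟩

theorem length_verts_of_isWalk (h : G.IsWalk vs es) : vs.length = es.length + 1 := by
  induction h with
  | nil v => rfl
  | cons _ _ ih => rw [List.length_cons, ih, List.length_cons]

theorem exists_verts_eq_append_cons {m₁ m₂ : List E} {a d : V} (h : G.IsWalk vs (m₁ ++ m₂))
    (ha : vs.head? = some a) (hd : EdgeWalk G.I a m₁ d) :
    ∃ us ws, vs = us ++ d :: ws ∧ us.length = m₁.length ∧ ws.length = m₂.length := by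
  induction hd generalizing vs with
  | nil a =>
    obtain ⟨ws, rfl⟩ := List.head?_eq_some_iff.1 ha
    exact ⟨[], ws, rfl, rfl, by simpa using length_verts_of_isWalk h⟩
  | cons he _ ih =>
    cases h with
    | cons hI h =>
      obtain rfl := Option.some.inj ha
      obtain rfl := Sym2.congr_right.1 (hI.symm.trans he)
      obtain ⟨us, ws, hvs, hus, hws⟩ := ih h rfl
      exact ⟨_ :: us, ws, by rw [hvs, List.cons_append], by simp [hus], hws⟩

theorem exists_isWalk_suffix (h : G.IsWalk vs es) {a : V} (ha : a ∈ vs) :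
    ∃ vs' es', G.IsWalk vs' es' ∧ vs'.head? = some a ∧ vs' <:+ vs ∧ es' <:+ es := by
  induction h with
  | nil v =>
    obtain rfl := List.mem_singleton.1 ha
    exact ⟨_, _, .nil _, rfl, List.suffix_rfl, List.suffix_rfl⟩
  | cons hI h ih =>
    rcases List.mem_cons.1 ha with rfl | ha
    · exact ⟨_, _, .cons hI h, rfl, List.suffix_rfl, List.suffix_rfl⟩
    · obtain ⟨vs', es', h', ha', hvs, hes⟩ := ih ha
      exact ⟨vs', es', h', ha', hvs.trans (List.suffix_cons _ _), hes.trans (List.suffix_cons _ _)⟩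

end IsWalk

section Path

variable {P : G.Path}

theorem mem_inner_of_eq_append_cons {us ws : List V} {d : V} (h : P.verts = us ++ d :: ws)
    (hus : us ≠ []) (hws : ws ≠ []) : d ∈ P.inner := by
  obtain ⟨u, us, rfl⟩ := List.exists_cons_of_ne_nil hus
  simp [Grapht.Path.inner, h, List.dropLast_append_of_ne_nil, List.dropLast_cons_of_ne_nil hws]

theorem mem_verts_of_mem_inner {v : V} (hv : v ∈ P.inner) : v ∈ P.verts :=
  List.mem_of_mem_drop (List.mem_of_mem_dropLast hv)

theorem ne_first_of_mem_inner {v : V} (hv : v ∈ P.inner) : v ≠ P.first := by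
  rintro rfl
  obtain ⟨vs, hvs⟩ := List.head?_eq_some_iff.1 P.head_eq
  have hnd := P.nodup
  rw [hvs] at hnd
  rw [Grapht.Path.inner, hvs] at hv
  exact (List.nodup_cons.1 hnd).1 (List.mem_of_mem_dropLast hv)

theorem ne_last_of_mem_inner {v : V} (hv : v ∈ P.inner) : v ≠ P.last := by
  rintro rfl
  obtain ⟨vs, hvs⟩ := List.getLast?_eq_some_iff.1 P.getLast_eq
  have hnd := P.nodup
  rw [hvs] at hnd
  rw [Grapht.Path.inner, List.dropLast_drop_eq_drop_dropLast, hvs, List.dropLast_concat] at hv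
  exact List.disjoint_of_nodup_append hnd (List.mem_of_mem_drop hv) (List.mem_singleton_self _)

theorem isTerminalTrail_of_isTPath (hP : G.IsTPath P) : IsTerminalTrail G.I G.T P.edges := by
  obtain ⟨ha, hb, hab, hin⟩ := hP
  refine ⟨P.first, ha, P.last, hb, hab, edgeWalk_of_isWalk P.isWalk P.head_eq P.getLast_eq,
    nodup_edges_of_isWalk P.isWalk P.nodup, fun m₁ m₂ d hm h₁ h₂ hd ↦ hin d ?_⟩
  obtain ⟨us, ws, hvs, hus, hws⟩ := exists_verts_eq_append_cons (hm ▸ P.isWalk) P.head_eq hd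
  exact mem_inner_of_eq_append_cons hvs
    (by rwa [← List.length_pos_iff, hus, List.length_pos_iff])
    (by rwa [← List.length_pos_iff, hws, List.length_pos_iff])

theorem exists_path_cons {a : V} {e : E} (he : G.I e = s(a, P.first)) (ha : a ∉ P.verts) :
    ∃ Q : G.Path, Q.first = a ∧ Q.last = P.last ∧ Q.verts = a :: P.verts ∧
      Q.edges = e :: P.edges := by
  obtain ⟨vs, hvs⟩ := List.head?_eq_some_iff.1 P.head_eq
  have hw := P.isWalk
  have hlast := P.getLast_eq
  rw [hvs] at hw hlast
  exact ⟨⟨a, P.last, a :: P.verts, e :: P.edges, hvs ▸ .cons he hw,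
    List.nodup_cons.2 ⟨ha, P.nodup⟩, rfl, by rw [hvs, List.getLast?_cons_cons, hlast]⟩,
    rfl, rfl, rfl, rfl⟩

theorem exists_path_suffix {a : V} (ha : a ∈ P.verts) :
    ∃ Q : G.Path, Q.first = a ∧ Q.last = P.last ∧ Q.verts <:+ P.verts ∧ Q.edges <:+ P.edges := by
  obtain ⟨vs, es, hw, hhead, hvs, hes⟩ := exists_isWalk_suffix P.isWalk ha
  have hne : vs ≠ [] := by
    rintro rfl
    simp at hhead
  exact ⟨⟨a, P.last, vs, es, hw, P.nodup.sublist hvs.sublist, hhead,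
    by rw [← P.getLast_eq, List.getLast?_eq_some_getLast hne, hvs.getLast hne,
      List.getLast?_eq_some_getLast]⟩, rfl, rfl, hvs, hes⟩

theorem EdgeWalk.exists_path {a b : V} {l : List E} (h : EdgeWalk G.I a l b) :
    ∃ P : G.Path, P.first = a ∧ P.last = b ∧ P.edges ⊆ l ∧
      ∀ v ∈ P.verts, ∃ m₁ m₂, l = m₁ ++ m₂ ∧ EdgeWalk G.I a m₁ v := by
  induction h with
  | nil a =>
    refine ⟨⟨a, a, [a], [], .nil _, List.nodup_singleton a, rfl, rfl⟩, rfl, rfl, List.Subset.refl _,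
      fun v hv ↦ ⟨[], [], rfl, ?_⟩⟩
    exact edgeWalk_nil.2 (List.mem_singleton.1 hv).symm
  | @cons a c b e l he hl ih =>
    obtain ⟨P, rfl, hlast, hsub, hvisit⟩ := ih
    have hvisit' : ∀ v ∈ P.verts, ∃ m₁ m₂, e :: l = m₁ ++ m₂ ∧ EdgeWalk G.I a m₁ v := by
      intro v hv
      obtain ⟨m₁, m₂, rfl, hm⟩ := hvisit v hv
      exact ⟨e :: m₁, m₂, rfl, .cons he hm⟩
    by_cases ha : a ∈ P.verts
    · obtain ⟨Q, hQa, hQ, hvs, hes⟩ := exists_path_suffix ha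
      exact ⟨Q, hQa, hQ.trans hlast,
        fun f hf ↦ List.mem_cons_of_mem _ (hsub (hes.subset hf)),
        fun v hv ↦ hvisit' v (hvs.subset hv)⟩
    · obtain ⟨Q, hQa, hQ, hvs, hes⟩ := exists_path_cons he ha
      refine ⟨Q, hQa, hQ.trans hlast, hes ▸ List.cons_subset_cons e hsub, ?_⟩
      rw [hvs, List.forall_mem_cons]
      exact ⟨⟨[], _, rfl, .nil a⟩, hvisit'⟩

end Path

theorem IsTerminalTrail.exists_isTPath {l : List E} (hl : IsTerminalTrail G.I G.T l) :
    ∃ P : G.Path, G.IsTPath P ∧ P.edges ⊆ l ∧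
      ∀ t ∈ G.T, ∀ e ∈ l, t ∈ G.I e → e ∈ P.edges := by
  have ⟨a, ha, b, hb, hab, hw, _, hin⟩ := hl
  obtain ⟨P, rfl, rfl, hsub, hvisit⟩ := hw.exists_path
  refine ⟨P, ⟨ha, hb, hab, fun v hv hvT ↦ ?_⟩, hsub, fun t ht e he hte ↦ ?_⟩
  · obtain ⟨m₁, m₂, rfl, hm⟩ := hvisit v (mem_verts_of_mem_inner hv)
    refine hin m₁ m₂ v rfl ?_ ?_ hm hvT
    · rintro rfl
      exact ne_first_of_mem_inner hv (edgeWalk_nil.1 hm).symm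
    · rintro rfl
      rw [List.append_nil] at hw
      exact ne_last_of_mem_inner hv (hm.unique hw)
  · have hwP := edgeWalk_of_isWalk P.isWalk P.head_eq P.getLast_eq
    have hend : ∃ f ∈ P.edges, t ∈ G.I f := by
      rcases head?_eq_or_getLast?_eq_of_mem_terminal hw hin ht he hte with ⟨rfl, -⟩ | ⟨rfl, -⟩
      · exact hwP.exists_mem_start hab
      · simpa using hwP.reverse.exists_mem_start hab.symm
    obtain ⟨f, hf, htf⟩ := hend
    rwa [hl.eq_of_mem_terminal ht he (hsub hf) hte htf]

theorem mem_incidence_of_mem_star {I : E → Sym2 V} {H : Set E} {t : V} {s : E}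
    (hs : s ∈ star I H t) : t ∈ I s := by
  obtain ⟨-, y, -, hI⟩ := mem_star.1 hs
  exact hI ▸ Sym2.mem_mk_left _ _

theorem linkedTo_of_linked {t : V} (ht : t ∈ G.T) (h : G.Linked t) :
    LinkedTo G.I Set.univ t (G.T \ {t}) := by
  obtain ⟨Ps, ⟨hdisj, hT⟩, hcover⟩ := h
  have hpath : ∀ s ∈ star G.I Set.univ t, ∃ (w : List E) (c : V), EdgeWalk G.I t w c ∧
      w.head? = some s ∧ c ∈ G.T \ {t} ∧ ∃ P ∈ Ps, w.Perm P.edges := by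
    intro s hs
    obtain ⟨P, hP, hsP⟩ := hcover s hs.1
    obtain ⟨w, c, hperm, hw, hhead, hc⟩ := (isTerminalTrail_of_isTPath
      (hT P hP)).exists_edgeWalk_from ht hsP (mem_incidence_of_mem_star hs)
    exact ⟨w, c, hw, hhead, hc, P, hP, hperm⟩
  have : Nonempty V := ⟨t⟩
  choose! w en hw using hpath
  refine ⟨w, en, ⟨⟨fun s hs ↦ ?_, fun _ _ _ _ ↦ trivial, fun s hs s' hs' e he he' ↦ ?_⟩,
    fun s hs ↦ (hw s hs).1, fun s hs ↦ ?_⟩, fun s hs ↦ (hw s hs).2.2.1⟩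
  · obtain ⟨-, -, -, P, -, hperm⟩ := hw s hs
    exact hperm.nodup_iff.2 (nodup_edges_of_isWalk P.isWalk P.nodup)
  · obtain ⟨-, hhead, -, P, hP, hperm⟩ := hw s hs
    obtain ⟨-, hhead', -, P', hP', hperm'⟩ := hw s' hs'
    obtain rfl : P = P' := by
      by_contra hne
      exact hdisj hP hP' hne e (hperm.mem_iff.1 he) (hperm'.mem_iff.1 he')
    exact (isTerminalTrail_of_isTPath (hT P hP)).eq_of_mem_terminal ht
      (hperm.mem_iff.1 (List.mem_of_head? hhead)) (hperm'.mem_iff.1 (List.mem_of_head? hhead'))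
      (mem_incidence_of_mem_star hs) (mem_incidence_of_mem_star hs')
  · obtain ⟨l, hl⟩ := List.head?_eq_some_iff.1 (hw s hs).2.1
    exact ⟨l, hl.symm⟩

theorem HasPerfectLinkage.exists_isPerfectLinkage (h : HasPerfectLinkage G.I G.T Set.univ) :
    ∃ Ps : Set G.Path, G.IsPerfectLinkage Ps := by
  obtain ⟨L, hL, hdisj, hcover⟩ := h
  have : Nonempty G.Path := by
    obtain ⟨t, -⟩ := G.T_nontrivial.nonempty
    exact ⟨⟨t, t, [t], [], .nil t, List.nodup_singleton t, rfl, rfl⟩⟩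
  choose! p hp hsub hends using fun l (hl : l ∈ L) ↦ (hL l hl).1.exists_isTPath
  refine ⟨p '' L, ⟨?_, ?_⟩, fun t ht e he ↦ ?_⟩
  · rintro _ ⟨l, hl, rfl⟩ _ ⟨l', hl', rfl⟩ hne e he he'
    exact hne (congrArg p (hdisj l hl l' hl' e (hsub l hl he) (hsub l' hl' he')))
  · rintro _ ⟨l, hl, rfl⟩
    exact hp l hl
  · have hes : e ∈ star G.I Set.univ t := ⟨he, trivial⟩
    obtain ⟨l, hl, hel⟩ := hcover t ht e hes
    exact ⟨p l, Set.mem_image_of_mem p hl, hends l hl t ht e hel (mem_incidence_of_mem_star hes)⟩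

end TPaths

end Linkage

/-- **Linkage theorem.** Every inner Eulerian grapht satisfying the linkability
condition admits a perfect linkage. -/
theorem linkage_theorem {V : Type u} {E : Type v} (G : Grapht V E)
    (h1 : G.InnerEulerian) (h2 : G.LinkabilityCondition) :
    ∃ Ps : Set G.Path, G.IsPerfectLinkage Ps := by
  obtain ⟨t₀, ht₀⟩ := G.T_nontrivial.nonempty
  have heulerian : Linkage.InnerEulerianOn G.I G.T Set.univ := fun X hX ↦ by
    rw [Set.inter_univ]
    exact h1 X hX
  have hlinkable : Linkage.Linkable G.I G.T Set.univ :=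
    ⟨heulerian, fun t ht ↦ Linkage.linkedTo_of_linked ht (h2 t ht)⟩
  exact (hlinkable.hasPerfectLinkage ht₀).exists_isPerfectLinkage
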